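/- arXiv:2605.31356 — 2 statements merged into one kernel-verified Lean document; each statement's English description precedes it below -/
import Mathlib

section
/- (Pólya–Schur theorem.) Let T : ℝ[X] → ℝ[X] be a nonzero linear map commuting with the operator X·d/dX; equivalently, T X^k = τ_k·X^k for a real sequence (τ_k)_{k≥0}. Then: (a) T maps every p ∈ ℝ[X] all of whose complex roots are real to either the zero polynomial or a polynomial all of whose complex roots are real, if and only if the power series Φ_T(z) = Σ_{k≥0} τ_k·z^k/k! has infinite radius of convergence and either Φ_T or z ↦ Φ_T(−z) is of LPI form. (b) T maps every p ∈ ℝ[X] all of whose complex roots lie in [0,∞) to either the zero polynomial or a polynomial all of whose complex roots are real, if and only if Φ_T has infinite radius of convergence and is of LP form. -/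
/-!
The operator `T` is the diagonal operator with symbol `Φ(z) = ∑ τ k z ^ k / k!`, and for a
polynomial `p` and a point `x` the value `(T p)(x)` is `Φ(x D) p` evaluated at the origin, where
`D = d/dy`.

**Sufficiency.** If all zeros of `p` lie in a half-plane `{y | 0 < Im (u y)}`, then so do those of
`p - β p'` as soon as `0 ≤ Im (u β)`, because `p'/p` points into a definite half-plane off the zeros;
the same holds for `p'` (Gauss-Lucas). Hence if `Φ` is `z ^ m` times a product of factors `1 - β z`
with `0 ≤ Im (u x β)`, then `Φ(x D) p` either vanishes identically or has no zero at the origin,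
which lies outside the half-plane. Writing exponentials as limits of `(1 + w / n) ^ n`, the functions
of LP and LPI form are limits of such products (`sufficiency_core`). For `p` with nonnegative
zeros and `x` in the upper half-plane one takes `u = -1/x`, which allows every real `β`; for `p` with
arbitrary real zeros one takes `u = 1`, which allows `β ≥ 0`. So `T p` has no zero in the upper
half-plane, and none in the lower one by conjugation. The passage to the limit uses that the modulus
of a polynomial without zeros in the upper half-plane increases along upward vertical rays.

**Necessity.** Applying `T` to `(1 + X) ^ n` or `(1 - X) ^ n` shows that the Jensen polynomials
`∑ (n choose k) τ k X ^ k` are real-rooted. Substituting `X / n` and dividing by the lowest term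
gives products `∏ (1 - a n j X)` with real `a n j`, whose coefficients converge to the normalised
Taylor coefficients of `Φ`. By Newton's identities `∑ a n j` and `∑ a n j ^ 2` converge; sorting the
`a n j` by absolute value gives `|a n j| ≤ D / √(j + 1)`, so by Tychonoff's theorem `a n j → α j` for
all `j` along a subsequence. The canonical products of genus two are dominated by
`∑ (j + 1) ^ (-3/2)` and converge, so `Φ` is entire (`hasSum_canonical`). The mass
`lim ∑ a n j ^ 2 - ∑ α j ^ 2 ≥ 0` lost in the limit is `σ ^ 2`, which gives the LP form. In part (a)
the real-rootedness of `T (X ^ i (1 - X ^ 2) ^ n)` for `i = 0, 1` forces the signs of `τ` to be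
constant or alternating (`sign_pattern`). If they alternate, the `a n j` are nonnegative, hence
`a n j ≤ B / (j + 1)`, no mass of the squares is lost, and `Φ` is of LPI form
(`lp_of_realRooted_jensen`); the constant case reduces to this one by `z ↦ -z`.
-/

open Complex Filter Topology Polynomial

/-- An entire function is of Laguerre–Pólya (LP) form:
`f(z) = C·z^m·exp(−c·z − σ²·z²/2)·∏_j (1−α_j·z)·exp(α_j·z)` with real data,
`C ≠ 0`, `∑_j α_j² < ∞`, the product converging locally uniformly. -/
def IsLPForm (f : ℂ → ℂ) : Prop :=
  ∃ (C : ℝ) (m : ℕ) (c σ : ℝ) (α : ℕ → ℝ),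
    C ≠ 0 ∧ (Summable fun j => α j ^ 2) ∧
    TendstoLocallyUniformly
      (fun (N : ℕ) (z : ℂ) => (C : ℂ) * z ^ m *
          Complex.exp (-(c : ℂ) * z - (σ : ℂ) ^ 2 / 2 * z ^ 2) *
          ∏ j ∈ Finset.range N, ((1 - (α j : ℂ) * z) * Complex.exp ((α j : ℂ) * z)))
      f atTop

/-- An entire function is of Laguerre–Pólya type I (LPI) form:
`f(z) = C·z^m·exp(−b·z)·∏_j (1−α_j·z)` with `C ≠ 0`, `b ≥ 0`, `α_j ≥ 0`, `∑_j α_j < ∞`,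
the product converging locally uniformly. -/
def IsLPIForm (f : ℂ → ℂ) : Prop :=
  ∃ (C : ℝ) (m : ℕ) (b : ℝ) (α : ℕ → ℝ),
    C ≠ 0 ∧ 0 ≤ b ∧ (∀ j, 0 ≤ α j) ∧ Summable α ∧
    TendstoLocallyUniformly
      (fun (N : ℕ) (z : ℂ) => (C : ℂ) * z ^ m * Complex.exp (-(b : ℂ) * z) *
          ∏ j ∈ Finset.range N, (1 - (α j : ℂ) * z))
      f atTop

/-! ### Half-plane stability and differential operators -/

/-- A complex polynomial all of whose zeros lie in the open half-plane `{y | 0 < Im (u y)}`.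
Such a polynomial is automatically nonzero, since `0` is not in the half-plane. -/
def HalfPlaneRoots (u : ℂ) (p : ℂ[X]) : Prop := ∀ y : ℂ, p.eval y = 0 → 0 < (u * y).im

/-- A polynomial that vanishes identically or has no zero in the open upper half-plane. -/
def StableOrZero (q : ℂ[X]) : Prop := q = 0 ∨ ∀ z : ℂ, 0 < z.im → q.eval z ≠ 0

lemma multiset_sum_pos {m : Multiset ℝ} (h : ∀ a ∈ m, 0 < a) (hm : m ≠ 0) : 0 < m.sum := by
  obtain ⟨a, ha⟩ := Multiset.exists_mem_of_ne_zero hm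
  exact (h a ha).trans_le (Multiset.single_le_sum (fun b hb => (h b hb).le) a ha)

lemma inv_im_pos {z : ℂ} (h : z.im < 0) : 0 < (z⁻¹).im := by
  rw [Complex.inv_im]
  have : z ≠ 0 := by rintro rfl; simp at h
  have := Complex.normSq_pos.2 this
  apply div_pos <;> linarith

/-- Off the half-plane containing the zeros, the logarithmic derivative
`p'/p = ∑ 1/(y - r)` points into a definite half-plane, unless `p` is constant. -/
lemma logDeriv_im_pos {u : ℂ} {p : ℂ[X]} (hp : HalfPlaneRoots u p) {y : ℂ}
    (hy : (u * y).im ≤ 0) :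
    derivative p = 0 ∨ 0 < (u⁻¹ * (p.derivative.eval y / p.eval y)).im := by
  have h0 : p.eval y ≠ 0 := fun h => absurd (hp y h) (not_lt.2 hy)
  have hp0 : p ≠ 0 := by rintro rfl; simp at h0
  rw [(IsAlgClosed.splits p).eval_derivative_div_eval_of_ne_zero h0]
  by_cases hc : p.roots = 0
  · left
    have h1 := (IsAlgClosed.splits p).eq_prod_roots
    rw [hc] at h1
    rw [h1]; simp
  right
  rw [← Multiset.sum_map_mul_left]
  have him : ∀ m : Multiset ℂ, m.sum.im = (m.map Complex.im).sum := by
    intro m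
    exact map_multiset_sum Complex.imAddGroupHom m
  rw [him, Multiset.map_map]
  refine multiset_sum_pos ?_ ?_
  · intro a ha
    obtain ⟨r, hr, rfl⟩ := Multiset.mem_map.1 ha
    have h2 := hp r ((Polynomial.mem_roots hp0).1 hr)
    have : u⁻¹ * (1 / (y - r)) = (u * (y - r))⁻¹ := by rw [mul_inv, one_div]
    simp only [Function.comp_apply, this]
    apply inv_im_pos
    rw [mul_sub, Complex.sub_im]; linarith
  · simpa using hc

/-- A half-plane version of the Hermite-Poulain theorem: `1 - β D` keeps all zeros in the half-plane. -/
lemma HalfPlaneRoots.sub_smul_derivative {u : ℂ} (hu : u ≠ 0) {p : ℂ[X]}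
    (hp : HalfPlaneRoots u p) {β : ℂ} (hβ : 0 ≤ (u * β).im) :
    HalfPlaneRoots u (p - β • derivative p) := by
  intro y hy
  by_contra hcon
  rw [not_lt] at hcon
  have h0 : p.eval y ≠ 0 := fun h => absurd (hp y h) (not_lt.2 hcon)
  simp only [eval_sub, eval_smul, smul_eq_mul, sub_eq_zero] at hy
  rcases logDeriv_im_pos hp hcon with h | h
  · rw [h] at hy; simp at hy; exact h0 hy
  · have hβ0 : β ≠ 0 := by rintro rfl; simp at hy; exact h0 hy
    have hd : p.derivative.eval y ≠ 0 := by intro h; rw [h] at hy; simp at hy; exact h0 hy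
    have : u⁻¹ * (p.derivative.eval y / p.eval y) = (u * β)⁻¹ := by
      rw [hy]; field_simp
    rw [this, Complex.inv_im] at h
    have h3 : 0 < Complex.normSq (u * β) := Complex.normSq_pos.2 (mul_ne_zero hu hβ0)
    have : -(u * β).im / Complex.normSq (u * β) ≤ 0 :=
      div_nonpos_of_nonpos_of_nonneg (by linarith) h3.le
    linarith

/-- The Gauss-Lucas theorem for a half-plane. -/
lemma HalfPlaneRoots.derivative {u : ℂ} {p : ℂ[X]} (hp : HalfPlaneRoots u p) :
    derivative p = 0 ∨ HalfPlaneRoots u (derivative p) := by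
  by_cases hd : Polynomial.derivative p = 0
  · exact Or.inl hd
  right
  intro y hy
  by_contra hcon
  rcases logDeriv_im_pos hp (not_lt.1 hcon) with h | h
  · exact hd h
  · rw [hy] at h; simp at h

lemma HalfPlaneRoots.iterate_derivative {u : ℂ} {p : ℂ[X]}
    (hp : HalfPlaneRoots u p) (m : ℕ) :
    Polynomial.derivative^[m] p = 0 ∨ HalfPlaneRoots u (Polynomial.derivative^[m] p) := by
  induction m with
  | zero => exact Or.inr hp
  | succ m ih =>
    rw [Function.iterate_succ_apply']
    rcases ih with h | h
    · left; rw [h]; simp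
    · exact h.derivative

/-- The differential operator `g(x D)` with constant coefficients, for a polynomial `g`. -/
noncomputable def diffOp (x : ℂ) (g : ℂ[X]) : Module.End ℂ ℂ[X] :=
  aeval (x • (Polynomial.derivative : Module.End ℂ ℂ[X])) g

lemma diffOp_mul (x : ℂ) (g h p : ℂ[X]) : diffOp x (g * h) p = diffOp x g (diffOp x h p) := by
  simp [diffOp]

lemma diffOp_C_mul_X_pow (x c : ℂ) (m : ℕ) (p : ℂ[X]) :
    diffOp x (C c * X ^ m) p = (c * x ^ m) • Polynomial.derivative^[m] p := by
  simp [diffOp, _root_.smul_pow, Module.End.pow_apply, mul_smul]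
  rw [smul_comm]

/-- `g(x D) p` at the origin is `∑ k! g_k p_k x ^ k`, the image of `p` under the diagonal
operator with symbol `g`, evaluated at `x`. -/
lemma diffOp_eval_zero (x : ℂ) (g p : ℂ[X]) (d : ℕ) (hd : p.natDegree < d) :
    (diffOp x g p).eval 0 =
      ∑ k ∈ Finset.range d, ((k.factorial : ℂ) * g.coeff k * p.coeff k) * x ^ k := by
  induction g using Polynomial.induction_on' with
  | add a b ha hb =>
    have : diffOp x (a + b) p = diffOp x a p + diffOp x b p := by simp [diffOp]
    rw [this, eval_add, ha, hb, ← Finset.sum_add_distrib]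
    refine Finset.sum_congr rfl fun k _ => ?_
    rw [coeff_add]; ring
  | monomial n a =>
    rw [← C_mul_X_pow_eq_monomial, diffOp_C_mul_X_pow, eval_smul, ← coeff_zero_eq_eval_zero,
      coeff_iterate_derivative]
    simp only [coeff_C_mul_X_pow, zero_add, Nat.descFactorial_self]
    rw [Finset.sum_eq_single n]
    · simp; ring
    · intro k _ hk; simp [hk]
    · intro hn
      rw [Finset.mem_range, not_lt] at hn
      rw [coeff_eq_zero_of_natDegree_lt (hd.trans_le hn)]; simp

/-- Symbols `h` for which `h(x D)` preserves `HalfPlaneRoots u`. -/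
def PreservesRoots (u x : ℂ) (h : ℂ[X]) : Prop :=
  ∀ p, HalfPlaneRoots u p → HalfPlaneRoots u (diffOp x h p)

lemma PreservesRoots.one (u x : ℂ) : PreservesRoots u x 1 := by
  intro p hp; simpa [diffOp] using hp

lemma PreservesRoots.mul {u x : ℂ} {g h : ℂ[X]} (hg : PreservesRoots u x g)
    (hh : PreservesRoots u x h) : PreservesRoots u x (g * h) := by
  intro p hp; rw [diffOp_mul]; exact hg _ (hh _ hp)

lemma PreservesRoots.pow {u x : ℂ} {g : ℂ[X]} (hg : PreservesRoots u x g) (n : ℕ) :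
    PreservesRoots u x (g ^ n) := by
  induction n with
  | zero => simpa using PreservesRoots.one u x
  | succ n ih => rw [pow_succ]; exact ih.mul hg

lemma PreservesRoots.prod {u x : ℂ} {ι : Type*} {g : ι → ℂ[X]} {s : Finset ι}
    (hg : ∀ i ∈ s, PreservesRoots u x (g i)) : PreservesRoots u x (∏ i ∈ s, g i) :=
  Finset.prod_induction _ _ (fun _ _ => PreservesRoots.mul) (PreservesRoots.one u x) hg

lemma PreservesRoots.linear {u x : ℂ} (hu : u ≠ 0) {β : ℂ} (hβ : 0 ≤ (u * (x * β)).im) :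
    PreservesRoots u x (1 - C β * X) := by
  intro p hp
  have : diffOp x (1 - C β * X) p = p - (x * β) • Polynomial.derivative p := by
    simp [diffOp, mul_smul, smul_comm x β]
  rw [this]
  exact hp.sub_smul_derivative hu hβ

/-- The polynomial `∑_{k < d} t_k p_k X ^ k`, i.e. the diagonal operator with sequence `t`
applied to `p` (when `deg p < d`). -/
noncomputable def diagApply (d : ℕ) (t : ℕ → ℂ) (p : ℂ[X]) : ℂ[X] :=
  ∑ k ∈ Finset.range d, C (t k * p.coeff k) * X ^ k

lemma diagApply_eval (d : ℕ) (t : ℕ → ℂ) (p : ℂ[X]) (x : ℂ) :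
    (diagApply d t p).eval x = ∑ k ∈ Finset.range d, (t k * p.coeff k) * x ^ k := by
  simp [diagApply, eval_finsetSum]

/-- The origin lies outside every half-plane `{y | 0 < Im (u y)}`, so `h(x D)` applied to a derivative of
`p` does not vanish there. -/
lemma stableOrZero_diagApply_of_preservesRoots {u : ℂ → ℂ} {p : ℂ[X]} {d : ℕ}
    (hd : p.natDegree < d) (c : ℂ) (hc : c ≠ 0) (m : ℕ) (h : ℂ[X])
    (H : ∀ x : ℂ, 0 < x.im → u x ≠ 0 ∧ HalfPlaneRoots (u x) p ∧ PreservesRoots (u x) x h) :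
    StableOrZero (diagApply d (fun k => (k.factorial : ℂ) * (C c * X ^ m * h).coeff k) p) := by
  have key : ∀ x, (diagApply d (fun k => (k.factorial : ℂ) * (C c * X ^ m * h).coeff k) p).eval x
      = (c * x ^ m) * (diffOp x h (Polynomial.derivative^[m] p)).eval 0 := by
    intro x
    rw [diagApply_eval, ← diffOp_eval_zero x _ p d hd, mul_comm, diffOp_mul, diffOp_C_mul_X_pow,
      map_smul, eval_smul, smul_eq_mul]
  by_cases h0 : Polynomial.derivative^[m] p = 0
  · left
    apply Polynomial.funext
    intro x
    rw [key, h0]; simp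
  · right
    intro x hx
    obtain ⟨hu, hp, hh⟩ := H x hx
    rw [key]
    have h1 := hh _ ((hp.iterate_derivative m).resolve_left h0)
    have hx0 : x ≠ 0 := by rintro rfl; simp at hx
    refine mul_ne_zero (mul_ne_zero hc (pow_ne_zero _ hx0)) fun h2 => ?_
    simpa using h1 0 h2

/-- A polynomial without zeros in the upper half-plane grows in modulus along upward vertical
rays. -/
lemma StableOrZero.norm_mono {q : ℂ[X]} (hq : StableOrZero q) (a : ℝ) {b c : ℝ} (hb : 0 ≤ b)
    (hbc : b ≤ c) : ‖q.eval (a + b * I)‖ ≤ ‖q.eval (a + c * I)‖ := by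
  rcases hq with rfl | hq
  · simp
  have hq0 : q ≠ 0 := by rintro rfl; exact hq I (by simp) (by simp)
  have hs := IsAlgClosed.splits q
  rw [hs.eval_eq_prod_roots, hs.eval_eq_prod_roots, norm_mul, norm_mul]
  refine mul_le_mul_of_nonneg_left ?_ (norm_nonneg _)
  have hn : ∀ m : Multiset ℂ, ‖m.prod‖ = (m.map fun z => ‖z‖).prod := fun m =>
    map_multiset_prod (normHom : ℂ →*₀ ℝ) m
  rw [hn, hn, Multiset.map_map, Multiset.map_map]
  refine Multiset.prod_map_le_prod_map₀ _ _ (fun r _ => norm_nonneg _) fun r hr => ?_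
  have hr' : r.im ≤ 0 := by
    by_contra h
    exact hq r (not_le.1 h) ((Polynomial.mem_roots hq0).1 hr)
  simp only [Function.comp_apply, Complex.norm_def]
  apply Real.sqrt_le_sqrt
  simp only [Complex.normSq_apply]
  simp
  nlinarith

/-- A pointwise limit of stable polynomials is stable or zero if it is a polynomial; the
monotonicity of `StableOrZero.norm_mono` survives the limit, so a zero in the upper half-plane
would force a whole segment of zeros. -/
lemma StableOrZero.of_tendsto {q : ℕ → ℂ[X]} {Q : ℂ[X]} (hq : ∀ n, StableOrZero (q n))
    (h : ∀ x, Tendsto (fun n => (q n).eval x) atTop (𝓝 (Q.eval x))) : StableOrZero Q := by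
  by_contra hcon
  rw [StableOrZero, not_or] at hcon
  obtain ⟨hQ, hz⟩ := hcon
  push Not at hz
  obtain ⟨z, hz, hz0⟩ := hz
  apply hQ
  have h1 : ∀ b : ℝ, b ∈ Set.Icc 0 z.im → Q.eval (z.re + b * I) = 0 := by
    intro b hb
    have h2 : ‖Q.eval (z.re + b * I)‖ ≤ ‖Q.eval (z.re + z.im * I)‖ :=
      le_of_tendsto_of_tendsto' (h _).norm (h _).norm fun n => (hq n).norm_mono _ hb.1 hb.2
    rw [Complex.re_add_im, hz0, norm_zero] at h2
    exact norm_le_zero_iff.1 h2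
  refine Polynomial.eq_zero_of_infinite_isRoot Q ?_
  refine Set.Infinite.mono (s := (fun b : ℝ => (z.re + b * I : ℂ)) '' Set.Icc 0 z.im) ?_ ?_
  · rintro _ ⟨b, hb, rfl⟩; exact h1 b hb
  · refine Set.Infinite.image ?_ (Set.Icc_infinite hz)
    intro a _ b _ hab
    simpa using hab

/-- Closure of the sufficiency statement under locally uniform limits of the symbol and
simultaneous coefficientwise limits of the argument. -/
lemma StableOrZero.diagApply_of_tendsto {d : ℕ} {f : ℕ → ℂ → ℂ} {F : ℂ → ℂ}
    (hf : ∀ n, Differentiable ℂ (f n)) (hF : TendstoLocallyUniformly f F atTop)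
    {p : ℕ → ℂ[X]} {P : ℂ[X]} (hp : ∀ k, Tendsto (fun n => (p n).coeff k) atTop (𝓝 (P.coeff k)))
    (hs : ∀ n, StableOrZero (diagApply d (fun k => iteratedDeriv k (f n) 0) (p n))) :
    StableOrZero (diagApply d (fun k => iteratedDeriv k F 0) P) := by
  have h1 : ∀ k, TendstoLocallyUniformlyOn (fun n => iteratedDeriv k (f n)) (iteratedDeriv k F)
      atTop Set.univ := by
    intro k
    induction k with
    | zero => simpa [tendstoLocallyUniformlyOn_univ] using hF
    | succ k ih =>
      simp only [iteratedDeriv_succ]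
      refine TendstoLocallyUniformlyOn.deriv ih (Eventually.of_forall fun n => ?_) isOpen_univ
      have : ContDiff ℂ (k + 1 : ℕ) (f n) := (hf n).contDiff
      exact (this.differentiable_iteratedDeriv k (by exact_mod_cast Nat.lt_succ_self k)).differentiableOn
  refine StableOrZero.of_tendsto hs fun x => ?_
  simp only [diagApply_eval]
  exact tendsto_finsetSum _ fun k _ =>
    (((h1 k).tendsto_at (Set.mem_univ 0)).mul (hp k)).mul_const _

lemma iteratedDeriv_eval_zero (g : ℂ[X]) (k : ℕ) :
    iteratedDeriv k (fun z => g.eval z) 0 = (k.factorial : ℂ) * g.coeff k := by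
  have : ∀ h : ℂ[X], iteratedDeriv k (fun z => h.eval z) = fun z => (derivative^[k] h).eval z := by
    induction k with
    | zero => intro h; simp
    | succ k ih =>
      intro h
      rw [iteratedDeriv_succ, ih]
      ext z
      rw [Function.iterate_succ_apply']
      exact Polynomial.deriv _
  rw [this]
  simp only
  rw [← coeff_zero_eq_eval_zero, coeff_iterate_derivative]
  simp [Nat.descFactorial_self]

/-! ### Exponential factors and the limit form of sufficiency -/

lemma norm_pow_sub_pow_le_mul {a b : ℂ} {M : ℝ} (hM : 1 ≤ M) (ha : ‖a‖ ≤ M) (hb : ‖b‖ ≤ M)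
    (n : ℕ) : ‖a ^ n - b ^ n‖ ≤ n * ‖a - b‖ * M ^ n := by
  induction n with
  | zero => simp
  | succ n ih =>
    have h1 : a ^ (n + 1) - b ^ (n + 1) = a * (a ^ n - b ^ n) + (a - b) * b ^ n := by ring
    have h0 : 0 ≤ M := by linarith
    have h2 : ‖b ^ n‖ ≤ M ^ (n + 1) := by
      rw [norm_pow]
      exact (pow_le_pow_left₀ (norm_nonneg _) hb n).trans (pow_le_pow_right₀ hM (Nat.le_succ n))
    calc ‖a ^ (n + 1) - b ^ (n + 1)‖ ≤ ‖a‖ * ‖a ^ n - b ^ n‖ + ‖a - b‖ * ‖b ^ n‖ := by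
          rw [h1]; refine (norm_add_le _ _).trans ?_; rw [norm_mul, norm_mul]
      _ ≤ M * (n * ‖a - b‖ * M ^ n) + ‖a - b‖ * M ^ (n + 1) := by gcongr
      _ = ((n + 1 : ℕ) : ℝ) * ‖a - b‖ * M ^ (n + 1) := by push_cast; ring

lemma tendstoLocallyUniformly_one_add_div_pow :
    TendstoLocallyUniformly (fun (n : ℕ) (w : ℂ) => (1 + w / (n + 1 : ℂ)) ^ (n + 1)) Complex.exp
      atTop := by
  rw [tendstoLocallyUniformly_iff_forall_isCompact]
  intro K hK
  obtain ⟨R, hR0, hR⟩ := hK.isBounded.exists_pos_norm_le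
  rw [Metric.tendstoUniformlyOn_iff]
  intro ε hε
  have ht : Tendsto (fun n : ℕ => (R ^ 2 * Real.exp R) * (1 / ((n : ℝ) + 1))) atTop (𝓝 0) := by
    simpa using (tendsto_one_div_add_atTop_nhds_zero_nat (𝕜 := ℝ)).const_mul (R ^ 2 * Real.exp R)
  filter_upwards [ht.eventually (gt_mem_nhds hε), eventually_ge_atTop ⌈R⌉₊] with n hn hnR w hw
  have hwR := hR w hw
  have hn1 : (0 : ℝ) < (n : ℝ) + 1 := by positivity
  have hRn : R ≤ (n : ℝ) + 1 := (Nat.ceil_le.1 hnR).trans (by linarith)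
  have hnw : ‖w / (n + 1 : ℂ)‖ = ‖w‖ / ((n : ℝ) + 1) := by
    rw [norm_div]; congr 1
    exact_mod_cast Complex.norm_natCast (n + 1)
  have hle : ‖w / (n + 1 : ℂ)‖ ≤ R / ((n : ℝ) + 1) := by rw [hnw]; gcongr
  have he : Complex.exp w = Complex.exp (w / (n + 1 : ℂ)) ^ (n + 1) := by
    rw [← Complex.exp_nat_mul]; congr 1
    have : (n + 1 : ℂ) ≠ 0 := by exact_mod_cast Nat.succ_ne_zero n
    push_cast; field_simp
  rw [dist_eq_norm, he]
  have hM : 1 ≤ Real.exp (R / ((n : ℝ) + 1)) := Real.one_le_exp (by positivity)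
  have h1 : ‖Complex.exp (w / (n + 1 : ℂ))‖ ≤ Real.exp (R / ((n : ℝ) + 1)) :=
    (Complex.norm_exp_le_exp_norm _).trans (Real.exp_le_exp.2 hle)
  have h2 : ‖1 + w / (n + 1 : ℂ)‖ ≤ Real.exp (R / ((n : ℝ) + 1)) := by
    refine (norm_add_le _ _).trans ?_
    rw [norm_one]
    linarith [Real.add_one_le_exp (R / ((n : ℝ) + 1))]
  have h3 : ‖Complex.exp (w / (n + 1 : ℂ)) - (1 + w / (n + 1 : ℂ))‖ ≤ (R / ((n : ℝ) + 1)) ^ 2 := by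
    have h4 : ‖w / (n + 1 : ℂ)‖ ≤ 1 := hle.trans ((div_le_one hn1).2 hRn)
    have := Complex.norm_exp_sub_one_sub_id_le h4
    rw [sub_sub] at this
    exact this.trans (pow_le_pow_left₀ (norm_nonneg _) hle 2)
  have h5 : Real.exp (R / ((n : ℝ) + 1)) ^ (n + 1) = Real.exp R := by
    rw [← Real.exp_nat_mul]; congr 1; push_cast; field_simp
  calc _ ≤ _ := norm_pow_sub_pow_le_mul hM h1 h2 (n + 1)
    _ ≤ ((n + 1 : ℕ) : ℝ) * (R / ((n : ℝ) + 1)) ^ 2 * Real.exp R := by rw [h5]; gcongr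
    _ = (R ^ 2 * Real.exp R) * (1 / ((n : ℝ) + 1)) := by push_cast; field_simp
    _ < ε := hn

/-- Sufficiency in a form covering both parts: `Φ` is a locally uniform limit of products of
`z ^ m`, a Gaussian factor and finitely many linear factors, and for each `x` in the upper
half-plane all linear factors of the approximating polynomials preserve a half-plane containing
the zeros of the approximants `p n` of `P`. -/
lemma sufficiency_core {Φ : ℂ → ℂ} {c : ℂ} (hc : c ≠ 0) {m : ℕ} {b : ℕ → ℝ} {s : ℝ} {α : ℕ → ℝ}
    (hΦ : TendstoLocallyUniformly (fun (N : ℕ) (z : ℂ) => c * z ^ m *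
      Complex.exp (-(b N : ℂ) * z - (s : ℂ) * z ^ 2) *
        ∏ j ∈ Finset.range N, (1 - (α j : ℂ) * z)) Φ atTop)
    {u : ℂ → ℂ} (hu : ∀ x : ℂ, 0 < x.im → u x ≠ 0)
    (hα : ∀ x : ℂ, 0 < x.im → ∀ j, 0 ≤ (u x * (x * (α j : ℂ))).im)
    (hq : ∀ x : ℂ, 0 < x.im → ∀ N n : ℕ, ∃ β₁ β₂ : ℂ, 0 ≤ (u x * (x * β₁)).im ∧
      0 ≤ (u x * (x * β₂)).im ∧ β₁ + β₂ = b N / (n + 1 : ℂ) ∧ β₁ * β₂ = -(s / (n + 1 : ℂ)))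
    {p : ℕ → ℂ[X]} {P : ℂ[X]} {d : ℕ} (hd : ∀ n, (p n).natDegree < d)
    (hp : ∀ k, Tendsto (fun n => (p n).coeff k) atTop (𝓝 (P.coeff k)))
    (hr : ∀ n, ∀ x : ℂ, 0 < x.im → HalfPlaneRoots (u x) (p n)) :
    StableOrZero (diagApply d (fun k => iteratedDeriv k Φ 0) P) := by
  refine StableOrZero.diagApply_of_tendsto (fun N => by fun_prop) hΦ hp fun N => ?_
  let h : ℕ → ℂ[X] := fun n =>
    (1 - C ((b N : ℂ) / (n + 1 : ℂ)) * X - C ((s : ℂ) / (n + 1 : ℂ)) * X ^ 2) ^ (n + 1) *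
      ∏ j ∈ Finset.range N, (1 - C (α j : ℂ) * X)
  refine StableOrZero.diagApply_of_tendsto
    (f := fun n z => (C c * X ^ m * h n).eval z) (fun n => Polynomial.differentiable _) ?_
    (p := fun _ => p N) (fun k => tendsto_const_nhds) fun n => ?_
  · have h1 : TendstoLocallyUniformly
        (fun (n : ℕ) (z : ℂ) => (1 + (-(b N : ℂ) * z - (s : ℂ) * z ^ 2) / (n + 1 : ℂ)) ^ (n + 1))
        (fun z => Complex.exp (-(b N : ℂ) * z - (s : ℂ) * z ^ 2)) atTop :=
      tendstoLocallyUniformly_one_add_div_pow.comp (fun z => -(b N : ℂ) * z - (s : ℂ) * z ^ 2)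
        (by fun_prop)
    have hconst : ∀ f : ℂ → ℂ, TendstoLocallyUniformly (fun (_ : ℕ) => f) f atTop := by
      intro f v hv x
      exact ⟨Set.univ, univ_mem, Eventually.of_forall fun n y _ => refl_mem_uniformity hv⟩
    have h2 := ((hconst (fun z => c * z ^ m)).mul₀ h1 (by fun_prop) (by fun_prop)).mul₀
      (hconst (fun z => ∏ j ∈ Finset.range N, (1 - (α j : ℂ) * z))) (by fun_prop) (by fun_prop)
    refine h2.congr fun n z => ?_
    simp only [h, eval_mul, eval_pow, eval_sub, eval_one, eval_C, eval_X, Pi.mul_apply, eval_prod]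
    rw [← mul_assoc]
    congr 3
    ring
  · simp only [iteratedDeriv_eval_zero]
    refine stableOrZero_diagApply_of_preservesRoots (u := u) (hd N) c hc m (h n) fun x hx => ?_
    refine ⟨hu x hx, hr N x hx, ?_⟩
    obtain ⟨β₁, β₂, hβ₁, hβ₂, hsum, hprod⟩ := hq x hx N n
    refine PreservesRoots.mul (PreservesRoots.pow ?_ _) (PreservesRoots.prod fun j _ =>
      PreservesRoots.linear (hu x hx) (hα x hx j))
    have : (1 - C ((b N : ℂ) / (n + 1 : ℂ)) * X - C ((s : ℂ) / (n + 1 : ℂ)) * X ^ 2 : ℂ[X])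
        = (1 - C β₁ * X) * (1 - C β₂ * X) := by
      have h3 : (s : ℂ) / (n + 1 : ℂ) = -(β₁ * β₂) := by rw [hprod]; ring
      rw [← hsum, h3]
      simp only [C_add, C_mul, C_neg]; ring
    rw [this]
    exact (PreservesRoots.linear (hu x hx) hβ₁).mul (PreservesRoots.linear (hu x hx) hβ₂)

lemma powerSeries_coeff_unique {a b : ℕ → ℂ} {f : ℂ → ℂ}
    (ha : ∀ z, HasSum (fun k => a k * z ^ k) (f z))
    (hb : ∀ z, HasSum (fun k => b k * z ^ k) (f z)) : a = b := by
  have key : ∀ a : ℕ → ℂ, (∀ z, HasSum (fun k => a k * z ^ k) (f z)) →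
      HasFPowerSeriesAt f (FormalMultilinearSeries.ofScalars ℂ a) 0 := by
    intro a ha
    rw [hasFPowerSeriesAt_iff]
    refine Eventually.of_forall fun z => ?_
    simpa [FormalMultilinearSeries.coeff_ofScalars, mul_comm] using ha z
  have h := (key a ha).eq_formalMultilinearSeries (key b hb)
  ext n
  have := congrArg (fun q => q.coeff n) h
  simpa [FormalMultilinearSeries.coeff_ofScalars] using this

lemma iteratedDeriv_zero_eq_of_hasSum {τ : ℕ → ℝ} {Φ : ℂ → ℂ}
    (h : ∀ z : ℂ, HasSum (fun k : ℕ => (τ k : ℂ) * z ^ k / (Nat.factorial k : ℂ)) (Φ z))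
    (hd : Differentiable ℂ Φ) (k : ℕ) : iteratedDeriv k Φ 0 = τ k := by
  have h1 : (fun k : ℕ => (τ k : ℂ) / (k.factorial : ℂ)) =
      fun k : ℕ => iteratedDeriv k Φ 0 / (k.factorial : ℂ) := by
    refine powerSeries_coeff_unique (f := Φ) (fun z => ?_) fun z => ?_
    · refine (h z).congr_fun ?_
      intro k; ring
    · have := Complex.hasSum_taylorSeries_of_entire hd 0 z
      refine this.congr_fun ?_
      intro k; simp; ring
  have h2 := congrFun h1 k
  have : (k.factorial : ℂ) ≠ 0 := by exact_mod_cast k.factorial_ne_zero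
  field_simp at h2
  exact h2.symm

/-! ### Diagonal operators and sufficiency -/

/-- The diagonal operator with sequence `τ` sends `p` to zero or to a real-rooted polynomial,
expressed through coefficients. -/
def DiagRealRooted (τ : ℕ → ℝ) (p : ℝ[X]) : Prop :=
  (∀ k, τ k * p.coeff k = 0) ∨
    ∀ z : ℂ, ∑ k ∈ Finset.range (p.natDegree + 1), ((τ k * p.coeff k : ℝ) : ℂ) * z ^ k = 0 →
      z.im = 0

lemma diagRealRooted_of_stableOrZero {τ : ℕ → ℝ} {p : ℝ[X]}
    (h : StableOrZero (diagApply (p.natDegree + 1) (fun k => (τ k : ℂ))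
      (p.map (algebraMap ℝ ℂ)))) : DiagRealRooted τ p := by
  have hev : ∀ z : ℂ, (diagApply (p.natDegree + 1) (fun k => (τ k : ℂ))
      (p.map (algebraMap ℝ ℂ))).eval z =
      ∑ k ∈ Finset.range (p.natDegree + 1), ((τ k * p.coeff k : ℝ) : ℂ) * z ^ k := by
    intro z
    rw [diagApply_eval]
    simp
  rcases h with h | h
  · left
    intro k
    by_cases hk : k < p.natDegree + 1
    · have h1 := congrArg (fun q => q.coeff k) h
      simp only [diagApply, finsetSum_coeff, coeff_C_mul_X_pow, coeff_zero] at h1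
      rw [Finset.sum_ite_eq, if_pos (Finset.mem_range.2 hk)] at h1
      simpa using h1
    · rw [coeff_eq_zero_of_natDegree_lt (by omega), mul_zero]
  · right
    intro z hz
    rw [← hev] at hz
    by_contra hne
    rcases lt_or_gt_of_ne hne with hlt | hgt
    · apply h (starRingEnd ℂ z) (by simpa using hlt)
      rw [hev] at hz ⊢
      have := congrArg (starRingEnd ℂ) hz
      simpa [map_sum] using this
    · exact h z hgt hz

lemma coeff_diag {T : ℝ[X] →ₗ[ℝ] ℝ[X]} {τ : ℕ → ℝ}
    (hτ : ∀ k : ℕ, T (Polynomial.X ^ k) = Polynomial.C (τ k) * Polynomial.X ^ k) (p : ℝ[X])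
    (k : ℕ) : (T p).coeff k = τ k * p.coeff k := by
  induction p using Polynomial.induction_on' with
  | add a b ha hb => rw [map_add, coeff_add, ha, hb, coeff_add]; ring
  | monomial n a =>
    rw [← C_mul_X_pow_eq_monomial, ← smul_eq_C_mul, map_smul, hτ]
    simp only [coeff_smul, coeff_C_mul_X_pow, coeff_X_pow, smul_eq_mul]
    split_ifs with h
    · rw [h]; ring
    · simp

lemma aeval_diag {T : ℝ[X] →ₗ[ℝ] ℝ[X]} {τ : ℕ → ℝ}
    (hτ : ∀ k : ℕ, T (Polynomial.X ^ k) = Polynomial.C (τ k) * Polynomial.X ^ k) (p : ℝ[X])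
    {d : ℕ} (hd : p.natDegree < d) (z : ℂ) :
    aeval z (T p) = ∑ k ∈ Finset.range d, ((τ k * p.coeff k : ℝ) : ℂ) * z ^ k := by
  have h : (T p).natDegree < d := by
    refine lt_of_le_of_lt ?_ hd
    rw [natDegree_le_iff_coeff_eq_zero]
    intro N hN
    rw [coeff_diag hτ, coeff_eq_zero_of_natDegree_lt hN, mul_zero]
  rw [aeval_eq_sum_range' h]
  refine Finset.sum_congr rfl fun k _ => ?_
  rw [coeff_diag hτ]; simp

/-- A real polynomial that is zero or has only real complex zeros. -/
def RealRooted (p : ℝ[X]) : Prop := p = 0 ∨ ∀ z : ℂ, aeval z p = 0 → z.im = 0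

lemma mem_roots_map_iff {p : ℝ[X]} (hp : p ≠ 0) (z : ℂ) :
    z ∈ (p.map (algebraMap ℝ ℂ)).roots ↔ aeval z p = 0 := by
  rw [mem_roots (map_ne_zero hp), IsRoot.def, eval_map_algebraMap]

lemma realRooted_iff {p : ℝ[X]} :
    RealRooted p ↔ (p = 0 ∨ ∀ z ∈ (p.map (algebraMap ℝ ℂ)).roots, z.im = 0) := by
  by_cases hp : p = 0
  · simp [RealRooted, hp]
  · simp [RealRooted, hp]

lemma realRooted_diag {T : ℝ[X] →ₗ[ℝ] ℝ[X]} {τ : ℕ → ℝ}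
    (hτ : ∀ k : ℕ, T (Polynomial.X ^ k) = Polynomial.C (τ k) * Polynomial.X ^ k) {p : ℝ[X]}
    (h : DiagRealRooted τ p) : RealRooted (T p) := by
  rcases h with h | h
  · left; ext k; rw [coeff_diag hτ, h]; simp
  · right
    intro z hz
    rw [aeval_diag hτ p (Nat.lt_succ_self _)] at hz
    exact h z hz

lemma tendsto_taylor_coeff (P : ℂ[X]) {r : ℕ → ℂ} (hr : Tendsto r atTop (𝓝 0)) (k : ℕ) :
    Tendsto (fun n => (taylor (r n) P).coeff k) atTop (𝓝 (P.coeff k)) := by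
  simp only [taylor_coeff]
  have h := ((hasseDeriv k P).continuous.tendsto 0).comp hr
  have h0 : (hasseDeriv k P).eval 0 = P.coeff k := by
    rw [← taylor_coeff, taylor_zero]
  rw [h0] at h
  exact h

lemma natDegree_taylor_map_lt (p : ℝ[X]) (r : ℂ) :
    (taylor r (p.map (algebraMap ℝ ℂ))).natDegree < p.natDegree + 1 := by
  rw [natDegree_taylor]
  exact Nat.lt_succ_of_le natDegree_map_le

lemma differentiable_of_tendsto {f : ℕ → ℂ → ℂ} {F : ℂ → ℂ} (hf : ∀ n, Differentiable ℂ (f n))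
    (hF : TendstoLocallyUniformly f F atTop) : Differentiable ℂ F := by
  rw [← tendstoLocallyUniformlyOn_univ] at hF
  exact differentiableOn_univ.1
    (hF.differentiableOn (Eventually.of_forall fun n => (hf n).differentiableOn) isOpen_univ)

lemma diagRealRooted_zero (τ : ℕ → ℝ) : DiagRealRooted τ 0 := Or.inl fun k => by simp

/-- Sufficiency in part (b). For `x` in the upper half-plane the half-plane to work with is
`{y | Im (y / x) < 0}`: it contains the positive reals and is invariant under translation
by real multiples of `x`. -/
lemma diagRealRooted_of_isLPForm {τ : ℕ → ℝ} {Φ : ℂ → ℂ}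
    (h : ∀ z : ℂ, HasSum (fun k : ℕ => (τ k : ℂ) * z ^ k / (Nat.factorial k : ℂ)) (Φ z))
    (hΦ : IsLPForm Φ) {p : ℝ[X]}
    (hp : ∀ z ∈ (p.map (algebraMap ℝ ℂ)).roots, z.im = 0 ∧ 0 ≤ z.re) : DiagRealRooted τ p := by
  by_cases hp0 : p = 0
  · rw [hp0]; exact diagRealRooted_zero τ
  obtain ⟨c, m, b, σ, α, hc, -, hlim⟩ := hΦ
  have hdiff : Differentiable ℂ Φ := differentiable_of_tendsto (fun N => by fun_prop) hlim
  apply diagRealRooted_of_stableOrZero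
  have hτ' : (fun k => (τ k : ℂ)) = fun k => iteratedDeriv k Φ 0 := by
    ext k; rw [iteratedDeriv_zero_eq_of_hasSum h hdiff]
  rw [hτ']
  have hnorm : ∀ x : ℂ, 0 < x.im → ∀ y : ℂ, -x⁻¹ * (x * y) = -y := by
    intro x hx y
    have : x ≠ 0 := by rintro rfl; simp at hx
    field_simp
  refine sufficiency_core (c := (c : ℂ)) (by exact_mod_cast hc) (m := m)
    (b := fun N => b - ∑ j ∈ Finset.range N, α j) (s := σ ^ 2 / 2) (α := α) ?_
    (u := fun x => -x⁻¹) ?_ ?_ ?_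
    (p := fun n => taylor (-(1 / ((n : ℂ) + 1))) (p.map (algebraMap ℝ ℂ)))
    (fun n => natDegree_taylor_map_lt p _) ?_ ?_
  · refine hlim.congr fun N z => ?_
    rw [Finset.prod_mul_distrib, ← Complex.exp_sum]
    have : Complex.exp (-((b - ∑ j ∈ Finset.range N, α j : ℝ) : ℂ) * z -
        ((σ ^ 2 / 2 : ℝ) : ℂ) * z ^ 2) = Complex.exp (-(b : ℂ) * z - (σ : ℂ) ^ 2 / 2 * z ^ 2) *
        Complex.exp (∑ j ∈ Finset.range N, (α j : ℂ) * z) := by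
      rw [← Complex.exp_add, ← Finset.sum_mul]
      congr 1
      push_cast
      ring
    rw [this]
    ring
  · intro x hx
    have : x ≠ 0 := by rintro rfl; simp at hx
    simpa using this
  · intro x hx j
    rw [hnorm x hx]; simp
  · intro x hx N n
    -- the quadratic `1 - B z - S z ^ 2` with `S ≥ 0` has two real zeros
    set B : ℝ := (b - ∑ j ∈ Finset.range N, α j) / ((n : ℝ) + 1) with hB
    set S : ℝ := (σ ^ 2 / 2) / ((n : ℝ) + 1) with hS
    have hS0 : 0 ≤ S := by positivity
    set D : ℝ := Real.sqrt (B ^ 2 + 4 * S)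
    have hD : D ^ 2 = B ^ 2 + 4 * S := Real.sq_sqrt (by positivity)
    refine ⟨(((B + D) / 2 : ℝ) : ℂ), (((B - D) / 2 : ℝ) : ℂ), ?_, ?_, ?_, ?_⟩
    · rw [hnorm x hx]; simp [-Complex.ofReal_div]
    · rw [hnorm x hx]; simp [-Complex.ofReal_div]
    · have : (((b - ∑ j ∈ Finset.range N, α j : ℝ) : ℂ)) / ((n : ℂ) + 1) = (B : ℂ) := by
        rw [hB]; push_cast; ring
      rw [this, ← Complex.ofReal_add]; congr 1; ring
    · have : (((σ ^ 2 / 2 : ℝ) : ℂ)) / ((n : ℂ) + 1) = (S : ℂ) := by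
        rw [hS]; push_cast; ring
      rw [this, ← Complex.ofReal_mul, ← Complex.ofReal_neg]; congr 1; nlinarith
  · refine tendsto_taylor_coeff _ ?_
    simpa using (tendsto_one_div_add_atTop_nhds_zero_nat (𝕜 := ℂ)).neg
  · intro n x hx y hy
    rw [taylor_eval, eval_map_algebraMap, ← mem_roots_map_iff hp0] at hy
    obtain ⟨h1, h2⟩ := hp _ hy
    have hcast : (1 / ((n : ℂ) + 1)) = ((1 / ((n : ℝ) + 1) : ℝ) : ℂ) := by push_cast; ring
    rw [hcast] at h1 h2
    simp only [add_im, neg_im, ofReal_im, neg_zero, add_re, neg_re, ofReal_re,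
      add_zero] at h1 h2
    have hy' : y = (y.re : ℂ) := by
      apply Complex.ext <;> simp [h1]
    have hpos : (0 : ℝ) < 1 / ((n : ℝ) + 1) := by positivity
    have hyre : 0 < y.re := by linarith
    rw [hy', Complex.im_mul_ofReal]
    refine mul_pos ?_ hyre
    rw [Complex.neg_im, Complex.inv_im]
    have : x ≠ 0 := by rintro rfl; simp at hx
    have := Complex.normSq_pos.2 this
    rw [neg_div, neg_neg]
    positivity

/-- Sufficiency in part (a). Here the half-plane is the upper half-plane itself, invariant under
translation by positive multiples of `x`. -/
lemma diagRealRooted_of_isLPIForm {τ : ℕ → ℝ} {Φ : ℂ → ℂ}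
    (h : ∀ z : ℂ, HasSum (fun k : ℕ => (τ k : ℂ) * z ^ k / (Nat.factorial k : ℂ)) (Φ z))
    (hΦ : IsLPIForm Φ) {p : ℝ[X]}
    (hp : ∀ z ∈ (p.map (algebraMap ℝ ℂ)).roots, z.im = 0) : DiagRealRooted τ p := by
  by_cases hp0 : p = 0
  · rw [hp0]; exact diagRealRooted_zero τ
  obtain ⟨c, m, b, α, hc, hb, hα, -, hlim⟩ := hΦ
  have hdiff : Differentiable ℂ Φ := differentiable_of_tendsto (fun N => by fun_prop) hlim
  apply diagRealRooted_of_stableOrZero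
  have hτ' : (fun k => (τ k : ℂ)) = fun k => iteratedDeriv k Φ 0 := by
    ext k; rw [iteratedDeriv_zero_eq_of_hasSum h hdiff]
  rw [hτ']
  refine sufficiency_core (c := (c : ℂ)) (by exact_mod_cast hc) (m := m)
    (b := fun N => b) (s := 0) (α := α) ?_
    (u := fun x => 1) ?_ ?_ ?_
    (p := fun n => taylor (-(1 / ((n : ℂ) + 1)) * I) (p.map (algebraMap ℝ ℂ)))
    (fun n => natDegree_taylor_map_lt p _) ?_ ?_
  · refine hlim.congr fun N z => ?_
    simp
  · simp
  · intro x hx j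
    have := hα j
    rw [one_mul, Complex.im_mul_ofReal]; positivity
  · intro x hx N n
    refine ⟨((b / ((n : ℝ) + 1) : ℝ) : ℂ), 0, ?_, by simp, by simp, by simp⟩
    rw [one_mul, Complex.im_mul_ofReal]; positivity
  · refine tendsto_taylor_coeff _ ?_
    simpa using ((tendsto_one_div_add_atTop_nhds_zero_nat (𝕜 := ℂ)).neg).mul_const I
  · intro n x hx y hy
    rw [taylor_eval, eval_map_algebraMap, ← mem_roots_map_iff hp0] at hy
    have h1 := hp _ hy
    have hcast : (1 / ((n : ℂ) + 1)) = ((1 / ((n : ℝ) + 1) : ℝ) : ℂ) := by push_cast; ring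
    rw [hcast] at h1
    have hpos : (0 : ℝ) < 1 / ((n : ℝ) + 1) := by positivity
    rw [← Complex.ofReal_neg] at h1
    rw [Complex.add_im, Complex.im_ofReal_mul, Complex.I_im] at h1
    rw [one_mul]
    linarith

/-- Replacing `Φ(z)` by `Φ(-z)` amounts to composing the diagonal operator with `X ↦ -X`. -/
lemma diagRealRooted_of_isLPIForm_neg {τ : ℕ → ℝ} {Φ : ℂ → ℂ}
    (h : ∀ z : ℂ, HasSum (fun k : ℕ => (τ k : ℂ) * z ^ k / (Nat.factorial k : ℂ)) (Φ z))
    (hΦ : IsLPIForm fun z => Φ (-z)) {p : ℝ[X]}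
    (hp : ∀ z ∈ (p.map (algebraMap ℝ ℂ)).roots, z.im = 0) : DiagRealRooted τ p := by
  have h1 : DiagRealRooted (fun k => (-1) ^ k * τ k) p := by
    refine diagRealRooted_of_isLPIForm (fun z => ?_) hΦ hp
    refine (h (-z)).congr_fun fun k => ?_
    rw [neg_pow z k]; push_cast; ring
  rcases h1 with h1 | h1
  · left
    intro k
    have := h1 k
    rw [mul_assoc] at this
    exact (mul_eq_zero.1 this).resolve_left (pow_ne_zero _ (by norm_num))
  · right
    intro z hz
    have := h1 (-z) ?_
    · simpa using this
    · rw [← hz]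
      refine Finset.sum_congr rfl fun k _ => ?_
      have h3 : ((-1 : ℂ) ^ k) * (-1) ^ k = 1 := by rw [← mul_pow]; simp
      rw [neg_pow z k]; push_cast
      linear_combination ((τ k : ℂ) * (p.coeff k : ℂ) * z ^ k) * h3

/-! ### Factorisation of Jensen polynomials -/

lemma RealRooted.splits {q : ℝ[X]} (h : RealRooted q) (hq : q ≠ 0) : q.Splits := by
  have h' := h.resolve_left hq
  refine (IsAlgClosed.splits (q.map (algebraMap ℝ ℂ))).of_splits_map (algebraMap ℝ ℂ) fun z hz => ?_
  rw [mem_roots_map_iff hq] at hz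
  exact ⟨z.re, Complex.ext (by simp) (by simp [h' z hz])⟩

/-- Factorisation normalised at the origin, after the substitution `X ↦ c X`. -/
lemma exists_factorization {q : ℝ[X]} (hq : q.Splits) (c : ℝ) :
    ∃ (a : ℝ) (m : ℕ) (s : Multiset ℝ), q.comp (C c * X) =
      C a * X ^ m * (s.map fun α => 1 - C α * X).prod := by
  have key : ∀ t : Multiset ℝ, ∃ (a : ℝ) (m : ℕ) (s : Multiset ℝ),
      (t.map fun r => (X - C r : ℝ[X])).prod.comp (C c * X) =
        C a * X ^ m * (s.map fun α => 1 - C α * X).prod := by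
    intro t
    induction t using Multiset.induction with
    | empty => exact ⟨1, 0, 0, by simp⟩
    | cons r t ih =>
      obtain ⟨a, m, s, h⟩ := ih
      by_cases hr : r = 0
      · refine ⟨a * c, m + 1, s, ?_⟩
        rw [Multiset.map_cons, Multiset.prod_cons, mul_comp, h, hr]
        simp only [C_0, sub_zero, X_comp, C_mul]
        ring
      · refine ⟨a * -r, m, (c / r) ::ₘ s, ?_⟩
        rw [Multiset.map_cons, Multiset.prod_cons, mul_comp, h, Multiset.map_cons,
          Multiset.prod_cons]
        have : (C r * C (c / r) : ℝ[X]) = C c := by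
          rw [← C_mul, mul_div_cancel₀ _ hr]
        simp only [sub_comp, X_comp, C_comp, C_mul, C_neg]
        linear_combination -X * C a * X ^ m * (s.map fun α => 1 - C α * X).prod * this
  obtain ⟨a, m, s, h⟩ := key q.roots
  refine ⟨q.leadingCoeff * a, m, s, ?_⟩
  conv_lhs => rw [hq.eq_prod_roots]
  rw [mul_comp, h, C_comp, C_mul]
  ring

lemma list_prod_getD {M : Type*} [CommMonoid M] (f : ℝ → M) (l : List ℝ) :
    (l.map f).prod = ∏ j ∈ Finset.range l.length, f (l.getD j 0) := by
  induction l with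
  | nil => simp
  | cons x l ih =>
    rw [List.map_cons, List.prod_cons, ih, List.length_cons, Finset.prod_range_succ']
    simp [mul_comm]

/-- A finite multiset of reals, listed in order of decreasing absolute value and padded by zeros. -/
lemma exists_sorted (s : Multiset ℝ) : ∃ (a : ℕ → ℝ) (d : ℕ), (∀ j, d ≤ j → a j = 0) ∧
    (Antitone fun j => |a j|) ∧ (∀ j < d, a j ∈ s) ∧
    (s.map fun α => (1 - C α * X : ℝ[X])).prod =
      ∏ j ∈ Finset.range d, (1 - C (a j) * X) := by
  let r : ℝ → ℝ → Prop := fun x y => |y| ≤ |x|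
  classical
  have : IsTrans ℝ r := ⟨fun x y z h1 h2 => le_trans h2 h1⟩
  have : Std.Total r := ⟨fun x y => le_total _ _⟩
  obtain ⟨l, hl⟩ : ∃ l : List ℝ, (l : Multiset ℝ) = s ∧ l.Pairwise r := by
    refine ⟨s.toList.insertionSort r, ?_, List.pairwise_insertionSort r _⟩
    conv_rhs => rw [← s.coe_toList]
    exact Multiset.coe_eq_coe.2 (List.perm_insertionSort r _)
  obtain ⟨rfl, hl⟩ := hl
  refine ⟨fun j => l.getD j 0, l.length, fun j hj => ?_, ?_, fun j hj => ?_, ?_⟩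
  · simp [hj]
  · intro i j hij
    rcases eq_or_lt_of_le hij with rfl | hij
    · rfl
    by_cases hj : j < l.length
    · have := List.pairwise_iff_getElem.1 hl i j (hij.trans hj) hj hij
      simp only [List.getD_eq_getElem _ _ hj, List.getD_eq_getElem _ _ (hij.trans hj)]
      exact this
    · simp only [List.getD_eq_default _ _ (not_lt.1 hj), abs_zero]
      exact abs_nonneg _
  · simp only [List.getD_eq_getElem _ _ hj]; simp
  · simp only [Multiset.map_coe, Multiset.prod_coe]
    exact list_prod_getD _ _

/-- The first two of Newton's identities, for the reciprocal zeros `a j`. -/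
lemma coeff_prod_one_sub (a : ℕ → ℝ) (d : ℕ) :
    (∏ j ∈ Finset.range d, (1 - C (a j) * X)).coeff 0 = 1 ∧
    (∏ j ∈ Finset.range d, (1 - C (a j) * X)).coeff 1 = -∑ j ∈ Finset.range d, a j ∧
    ∑ j ∈ Finset.range d, a j ^ 2 = (∏ j ∈ Finset.range d, (1 - C (a j) * X)).coeff 1 ^ 2 -
      2 * (∏ j ∈ Finset.range d, (1 - C (a j) * X)).coeff 2 := by
  induction d with
  | zero => simp [coeff_one]
  | succ d ih =>
    rw [Finset.prod_range_succ, Finset.sum_range_succ, Finset.sum_range_succ]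
    set P := ∏ j ∈ Finset.range d, (1 - C (a j) * X) with hP
    have h : P * (1 - C (a d) * X) = P - C (a d) * (P * X) := by ring
    obtain ⟨h0, h1, h2⟩ := ih
    rw [h]
    simp only [coeff_sub, coeff_C_mul, coeff_mul_X_zero, coeff_mul_X, h0, h1, h2]
    refine ⟨by simp, by ring, by ring⟩

/-- On the negative axis all terms of a polynomial with alternating coefficients have the same
sign. -/
lemma eval_ne_zero_of_alternating {Q : ℝ[X]} {δ : ℝ} (h : ∀ k, 0 ≤ δ * (-1) ^ k * Q.coeff k)
    (hδ : δ ≠ 0) (hQ : Q ≠ 0) {x : ℝ} (hx : x < 0) : Q.eval x ≠ 0 := by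
  intro h0
  have h1 : δ * Q.eval x = ∑ k ∈ Finset.range (Q.natDegree + 1),
      (δ * (-1) ^ k * Q.coeff k) * (-x) ^ k := by
    rw [eval_eq_sum_range, Finset.mul_sum]
    refine Finset.sum_congr rfl fun k _ => ?_
    have h3 : ((-1 : ℝ) ^ k) * (-1) ^ k = 1 := by rw [← mul_pow]; simp
    rw [neg_pow x]
    linear_combination (-δ * Q.coeff k * x ^ k) * h3
  rw [h0, mul_zero, eq_comm, Finset.sum_eq_zero_iff_of_nonneg] at h1
  · have := h1 Q.natDegree (by simp)
    have hx' : (-x) ^ Q.natDegree ≠ 0 := pow_ne_zero _ (by linarith)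
    simp [hδ, hQ, hx.ne] at this
  · intro k _
    exact mul_nonneg (h k) (pow_nonneg (by linarith) _)

/-- The image of `(1 + X) ^ n` under the diagonal operator with sequence `τ`. -/
noncomputable def jensen (τ : ℕ → ℝ) (n : ℕ) : ℝ[X] :=
  ∑ k ∈ Finset.range (n + 1), C ((n.choose k : ℝ) * τ k) * X ^ k

lemma coeff_jensen (τ : ℕ → ℝ) (n k : ℕ) : (jensen τ n).coeff k = n.choose k * τ k := by
  simp only [jensen, finsetSum_coeff, coeff_C_mul_X_pow, Finset.sum_ite_eq, Finset.mem_range]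
  split_ifs with h
  · rfl
  · rw [Nat.choose_eq_zero_of_lt (by omega)]; simp

/-- The rescaled Jensen polynomial, stripped of its zero at the origin and of its leading constant,
is a product of linear factors with reciprocal zeros sorted by absolute value. -/
lemma exists_factors_jensen {τ : ℕ → ℝ} {m : ℕ} (hm : τ m ≠ 0) (hlt : ∀ k < m, τ k = 0) {n : ℕ}
    (hn : 0 < n) (hmn : m ≤ n) (h : RealRooted (jensen τ n)) :
    ∃ (a : ℕ → ℝ) (d : ℕ), (∀ j, d ≤ j → a j = 0) ∧ (Antitone fun j => |a j|) ∧
      (∀ k, (∏ j ∈ Finset.range d, (1 - C (a j) * X)).coeff k =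
        ((n.choose (m + k) : ℝ) * (1 / n) ^ (m + k) * τ (m + k)) /
          ((n.choose m : ℝ) * (1 / n) ^ m * τ m)) ∧
      ((∃ δ : ℝ, δ ≠ 0 ∧ ∀ k, 0 ≤ δ * (-1) ^ k * τ k) → ∀ j, 0 ≤ a j) := by
  have hn' : (0 : ℝ) < 1 / n := by positivity
  have hch : (0 : ℝ) < n.choose m := by exact_mod_cast Nat.choose_pos hmn
  have hq : jensen τ n ≠ 0 := by
    intro h0
    have := coeff_jensen τ n m
    rw [h0, coeff_zero] at this
    exact mul_ne_zero hch.ne' hm this.symm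
  obtain ⟨c, m', s, hs⟩ := exists_factorization (h.splits hq) (1 / n)
  obtain ⟨a, d, had, hanti, hmem, hprod⟩ := exists_sorted s
  rw [hprod] at hs
  set Q := (jensen τ n).comp (C (1 / (n : ℝ)) * X) with hQ
  set P := ∏ j ∈ Finset.range d, (1 - C (a j) * X) with hP
  have hQc : ∀ k, Q.coeff k = (n.choose k : ℝ) * (1 / n) ^ k * τ k := by
    intro k
    rw [hQ, comp_C_mul_X_coeff, coeff_jensen]; ring
  have hQm : Q.coeff m ≠ 0 := by
    rw [hQc]; exact mul_ne_zero (by positivity) hm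
  have hQ0 : Q ≠ 0 := fun h0 => hQm (by rw [h0, coeff_zero])
  have hPc : ∀ k, Q.coeff (m' + k) = c * P.coeff k := by
    intro k
    rw [hs, mul_assoc, coeff_C_mul, add_comm, coeff_X_pow_mul]
  have hP0 : P.coeff 0 = 1 := (coeff_prod_one_sub a d).1
  have hc : c ≠ 0 := by
    rintro rfl
    apply hQ0; rw [hs]; simp
  -- both `m` and `m'` are the order of vanishing of `Q` at the origin
  have hmm : m' = m := by
    apply le_antisymm
    · by_contra hlt'
      apply hQm
      rw [hs, mul_assoc, coeff_C_mul, coeff_X_pow_mul', if_neg hlt', mul_zero]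
    · by_contra hlt'
      have := hPc 0
      rw [hP0, add_zero, hQc, hlt _ (not_le.1 hlt')] at this
      simp at this
      exact hc this.symm
  subst hmm
  have hcm : Q.coeff m' = c := by
    have := hPc 0
    rwa [hP0, add_zero, mul_one] at this
  refine ⟨a, d, had, hanti, fun k => ?_, ?_⟩
  · rw [← hQc, ← hQc, hPc, hcm, mul_div_cancel_left₀ _ hc]
  · rintro ⟨δ, hδ, hsign⟩ j
    by_contra hj
    have hjd : j < d := by
      by_contra hjd
      exact hj (had j (not_lt.1 hjd)).ge
    have hx : 1 / a j < 0 := one_div_neg.2 (not_le.1 hj)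
    refine eval_ne_zero_of_alternating (Q := Q) (fun k => ?_) hδ hQ0 hx ?_
    · rw [hQc]
      have := mul_nonneg (show (0 : ℝ) ≤ (n.choose k : ℝ) * (1 / n) ^ k by positivity) (hsign k)
      linarith
    · rw [hs, eval_mul, hP, eval_prod, Finset.prod_eq_zero (Finset.mem_range.2 hjd), mul_zero]
      simp [(not_le.1 hj).ne]

lemma tendsto_choose_div_pow (k : ℕ) :
    Tendsto (fun n : ℕ => (n.choose k : ℝ) * (1 / n) ^ k) atTop (𝓝 (1 / k.factorial)) := by
  have h : ∀ n : ℕ, (n.choose k : ℝ) * (1 / n) ^ k = (n.descFactorial k : ℝ) / n ^ k / k.factorial := by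
    intro n
    rw [Nat.choose_eq_descFactorial_div_factorial, Nat.cast_div (Nat.factorial_dvd_descFactorial n k)
      (by positivity)]
    rw [one_div, inv_pow]; ring
  simp only [h]
  clear h
  refine Tendsto.div_const ?_ _
  induction k with
  | zero => simp
  | succ k ih =>
    have h2 : Tendsto (fun n : ℕ => (((n - k : ℕ) : ℝ)) / n) atTop (𝓝 1) := by
      have h3 : Tendsto (fun n : ℕ => 1 - (k : ℝ) / n) atTop (𝓝 (1 - 0)) :=
        tendsto_const_nhds.sub (tendsto_const_div_atTop_nhds_zero_nat (k : ℝ))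
      rw [sub_zero] at h3
      refine h3.congr' ?_
      filter_upwards [eventually_gt_atTop k] with n hn
      rw [Nat.cast_sub hn.le, sub_div, div_self]
      have : 0 < n := by omega
      positivity
    have h3 := h2.mul ih
    rw [one_mul] at h3
    refine h3.congr fun n => ?_
    rw [Nat.descFactorial_succ, pow_succ]; push_cast; ring

/-! ### Canonical products of genus two -/

/-- The Weierstrass primary factor of genus two. -/
noncomputable def primaryFactor (w : ℂ) : ℂ := (1 - w) * Complex.exp (w + w ^ 2 / 2)

lemma continuous_primaryFactor : Continuous primaryFactor := by
  unfold primaryFactor; fun_prop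

lemma norm_primaryFactor_sub_one_le (w : ℂ) :
    ‖primaryFactor w - 1‖ ≤ ‖w‖ ^ 3 * Real.exp (‖w‖ + ‖w‖ ^ 2) := by
  have hd : ∀ x ∈ Metric.closedBall (0 : ℂ) ‖w‖, HasDerivWithinAt primaryFactor
      (-x ^ 2 * Complex.exp (x + x ^ 2 / 2)) (Metric.closedBall (0 : ℂ) ‖w‖) x := by
    intro x _
    have h1 : HasDerivAt (fun x : ℂ => 1 - x) (-1) x := by
      simpa using (hasDerivAt_id x).const_sub 1
    have h2 : HasDerivAt (fun x : ℂ => x + x ^ 2 / 2) (1 + x) x := by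
      refine ((hasDerivAt_id x).add (((hasDerivAt_id x).pow 2).div_const 2)).congr_deriv ?_
      simp
    refine (h1.mul h2.cexp).hasDerivWithinAt.congr_deriv ?_
    ring
  have hb : ∀ x ∈ Metric.closedBall (0 : ℂ) ‖w‖,
      ‖-x ^ 2 * Complex.exp (x + x ^ 2 / 2)‖ ≤ ‖w‖ ^ 2 * Real.exp (‖w‖ + ‖w‖ ^ 2) := by
    intro x hx
    have hx : ‖x‖ ≤ ‖w‖ := by simpa using hx
    rw [norm_mul, norm_neg, norm_pow]
    have h3 : ‖x + x ^ 2 / 2‖ ≤ ‖w‖ + ‖w‖ ^ 2 := by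
      refine (norm_add_le _ _).trans (add_le_add hx ?_)
      rw [norm_div, norm_pow, Complex.norm_ofNat]
      have : ‖x‖ ^ 2 ≤ ‖w‖ ^ 2 := by gcongr
      nlinarith [sq_nonneg ‖x‖]
    have h4 := (Complex.norm_exp_le_exp_norm (x + x ^ 2 / 2)).trans (Real.exp_le_exp.2 h3)
    gcongr
  have := (convex_closedBall (0 : ℂ) ‖w‖).norm_image_sub_le_of_norm_hasDerivWithin_le hd hb
    (x := 0) (y := w) (by simp) (by simp)
  have h0 : primaryFactor 0 = 1 := by simp [primaryFactor]
  rw [h0, sub_zero] at this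
  linarith

/-- The bound used for dominated convergence of the canonical products. -/
lemma norm_primaryFactor_mul_sub_one_le {a D r R : ℝ} (ha : |a| ≤ D * r) (hD : 0 ≤ D) (hr0 : 0 ≤ r)
    (hr : r ≤ 1) {z : ℂ} (hz : ‖z‖ ≤ R) : ‖primaryFactor (a * z) - 1‖ ≤
      (D * R) ^ 3 * Real.exp (D * R + (D * R) ^ 2) * r ^ 3 := by
  have hR : 0 ≤ R := (norm_nonneg z).trans hz
  have h1 : ‖(a : ℂ) * z‖ ≤ D * R * r := by
    rw [norm_mul, Complex.norm_real, Real.norm_eq_abs]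
    calc |a| * ‖z‖ ≤ (D * r) * R := by gcongr
      _ = _ := by ring
  have h2 : ‖(a : ℂ) * z‖ ≤ D * R := h1.trans (mul_le_of_le_one_right (by positivity) hr)
  calc _ ≤ _ := norm_primaryFactor_sub_one_le _
    _ ≤ (D * R * r) ^ 3 * Real.exp (D * R + (D * R) ^ 2) := by gcongr
    _ = _ := by ring

/-- A finite product of linear factors in terms of genus two primary factors: the
convergence-producing exponentials combine into power sums. -/
lemma prod_one_sub_eq (a : ℕ → ℝ) (d : ℕ) (z : ℂ) :
    ∏ j ∈ Finset.range d, (1 - (a j : ℂ) * z) =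
      Complex.exp (-((∑ j ∈ Finset.range d, a j : ℝ) : ℂ) * z -
        ((∑ j ∈ Finset.range d, a j ^ 2 : ℝ) : ℂ) / 2 * z ^ 2) *
      ∏ j ∈ Finset.range d, primaryFactor (a j * z) := by
  simp only [primaryFactor]
  rw [Finset.prod_mul_distrib, ← Complex.exp_sum, mul_left_comm, ← Complex.exp_add]
  have : -((∑ j ∈ Finset.range d, a j : ℝ) : ℂ) * z -
        ((∑ j ∈ Finset.range d, a j ^ 2 : ℝ) : ℂ) / 2 * z ^ 2 +
        ∑ j ∈ Finset.range d, ((a j : ℂ) * z + ((a j : ℂ) * z) ^ 2 / 2) = 0 := by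
    push_cast
    rw [Finset.sum_add_distrib, ← Finset.sum_mul, ← Finset.sum_div]
    simp only [mul_pow]
    rw [← Finset.sum_mul]
    ring
  rw [this, Complex.exp_zero, mul_one]

lemma aeval_prod_one_sub (a : ℕ → ℝ) (d : ℕ) (z : ℂ) :
    aeval z (∏ j ∈ Finset.range d, (1 - C (a j) * X : ℝ[X])) =
      ∏ j ∈ Finset.range d, (1 - (a j : ℂ) * z) := by
  rw [map_prod]
  refine Finset.prod_congr rfl fun j _ => ?_
  simp

/-- Cauchy's estimate for the coefficients of a polynomial. -/
lemma abs_coeff_le (P : ℝ[X]) {R M : ℝ} (hR : 0 < R) (hM : ∀ z : ℂ, ‖z‖ = R → ‖aeval z P‖ ≤ M)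
    (k : ℕ) : |P.coeff k| ≤ M / R ^ k := by
  set Q := P.map (algebraMap ℝ ℂ) with hQ
  have h := Complex.norm_iteratedDeriv_le_of_forall_mem_sphere_norm_le (c := 0) (C := M)
    (f := fun z => Q.eval z) k hR (Q.differentiable.diffContOnCl) (fun z hz => by
      rw [hQ, eval_map_algebraMap]; exact hM z (by simpa using hz))
  rw [iteratedDeriv_eval_zero, norm_mul, hQ, coeff_map, mul_div_assoc] at h
  have hk : (0 : ℝ) < k.factorial := by positivity
  simp only [Complex.norm_natCast, Complex.coe_algebraMap, Complex.norm_real,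
    Real.norm_eq_abs] at h
  exact le_of_mul_le_mul_left h hk

section Core

variable {a : ℕ → ℕ → ℝ} {d : ℕ → ℕ} {α : ℕ → ℝ} {t : ℕ → ℝ} {A S D : ℝ} {r : ℕ → ℝ}

/-- Convergence of products of linear factors: the power sums converge separately to `A` and `S`,
and the primary factors by dominated convergence. In general `S` is not `∑ α j ^ 2`. -/
lemma tendsto_canonical (had : ∀ n j, d n ≤ j → a n j = 0) (hD : 0 ≤ D) (hr0 : ∀ j, 0 ≤ r j)
    (hr1 : ∀ j, r j ≤ 1) (hr : Summable fun j => r j ^ 3) (hab : ∀ n j, |a n j| ≤ D * r j)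
    (hα : ∀ j, Tendsto (fun n => a n j) atTop (𝓝 (α j)))
    (hA : Tendsto (fun n => ∑ j ∈ Finset.range (d n), a n j) atTop (𝓝 A))
    (hS : Tendsto (fun n => ∑ j ∈ Finset.range (d n), a n j ^ 2) atTop (𝓝 S)) (z : ℂ) :
    Tendsto (fun n => ∏ j ∈ Finset.range (d n), (1 - (a n j : ℂ) * z)) atTop
      (𝓝 (Complex.exp (-(A : ℂ) * z - (S : ℂ) / 2 * z ^ 2) *
        ∏' j, (1 + (primaryFactor (α j * z) - 1)))) := by
  have h1 : ∀ n, ∏ j ∈ Finset.range (d n), (1 - (a n j : ℂ) * z) =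
      Complex.exp (-((∑ j ∈ Finset.range (d n), a n j : ℝ) : ℂ) * z -
        ((∑ j ∈ Finset.range (d n), a n j ^ 2 : ℝ) : ℂ) / 2 * z ^ 2) *
      ∏' j, (1 + (primaryFactor (a n j * z) - 1)) := by
    intro n
    rw [prod_one_sub_eq, tprod_eq_prod (s := Finset.range (d n))]
    · simp
    · intro j hj
      rw [had n j (by simpa using hj)]
      simp [primaryFactor]
  simp only [h1]
  refine Tendsto.mul ?_ ?_
  · refine (Complex.continuous_exp.tendsto _).comp ?_
    have hA' : Tendsto (fun n => ((∑ j ∈ Finset.range (d n), a n j : ℝ) : ℂ)) atTop (𝓝 (A : ℂ)) :=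
      (Complex.continuous_ofReal.tendsto A).comp hA
    have hS' : Tendsto (fun n => ((∑ j ∈ Finset.range (d n), a n j ^ 2 : ℝ) : ℂ)) atTop
      (𝓝 (S : ℂ)) := (Complex.continuous_ofReal.tendsto S).comp hS
    exact (hA'.neg.mul_const z).sub ((hS'.div_const 2).mul_const _)
  · refine tendsto_tprod_one_add_of_dominated_convergence
      (bound := fun j => (D * ‖z‖) ^ 3 * Real.exp (D * ‖z‖ + (D * ‖z‖) ^ 2) * r j ^ 3)
      (hr.mul_left _) (fun j => ?_) (Eventually.of_forall fun n j => ?_)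
    · refine Tendsto.sub_const ?_ 1
      refine (continuous_primaryFactor.tendsto _).comp ?_
      exact ((Complex.continuous_ofReal.tendsto _).comp (hα j)).mul_const z
    · exact norm_primaryFactor_mul_sub_one_le (hab n j) hD (hr0 j) (hr1 j) le_rfl

lemma exists_uniform_bound (hD : 0 ≤ D) (hr0 : ∀ j, 0 ≤ r j)
    (hr1 : ∀ j, r j ≤ 1) (hr : Summable fun j => r j ^ 3) (hab : ∀ n j, |a n j| ≤ D * r j)
    (hA : Tendsto (fun n => ∑ j ∈ Finset.range (d n), a n j) atTop (𝓝 A))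
    (hS : Tendsto (fun n => ∑ j ∈ Finset.range (d n), a n j ^ 2) atTop (𝓝 S)) (R : ℝ) :
    ∃ M, ∀ n (z : ℂ), ‖z‖ = R → ‖∏ j ∈ Finset.range (d n), (1 - (a n j : ℂ) * z)‖ ≤ M := by
  obtain ⟨B₁, hB₁⟩ := hA.norm.bddAbove_range
  obtain ⟨B₂, hB₂⟩ := hS.norm.bddAbove_range
  set K := (D * R) ^ 3 * Real.exp (D * R + (D * R) ^ 2) with hK
  refine ⟨Real.exp (B₁ * R + B₂ / 2 * R ^ 2) * Real.exp (K * ∑' j, r j ^ 3), fun n z hz => ?_⟩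
  have hR : 0 ≤ R := hz ▸ norm_nonneg z
  have hK0 : 0 ≤ K := by positivity
  rw [prod_one_sub_eq, norm_mul]
  have e1 : ‖-((∑ j ∈ Finset.range (d n), a n j : ℝ) : ℂ) * z -
        ((∑ j ∈ Finset.range (d n), a n j ^ 2 : ℝ) : ℂ) / 2 * z ^ 2‖ ≤ B₁ * R + B₂ / 2 * R ^ 2 := by
    refine (norm_sub_le _ _).trans ?_
    rw [norm_mul, norm_mul, norm_neg, norm_div, Complex.norm_real, Complex.norm_real, norm_pow, hz,
      Complex.norm_ofNat]
    have h1 := hB₁ ⟨n, rfl⟩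
    have h2 := hB₂ ⟨n, rfl⟩
    dsimp only at h1 h2
    gcongr
  have e2 : ‖∏ j ∈ Finset.range (d n), primaryFactor (a n j * z)‖ ≤
      Real.exp (K * ∑' j, r j ^ 3) := by
    rw [norm_prod]
    calc _ ≤ ∏ j ∈ Finset.range (d n), Real.exp (K * r j ^ 3) := by
          refine Finset.prod_le_prod (fun _ _ => norm_nonneg _) fun j _ => ?_
          have h1 := norm_primaryFactor_mul_sub_one_le (hab n j) hD (hr0 j) (hr1 j) hz.le
          have h2 : ‖primaryFactor (a n j * z)‖ ≤ ‖primaryFactor (a n j * z) - 1‖ + 1 := by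
            simpa using norm_add_le (primaryFactor (a n j * z) - 1) 1
          linarith [Real.add_one_le_exp (K * r j ^ 3)]
      _ = Real.exp (K * ∑ j ∈ Finset.range (d n), r j ^ 3) := by
          rw [← Real.exp_sum, Finset.mul_sum]
      _ ≤ _ := by
          gcongr
          exact hr.sum_le_tsum _ fun j _ => pow_nonneg (hr0 j) 3
  have e3 := (Complex.norm_exp_le_exp_norm _).trans (Real.exp_le_exp.2 e1)
  gcongr

/-- The limits `t k` of the coefficients are the Taylor coefficients of the limit function. -/
lemma hasSum_canonical (had : ∀ n j, d n ≤ j → a n j = 0) (hD : 0 ≤ D) (hr0 : ∀ j, 0 ≤ r j)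
    (hr1 : ∀ j, r j ≤ 1) (hr : Summable fun j => r j ^ 3) (hab : ∀ n j, |a n j| ≤ D * r j)
    (hα : ∀ j, Tendsto (fun n => a n j) atTop (𝓝 (α j)))
    (hA : Tendsto (fun n => ∑ j ∈ Finset.range (d n), a n j) atTop (𝓝 A))
    (hS : Tendsto (fun n => ∑ j ∈ Finset.range (d n), a n j ^ 2) atTop (𝓝 S))
    (ht : ∀ k, Tendsto (fun n => (∏ j ∈ Finset.range (d n), (1 - C (a n j) * X : ℝ[X])).coeff k)
      atTop (𝓝 (t k))) (z : ℂ) :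
    HasSum (fun k => (t k : ℂ) * z ^ k) (Complex.exp (-(A : ℂ) * z - (S : ℂ) / 2 * z ^ 2) *
        ∏' j, (1 + (primaryFactor (α j * z) - 1))) := by
  set R : ℝ := 2 * (‖z‖ + 1) with hR
  have hR0 : 0 < R := by positivity
  obtain ⟨M, hM⟩ := exists_uniform_bound hD hr0 hr1 hr hab hA hS R
  set P : ℕ → ℝ[X] := fun n => ∏ j ∈ Finset.range (d n), (1 - C (a n j) * X) with hP
  have hc : ∀ n k, |(P n).coeff k| ≤ M / R ^ k := fun n k =>
    abs_coeff_le _ hR0 (fun w hw => by rw [hP, aeval_prod_one_sub]; exact hM n w hw) k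
  have hM0 : 0 ≤ M := by
    have := (abs_nonneg _).trans (hc 0 0)
    simpa using this
  have hbd : ∀ (x : ℝ) (k : ℕ), |x| ≤ M / R ^ k → ‖(x : ℂ) * z ^ k‖ ≤ M * (1 / 2) ^ k := by
    intro x k hx
    rw [norm_mul, norm_pow, Complex.norm_real, Real.norm_eq_abs]
    calc |x| * ‖z‖ ^ k ≤ M / R ^ k * (R / 2) ^ k := by
          gcongr
          rw [hR]; linarith [norm_nonneg z]
      _ = M * (1 / 2) ^ k := by
          rw [div_pow, div_pow, one_pow]
          field_simp
  have hct : ∀ k, |t k| ≤ M / R ^ k := fun k =>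
    le_of_tendsto (ht k).abs (Eventually.of_forall fun n => hc n k)
  have hgeo : Summable fun k : ℕ => M * (1 / 2 : ℝ) ^ k := summable_geometric_two.mul_left M
  have hsum : Summable fun k => (t k : ℂ) * z ^ k :=
    Summable.of_norm_bounded hgeo fun k => hbd _ _ (hct k)
  have h1 : Tendsto (fun n => ∑' k, ((P n).coeff k : ℂ) * z ^ k) atTop
      (𝓝 (∑' k, (t k : ℂ) * z ^ k)) := by
    refine tendsto_tsum_of_dominated_convergence hgeo (fun k => ?_)
      (Eventually.of_forall fun n k => hbd _ _ (hc n k))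
    exact ((Complex.continuous_ofReal.tendsto _).comp (ht k)).mul_const _
  have h2 : ∀ n, ∑' k, ((P n).coeff k : ℂ) * z ^ k =
      ∏ j ∈ Finset.range (d n), (1 - (a n j : ℂ) * z) := by
    intro n
    rw [← aeval_prod_one_sub, aeval_eq_sum_range, tsum_eq_sum (s := Finset.range ((P n).natDegree + 1))]
    · simp [hP]
    · intro k hk
      rw [coeff_eq_zero_of_natDegree_lt (by simpa using hk)]; simp
  simp only [h2] at h1
  have := tendsto_nhds_unique h1 (tendsto_canonical had hD hr0 hr1 hr hab hα hA hS z)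
  rw [← this]
  exact hsum.hasSum

end Core

/-! ### Limits in LP and LPI form -/

lemma tendstoLocallyUniformly_prod {f : ℕ → ℂ → ℂ} (hf : ∀ j, Continuous (f j))
    (hb : ∀ R : ℝ, ∃ u : ℕ → ℝ, Summable u ∧ ∀ j z, ‖z‖ ≤ R → ‖f j z‖ ≤ u j) :
    TendstoLocallyUniformly (fun N z => ∏ j ∈ Finset.range N, (1 + f j z))
      (fun z => ∏' j, (1 + f j z)) atTop := by
  rw [tendstoLocallyUniformly_iff_forall_isCompact]
  intro K hK
  obtain ⟨R, hR⟩ := hK.isBounded.subset_ball 0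
  obtain ⟨u, hu, hfu⟩ := hb R
  have h := (Summable.hasProdLocallyUniformlyOn_nat_one_add (K := Metric.ball (0 : ℂ) R)
    Metric.isOpen_ball hu (f := f) (Eventually.of_forall fun j z hz =>
      hfu j z (by simpa using (Metric.mem_ball.1 hz).le))
    (fun j => (hf j).continuousOn)).tendstoLocallyUniformlyOn_finsetRange
  exact (tendstoLocallyUniformlyOn_iff_forall_isCompact Metric.isOpen_ball).1 h K hR hK

/-- Continuous dependence on a parameter is locally uniform in the variable. -/
lemma tendstoLocallyUniformly_of_continuous {g : ℝ × ℂ → ℂ} (hg : Continuous g) {s : ℕ → ℝ} {s₀ : ℝ}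
    (hs : Tendsto s atTop (𝓝 s₀)) :
    TendstoLocallyUniformly (fun N z => g (s N, z)) (fun z => g (s₀, z)) atTop := by
  have h := (ContinuousMap.curry ⟨g, hg⟩).continuous.tendsto s₀ |>.comp hs
  rw [ContinuousMap.tendsto_iff_tendstoLocallyUniformly] at h
  exact h

section Limit

variable {α : ℕ → ℝ} {r : ℕ → ℝ} {D : ℝ}

lemma tendstoLocallyUniformly_prod_primaryFactor (hD : 0 ≤ D) (hr0 : ∀ j, 0 ≤ r j)
    (hr1 : ∀ j, r j ≤ 1) (hr : Summable fun j => r j ^ 3) (hα : ∀ j, |α j| ≤ D * r j) :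
    TendstoLocallyUniformly (fun N z => ∏ j ∈ Finset.range N, (1 + (primaryFactor (α j * z) - 1)))
      (fun z => ∏' j, (1 + (primaryFactor (α j * z) - 1))) atTop := by
  refine tendstoLocallyUniformly_prod (fun j => ?_) fun R => ⟨_, hr.mul_left _, fun j z hz =>
    norm_primaryFactor_mul_sub_one_le (hα j) hD (hr0 j) (hr1 j) hz⟩
  exact (continuous_primaryFactor.comp (continuous_const.mul continuous_id)).sub continuous_const

lemma continuous_prod_primaryFactor (hD : 0 ≤ D) (hr0 : ∀ j, 0 ≤ r j)
    (hr1 : ∀ j, r j ≤ 1) (hr : Summable fun j => r j ^ 3) (hα : ∀ j, |α j| ≤ D * r j) :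
    Continuous (fun z : ℂ => ∏' j, (1 + (primaryFactor (α j * z) - 1))) := by
  refine (tendstoLocallyUniformly_prod_primaryFactor hD hr0 hr1 hr hα).continuous
    (Frequently.of_forall fun N => continuous_finsetProd _ fun j _ => ?_)
  exact continuous_const.add
    ((continuous_primaryFactor.comp (continuous_const.mul continuous_id)).sub continuous_const)

/-- The excess `S - ∑ α j ^ 2` becomes the parameter `σ ^ 2` of the Gaussian factor. -/
lemma isLPForm_canonical (hD : 0 ≤ D) (hr0 : ∀ j, 0 ≤ r j)
    (hr1 : ∀ j, r j ≤ 1) (hr : Summable fun j => r j ^ 3) (hα : ∀ j, |α j| ≤ D * r j)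
    (hα2 : Summable fun j => α j ^ 2) {S : ℝ} (hS : ∑' j, α j ^ 2 ≤ S) {c : ℝ} (hc : c ≠ 0) (m : ℕ)
    (A : ℝ) : IsLPForm fun z => (c : ℂ) * z ^ m *
      (Complex.exp (-(A : ℂ) * z - (S : ℂ) / 2 * z ^ 2) *
        ∏' j, (1 + (primaryFactor (α j * z) - 1))) := by
  refine ⟨c, m, A, Real.sqrt (S - ∑' j, α j ^ 2), α, hc, hα2, ?_⟩
  have hσ : (Real.sqrt (S - ∑' j, α j ^ 2)) ^ 2 = S - ∑' j, α j ^ 2 := Real.sq_sqrt (by linarith)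
  have h1 := tendstoLocallyUniformly_of_continuous
    (g := fun q => (c : ℂ) * q.2 ^ m * Complex.exp (-(A : ℂ) * q.2 - (q.1 : ℂ) / 2 * q.2 ^ 2))
    (by fun_prop) ((hα2.hasSum.tendsto_sum_nat).const_add (S - ∑' j, α j ^ 2))
  rw [sub_add_cancel] at h1
  have h2 := h1.mul₀ (tendstoLocallyUniformly_prod_primaryFactor hD hr0 hr1 hr hα)
    (by fun_prop) (continuous_prod_primaryFactor hD hr0 hr1 hr hα)
  refine (h2.congr fun N z => ?_).congr_right fun z => ?_
  · have h3 : ((Real.sqrt (S - ∑' j, α j ^ 2) : ℝ) : ℂ) ^ 2 = ((S - ∑' j, α j ^ 2 : ℝ) : ℂ) := by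
      rw [← Complex.ofReal_pow, hσ]
    have h4 : Complex.exp (-(A : ℂ) * z -
        ((S - ∑' j, α j ^ 2 + ∑ j ∈ Finset.range N, α j ^ 2 : ℝ) : ℂ) / 2 * z ^ 2) *
        Complex.exp (∑ j ∈ Finset.range N, ((α j : ℂ) * z + ((α j : ℂ) * z) ^ 2 / 2)) =
        Complex.exp (-(A : ℂ) * z - ((S - ∑' j, α j ^ 2 : ℝ) : ℂ) / 2 * z ^ 2) *
        Complex.exp (∑ j ∈ Finset.range N, (α j : ℂ) * z) := by
      rw [← Complex.exp_add, ← Complex.exp_add, Finset.sum_add_distrib, ← Finset.sum_div]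
      congr 1
      simp only [mul_pow]
      rw [← Finset.sum_mul _ _ (z ^ 2), Complex.ofReal_add]
      push_cast
      ring
    simp only [Pi.mul_apply, add_sub_cancel, primaryFactor]
    rw [Finset.prod_mul_distrib, Finset.prod_mul_distrib, ← Complex.exp_sum, ← Complex.exp_sum, h3]
    linear_combination ((c : ℂ) * z ^ m * ∏ j ∈ Finset.range N, (1 - (α j : ℂ) * z)) * h4
  · simp only [Pi.mul_apply]; ring

/-- When `S = ∑ α j ^ 2` and `∑ α j` converges, the quadratic exponential cancels and the excess
`A - ∑ α j` becomes the exponential type `b`. -/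
lemma isLPIForm_canonical (hD : 0 ≤ D) (hr0 : ∀ j, 0 ≤ r j)
    (hr1 : ∀ j, r j ≤ 1) (hr : Summable fun j => r j ^ 3) (hα : ∀ j, |α j| ≤ D * r j)
    (hα0 : ∀ j, 0 ≤ α j) (hα1 : Summable α) (hα2 : Summable fun j => α j ^ 2)
    {c : ℝ} (hc : c ≠ 0) (m : ℕ) {A : ℝ} (hA : ∑' j, α j ≤ A) : IsLPIForm fun z =>
      (c : ℂ) * z ^ m * (Complex.exp (-(A : ℂ) * z - ((∑' j, α j ^ 2 : ℝ) : ℂ) / 2 * z ^ 2) *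
        ∏' j, (1 + (primaryFactor (α j * z) - 1))) := by
  refine ⟨c, m, A - ∑' j, α j, α, hc, sub_nonneg.2 hA, hα0, hα1, ?_⟩
  have h1 := tendstoLocallyUniformly_of_continuous
    (g := fun q => (c : ℂ) * q.2 ^ m * Complex.exp (-((A - ∑' j, α j : ℝ) : ℂ) * q.2))
    (by fun_prop) (tendsto_const_nhds (x := (0 : ℝ)))
  have h2 : TendstoLocallyUniformly (fun N z => ∏ j ∈ Finset.range N, (1 + (-((α j : ℂ) * z))))
      (fun z => ∏' j, (1 + (-((α j : ℂ) * z)))) atTop := by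
    refine tendstoLocallyUniformly_prod (fun j => by fun_prop) fun R =>
      ⟨fun j => α j * R, hα1.mul_right R, fun j z hz => ?_⟩
    rw [norm_neg, norm_mul, Complex.norm_real, Real.norm_of_nonneg (hα0 j)]
    exact mul_le_mul_of_nonneg_left hz (hα0 j)
  have h2c : Continuous (fun z : ℂ => ∏' j, (1 + (-((α j : ℂ) * z)))) :=
    h2.continuous (Frequently.of_forall fun N => by fun_prop)
  -- the convergence-producing exponentials of the genus two product can be split off
  have h3 : ∀ z : ℂ, ∏' j, (1 + (-((α j : ℂ) * z))) =
      Complex.exp (-((∑' j, α j : ℝ) : ℂ) * z - ((∑' j, α j ^ 2 : ℝ) : ℂ) / 2 * z ^ 2) *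
        ∏' j, (1 + (primaryFactor (α j * z) - 1)) := by
    intro z
    have e1 : Tendsto (fun N => ∏ j ∈ Finset.range N, (1 + (-((α j : ℂ) * z)))) atTop
        (𝓝 (∏' j, (1 + (-((α j : ℂ) * z))))) :=
      (tendstoLocallyUniformlyOn_univ.2 h2).tendsto_at (Set.mem_univ z)
    have e2 : Tendsto (fun N => ∏ j ∈ Finset.range N, (1 + (primaryFactor (α j * z) - 1))) atTop
        (𝓝 (∏' j, (1 + (primaryFactor (α j * z) - 1)))) :=
      (tendstoLocallyUniformlyOn_univ.2
        (tendstoLocallyUniformly_prod_primaryFactor hD hr0 hr1 hr hα)).tendsto_at (Set.mem_univ z)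
    have e3 : Continuous fun q : ℝ × ℝ =>
        Complex.exp (-(q.1 : ℂ) * z - (q.2 : ℂ) / 2 * z ^ 2) := by fun_prop
    have e4 := (e3.tendsto (∑' j, α j, ∑' j, α j ^ 2)).comp
      (hα1.hasSum.tendsto_sum_nat.prodMk_nhds hα2.hasSum.tendsto_sum_nat)
    refine tendsto_nhds_unique e1 ((e4.mul e2).congr fun N => ?_)
    simp only [Function.comp_apply, add_sub_cancel, ← sub_eq_add_neg]
    rw [prod_one_sub_eq]
  refine ((h1.mul₀ h2 (by fun_prop) h2c).congr fun N z => ?_).congr_right fun z => ?_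
  · simp [sub_eq_add_neg]
  · simp only [Pi.mul_apply]
    rw [h3, ← mul_assoc, mul_assoc ((c : ℂ) * z ^ m), ← Complex.exp_add, ← mul_assoc]
    congr 3
    push_cast
    ring

end Limit

lemma summable_inv_sqrt_pow_three : Summable fun j : ℕ => (1 / Real.sqrt ((j : ℝ) + 1)) ^ 3 := by
  have h := (summable_nat_add_iff 1).2 ((Real.summable_nat_rpow_inv (p := 3 / 2)).2 (by norm_num))
  refine h.congr fun j => ?_
  rw [one_div, inv_pow, Real.sqrt_eq_rpow, ← Real.rpow_natCast, ← Real.rpow_mul (by positivity)]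
  norm_num

/-- Terms of a decreasing sequence are bounded by the averages of its partial sums. -/
lemma mul_le_sum_of_antitone {f : ℕ → ℝ} {d : ℕ} (hf : Antitone f) (h0 : ∀ j, 0 ≤ f j)
    (hd : ∀ j, d ≤ j → f j = 0) (j : ℕ) :
    f j * ((j : ℝ) + 1) ≤ ∑ i ∈ Finset.range d, f i := by
  by_cases hj : j < d
  · calc f j * ((j : ℝ) + 1) = ∑ i ∈ Finset.range (j + 1), f j := by
          simp [mul_comm]
      _ ≤ ∑ i ∈ Finset.range (j + 1), f i :=
          Finset.sum_le_sum fun i hi => hf (Nat.lt_succ_iff.1 (Finset.mem_range.1 hi))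
      _ ≤ _ := Finset.sum_le_sum_of_subset_of_nonneg
          (Finset.range_subset_range.2 hj) fun i _ _ => h0 i
  · rw [hd j (not_lt.1 hj), zero_mul]
    exact Finset.sum_nonneg fun i _ => h0 i

lemma sum_range_le_of_eventually_zero {f : ℕ → ℝ} {d : ℕ} (h0 : ∀ j, 0 ≤ f j)
    (hd : ∀ j, d ≤ j → f j = 0) (N : ℕ) :
    ∑ j ∈ Finset.range N, f j ≤ ∑ j ∈ Finset.range d, f j := by
  rcases le_total N d with h | h
  · exact Finset.sum_le_sum_of_subset_of_nonneg (Finset.range_subset_range.2 h) fun i _ _ => h0 i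
  · refine (Finset.sum_subset (Finset.range_subset_range.2 h) fun j _ hj => hd j ?_).ge
    simpa using hj

/-! ### Necessity for real-rooted Jensen polynomials -/

/-- If all Jensen polynomials of `τ` are real-rooted, then `∑ τ k z ^ k / k!` is entire of LP form,
and of LPI form as soon as the signs of `τ` alternate. -/
theorem lp_of_realRooted_jensen {τ : ℕ → ℝ} (hτ : ∃ k, τ k ≠ 0)
    (h : ∀ n, RealRooted (jensen τ n)) :
    ∃ Φ : ℂ → ℂ,
      (∀ z : ℂ, HasSum (fun k : ℕ => (τ k : ℂ) * z ^ k / (Nat.factorial k : ℂ)) (Φ z)) ∧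
      IsLPForm Φ ∧ ((∃ δ : ℝ, δ ≠ 0 ∧ ∀ k, 0 ≤ δ * (-1) ^ k * τ k) → IsLPIForm Φ) := by
  classical
  obtain ⟨m, hm, hlt⟩ : ∃ m, τ m ≠ 0 ∧ ∀ k < m, τ k = 0 :=
    ⟨Nat.find hτ, Nat.find_spec hτ, fun k hk => not_not.1 (Nat.find_min hτ hk)⟩
  -- `n + m + 1` rather than `n` keeps the degree positive and at least `m`
  choose a d had hanti hcoeff hsign using fun n : ℕ =>
    exists_factors_jensen hm hlt (n := n + m + 1) (by omega) (by omega) (h _)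
  set t : ℕ → ℝ := fun k =>
    (1 / (m + k).factorial * τ (m + k)) / (1 / m.factorial * τ m) with ht_def
  have hmfac : (1 / m.factorial * τ m : ℝ) ≠ 0 := mul_ne_zero (by positivity) hm
  have ht : ∀ k, Tendsto (fun n => (∏ j ∈ Finset.range (d n), (1 - C (a n j) * X : ℝ[X])).coeff k)
      atTop (𝓝 (t k)) := by
    intro k
    simp only [hcoeff]
    have key : ∀ i, Tendsto (fun n : ℕ => ((n + m + 1).choose i : ℝ) *
        (1 / ((n + m + 1 : ℕ) : ℝ)) ^ i) atTop (𝓝 (1 / i.factorial)) := fun i =>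
      (tendsto_choose_div_pow i).comp (tendsto_add_atTop_nat (m + 1))
    exact ((key (m + k)).mul_const _).div ((key m).mul_const _) hmfac
  -- sums and sums of squares of the reciprocal zeros converge, by Newton's identities
  have hA : Tendsto (fun n => ∑ j ∈ Finset.range (d n), a n j) atTop (𝓝 (-t 1)) := by
    refine (ht 1).neg.congr fun n => ?_
    rw [(coeff_prod_one_sub _ _).2.1, neg_neg]
  have hS : Tendsto (fun n => ∑ j ∈ Finset.range (d n), a n j ^ 2) atTop
      (𝓝 (t 1 ^ 2 - 2 * t 2)) := by
    refine (((ht 1).pow 2).sub ((ht 2).const_mul 2)).congr fun n => ?_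
    rw [(coeff_prod_one_sub _ _).2.2]
  set A : ℝ := -t 1
  set S : ℝ := t 1 ^ 2 - 2 * t 2
  obtain ⟨B, hB⟩ := hS.bddAbove_range
  have hB' : ∀ n, ∑ j ∈ Finset.range (d n), a n j ^ 2 ≤ B := fun n => hB ⟨n, rfl⟩
  have hB0 : 0 ≤ B := (Finset.sum_nonneg fun i _ => sq_nonneg (a 0 i)).trans (hB' 0)
  have had2 : ∀ n j, d n ≤ j → a n j ^ 2 = 0 := fun n j hj => by rw [had n j hj]; simp
  set r : ℕ → ℝ := fun j => 1 / Real.sqrt ((j : ℝ) + 1) with hr_def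
  have hr0 : ∀ j, 0 ≤ r j := fun j => by positivity
  have hr1 : ∀ j, r j ≤ 1 := by
    intro j
    have : 1 ≤ Real.sqrt ((j : ℝ) + 1) := Real.one_le_sqrt.2 (by linarith [j.cast_nonneg (α := ℝ)])
    rw [hr_def]
    exact (div_le_one (by positivity)).2 this
  have hr : Summable fun j => r j ^ 3 := summable_inv_sqrt_pow_three
  have hD : 0 ≤ Real.sqrt B := Real.sqrt_nonneg B
  have hab : ∀ n j, |a n j| ≤ Real.sqrt B * r j := by
    intro n j
    apply abs_le_of_sq_le_sq' _ (mul_nonneg hD (hr0 j)) |> abs_le.2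
    have h1 : a n j ^ 2 * ((j : ℝ) + 1) ≤ B := by
      refine le_trans (mul_le_sum_of_antitone (f := fun j => a n j ^ 2) ?_
        (fun j => sq_nonneg _) (had2 n) j) (hB' n)
      intro i k hik
      exact sq_le_sq.2 (hanti n hik)
    have h2 : (0 : ℝ) < (j : ℝ) + 1 := by positivity
    rw [mul_pow, Real.sq_sqrt hB0, hr_def]
    simp only
    rw [div_pow, Real.sq_sqrt h2.le, one_pow, mul_one_div]
    exact (le_div_iff₀ h2).2 h1
  -- Tychonoff: along a subsequence all reciprocal zeros converge
  obtain ⟨α, -, φ, hφ, hαφ⟩ := (isCompact_univ_pi fun j : ℕ =>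
    isCompact_Icc (a := -(Real.sqrt B * r j)) (b := Real.sqrt B * r j)).tendsto_subseq
    (x := a) fun n j _ => abs_le.1 (hab n j)
  have hα : ∀ j, Tendsto (fun n => a (φ n) j) atTop (𝓝 (α j)) := fun j =>
    (tendsto_pi_nhds.1 hαφ) j
  have hφt := hφ.tendsto_atTop
  have hαb : ∀ j, |α j| ≤ Real.sqrt B * r j := fun j =>
    le_of_tendsto (hα j).abs (Eventually.of_forall fun n => hab _ _)
  have hF := hasSum_canonical (a := fun n => a (φ n)) (d := fun n => d (φ n)) (fun n => had (φ n))
    hD hr0 hr1 hr (fun n => hab (φ n)) hα (hA.comp hφt) (hS.comp hφt) fun k => (ht k).comp hφt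
  -- Fatou's lemma for the sum of the squares
  have hpart : ∀ N, ∑ j ∈ Finset.range N, α j ^ 2 ≤ S := fun N =>
    le_of_tendsto_of_tendsto' (tendsto_finsetSum _ fun j _ => (hα j).pow 2) (hS.comp hφt)
      fun n => sum_range_le_of_eventually_zero (fun j => sq_nonneg _) (had2 _) N
  have hα2 : Summable fun j => α j ^ 2 := summable_of_sum_range_le (fun j => sq_nonneg _) hpart
  have hαS : ∑' j, α j ^ 2 ≤ S := Real.tsum_le_of_sum_range_le (fun j => sq_nonneg _) hpart
  set c : ℝ := 1 / m.factorial * τ m with hc_def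
  refine ⟨fun z => (c : ℂ) * z ^ m * (Complex.exp (-(A : ℂ) * z - (S : ℂ) / 2 * z ^ 2) *
        ∏' j, (1 + (primaryFactor (α j * z) - 1))), fun z => ?_,
    isLPForm_canonical hD hr0 hr1 hr hαb hα2 hαS hmfac m A, ?_⟩
  · have h1 := (hF z).mul_left ((c : ℂ) * z ^ m)
    have h2 : ∑ i ∈ Finset.range m, (τ i : ℂ) * z ^ i / (Nat.factorial i : ℂ) = 0 :=
      Finset.sum_eq_zero fun i hi => by rw [hlt i (Finset.mem_range.1 hi)]; simp
    have h3 := (hasSum_nat_add_iff (f := fun k : ℕ => (τ k : ℂ) * z ^ k / (Nat.factorial k : ℂ)) m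
      (g := (c : ℂ) * z ^ m * (Complex.exp (-(A : ℂ) * z - (S : ℂ) / 2 * z ^ 2) *
        ∏' j, (1 + (primaryFactor (α j * z) - 1))))).1 (h1.congr_fun fun k => ?_)
    · rwa [h2, add_zero] at h3
    · have h4 : (c : ℂ) * (t k : ℂ) = (τ (m + k) : ℂ) / ((m + k).factorial : ℂ) := by
        rw [← Complex.ofReal_mul, ht_def]
        simp only
        rw [mul_div_cancel₀ _ hmfac]
        push_cast
        ring
      rw [add_comm k m, pow_add]
      linear_combination (-z ^ m * z ^ k) * h4
  · intro hδ
    have ha0 : ∀ n j, 0 ≤ a n j := fun n => hsign n hδ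
    have hα0 : ∀ j, 0 ≤ α j := fun j => ge_of_tendsto' (hα j) fun n => ha0 _ _
    have hpart1 : ∀ N, ∑ j ∈ Finset.range N, α j ≤ A := fun N =>
      le_of_tendsto_of_tendsto' (tendsto_finsetSum _ fun j _ => hα j) (hA.comp hφt)
        fun n => sum_range_le_of_eventually_zero (fun j => ha0 _ _) (had _) N
    have hα1 : Summable α := summable_of_sum_range_le hα0 hpart1
    obtain ⟨B₁, hB₁⟩ := hA.bddAbove_range
    have hb1 : ∀ n j, a n j ≤ B₁ * (1 / ((j : ℝ) + 1)) := by
      intro n j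
      have h1 : a n j * ((j : ℝ) + 1) ≤ B₁ := by
        refine le_trans (mul_le_sum_of_antitone (f := a n) ?_ (ha0 n) (had n) j) (hB₁ ⟨n, rfl⟩)
        intro i k hik
        simpa only [abs_of_nonneg (ha0 _ _)] using hanti n hik
      have h2 : (0 : ℝ) < (j : ℝ) + 1 := by positivity
      rw [mul_one_div]
      exact (le_div_iff₀ h2).2 h1
    -- for nonnegative reciprocal zeros there is no loss of mass in the sum of squares
    have hSeq : S = ∑' j, α j ^ 2 := by
      have hs : Summable fun j : ℕ => (B₁ * (1 / ((j : ℝ) + 1))) ^ 2 := by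
        have h1 := (summable_nat_add_iff 1).2
          ((Real.summable_nat_pow_inv (p := 2)).2 one_lt_two)
        refine (h1.mul_left (B₁ ^ 2)).congr fun j => ?_
        push_cast
        rw [mul_pow, one_div, inv_pow]
      have h1 : Tendsto (fun n => ∑' j, a (φ n) j ^ 2) atTop (𝓝 (∑' j, α j ^ 2)) := by
        refine tendsto_tsum_of_dominated_convergence hs (fun j => (hα j).pow 2)
          (Eventually.of_forall fun n j => ?_)
        rw [Real.norm_of_nonneg (sq_nonneg _)]
        exact pow_le_pow_left₀ (ha0 _ _) (hb1 _ _) 2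
      refine tendsto_nhds_unique (hS.comp hφt) (h1.congr fun n => ?_)
      exact tsum_eq_sum fun j hj => had2 _ j (by simpa using hj)
    have h1 := isLPIForm_canonical hD hr0 hr1 hr hαb hα0 hα1 hα2 hmfac m
      (Real.tsum_le_of_sum_range_le hα0 hpart1)
    rw [hSeq]
    exact h1

/-! ### Sign patterns and the Pólya–Schur theorem -/

lemma RealRooted.comp_neg_X {p : ℝ[X]} (h : RealRooted p) : RealRooted (p.comp (-X)) := by
  rcases h with rfl | h
  · left; simp
  · right
    intro z hz
    have := h (-z) (by simpa [aeval_comp] using hz)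
    simpa using this

lemma jensen_comp_neg_X (τ : ℕ → ℝ) (n : ℕ) :
    (jensen τ n).comp (-X) = jensen (fun k => (-1) ^ k * τ k) n := by
  ext k
  rw [show (-X : ℝ[X]) = C (-1) * X by simp, comp_C_mul_X_coeff, coeff_jensen, coeff_jensen]
  ring

lemma jensen_one (n : ℕ) : jensen (fun _ => 1) n = (1 + X) ^ n := by
  ext k
  rw [coeff_jensen, coeff_one_add_X_pow, mul_one]

lemma aeval_eq_zero_of_mem_roots {p : ℝ[X]} {z : ℂ}
    (hz : z ∈ (p.map (algebraMap ℝ ℂ)).roots) : aeval z p = 0 := by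
  have := (mem_roots'.1 hz).2
  rwa [IsRoot.def, eval_map_algebraMap] at this

section Diagonal

variable {T : ℝ[X] →ₗ[ℝ] ℝ[X]} {τ : ℕ → ℝ}

lemma map_jensen (hτ : ∀ k : ℕ, T (X ^ k) = C (τ k) * X ^ k) (σ : ℕ → ℝ) (n : ℕ) :
    T (jensen σ n) = jensen (fun k => τ k * σ k) n := by
  ext k
  rw [coeff_diag hτ, coeff_jensen, coeff_jensen]
  ring

/-- On `X ^ i (1 - X ^ 2) ^ n` the operator acts through the subsequence `τ (2 k + i)`. -/
lemma map_jensen_comp_sq (hτ : ∀ k : ℕ, T (X ^ k) = C (τ k) * X ^ k) (i n : ℕ) :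
    T (X ^ i * (jensen (fun _ => 1) n).comp (-X ^ 2)) =
      X ^ i * (jensen (fun k => τ (2 * k + i)) n).comp (-X ^ 2) := by
  have h : ∀ (c : ℝ) (k : ℕ), X ^ i * (C c * (-X ^ 2) ^ k : ℝ[X]) =
      (c * (-1) ^ k) • X ^ (2 * k + i) := by
    intro c k
    rw [neg_pow, smul_eq_C_mul, C_mul, C_pow, C_neg, C_1]
    ring
  simp only [jensen, Polynomial.sum_comp, Finset.mul_sum, mul_comp, C_comp, pow_comp, X_comp, map_sum,
    h, map_smul, hτ]
  refine Finset.sum_congr rfl fun k _ => ?_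
  rw [smul_eq_C_mul, smul_eq_C_mul, ← mul_assoc, ← C_mul]
  congr 2
  ring

end Diagonal

lemma coeff_prod_X_sub_C_nonneg (s : Multiset ℝ) (hs : ∀ r ∈ s, r ≤ 0) (k : ℕ) :
    0 ≤ ((s.map fun r => (X - C r : ℝ[X])).prod).coeff k := by
  induction s using Multiset.induction generalizing k with
  | empty =>
    simp only [Multiset.map_zero, Multiset.prod_zero, coeff_one]
    split_ifs <;> norm_num
  | cons r s ih =>
    have ih' := ih fun x hx => hs x (Multiset.mem_cons_of_mem hx)
    have hr := hs r (Multiset.mem_cons_self r s)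
    rw [Multiset.map_cons, Multiset.prod_cons, sub_mul, coeff_sub, coeff_C_mul]
    have h1 := mul_nonneg_of_nonpos_of_nonpos hr (neg_nonpos.2 (ih' k))
    cases k with
    | zero => rw [coeff_X_mul_zero]; linarith
    | succ k => rw [coeff_X_mul]; linarith [ih' k]

lemma coeff_mul_coeff_nonneg {q : ℝ[X]} (hq : q.Splits) (hr : ∀ r ∈ q.roots, r ≤ 0) (k l : ℕ) :
    0 ≤ q.coeff k * q.coeff l := by
  have h := coeff_prod_X_sub_C_nonneg q.roots hr
  have h2 : ∀ k, q.coeff k =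
      q.leadingCoeff * ((q.roots.map fun r => (X - C r : ℝ[X])).prod).coeff k := by
    intro k
    conv_lhs => rw [hq.eq_prod_roots]
    rw [coeff_C_mul]
  rw [h2 k, h2 l]
  have := mul_nonneg (mul_self_nonneg q.leadingCoeff) (mul_nonneg (h k) (h l))
  linarith

/-- If `X ^ i * q(-X ^ 2)` is zero or real-rooted, then all zeros of `q` are real and
nonpositive, whence any two coefficients of `q` have nonnegative product. -/
lemma coeff_mul_coeff_nonneg_of_comp_sq {q : ℝ[X]} {i : ℕ}
    (h : RealRooted (X ^ i * q.comp (-X ^ 2))) (k l : ℕ) : 0 ≤ q.coeff k * q.coeff l := by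
  by_cases hq : q = 0
  · simp [hq]
  rcases h with h | h
  · exfalso
    have h1 := (mul_eq_zero.1 h).resolve_left (pow_ne_zero _ X_ne_zero)
    rcases comp_eq_zero_iff.1 h1 with h2 | ⟨-, h2⟩
    · exact hq h2
    · have := congrArg (fun p => coeff p 2) h2
      simp at this
  · have key : ∀ w : ℂ, aeval w q = 0 → w.im = 0 ∧ w.re ≤ 0 := by
      intro w hw
      obtain ⟨z, hz⟩ := IsAlgClosed.exists_pow_nat_eq (-w) two_pos
      have hz' : w = -z ^ 2 := by rw [hz, neg_neg]
      have hzim := h z (by simp [aeval_comp, ← hz', hw])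
      rw [hz', pow_two]
      simp only [Complex.neg_im, Complex.mul_im, Complex.neg_re, Complex.mul_re, hzim]
      constructor
      · ring
      · nlinarith [mul_self_nonneg z.re]
    refine coeff_mul_coeff_nonneg
      (RealRooted.splits (Or.inr fun w hw => (key w hw).1) hq) (fun r hr => ?_) k l
    have h2 : aeval (r : ℂ) q = 0 := by
      have := (mem_roots'.1 hr).2
      rw [IsRoot.def] at this
      rw [show (r : ℂ) = algebraMap ℝ ℂ r from rfl, aeval_algebraMap_apply_eq_algebraMap_eval,
        this, map_zero]
    simpa using (key _ h2).2

lemma exists_sign {f : ℕ → ℝ} (h : ∀ k l, 0 ≤ f k * f l) :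
    ∃ δ : ℝ, (δ = 1 ∨ δ = -1) ∧ ∀ k, 0 ≤ δ * f k := by
  by_cases hneg : ∃ k, f k < 0
  · obtain ⟨k, hk⟩ := hneg
    refine ⟨-1, Or.inr rfl, fun l => ?_⟩
    by_contra hl
    nlinarith [h k l]
  · push Not at hneg
    exact ⟨1, Or.inl rfl, fun l => by simpa using hneg l⟩

/-- If all `τ k` with `k` of equal parity have weakly the same sign, then the signs of `τ` are
constant or alternating. -/
lemma sign_pattern {τ : ℕ → ℝ} (h0 : ∀ k l, 0 ≤ τ (2 * k) * τ (2 * l))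
    (h1 : ∀ k l, 0 ≤ τ (2 * k + 1) * τ (2 * l + 1)) :
    (∃ δ : ℝ, δ ≠ 0 ∧ ∀ k, 0 ≤ δ * (-1) ^ k * τ k) ∨ ∃ δ : ℝ, δ ≠ 0 ∧ ∀ k, 0 ≤ δ * τ k := by
  obtain ⟨δ, hδ, he⟩ := exists_sign (f := fun k => τ (2 * k)) h0
  obtain ⟨ε, hε, ho⟩ := exists_sign (f := fun k => τ (2 * k + 1)) h1
  have hδ0 : δ ≠ 0 := by rcases hδ with rfl | rfl <;> norm_num
  have hεδ : ε = -δ ∨ ε = δ := by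
    rcases hδ with rfl | rfl <;> rcases hε with rfl | rfl <;> norm_num
  rcases hεδ with rfl | rfl
  · refine Or.inl ⟨δ, hδ0, fun k => ?_⟩
    obtain ⟨j, rfl | rfl⟩ := k.even_or_odd'
    · simpa using he j
    · simpa [pow_succ] using ho j
  · refine Or.inr ⟨ε, hδ0, fun k => ?_⟩
    obtain ⟨j, rfl | rfl⟩ := k.even_or_odd'
    · exact he j
    · exact ho j

/-- **Pólya–Schur theorem.** Let `T : ℝ[X] → ℝ[X]` be a nonzero linear map that is diagonal
in the monomial basis, `T X^k = τ_k X^k`.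
(a) `T` preserves real-rootedness iff `Φ_T(z) = ∑ τ_k z^k/k!` is entire (the series converges
everywhere) and `Φ_T` or `Φ_T(−·)` is of LPI form.
(b) `T` maps polynomials with all roots in `[0,∞)` to `0` or real-rooted polynomials iff
`Φ_T` is entire and of LP form. -/
theorem polya_schur (T : Polynomial ℝ →ₗ[ℝ] Polynomial ℝ) (hT : T ≠ 0)
    (τ : ℕ → ℝ)
    (hτ : ∀ k : ℕ, T (Polynomial.X ^ k) = Polynomial.C (τ k) * Polynomial.X ^ k) :
    ((∀ p : Polynomial ℝ, (∀ z ∈ (p.map (algebraMap ℝ ℂ)).roots, z.im = 0) →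
        (T p = 0 ∨ ∀ z ∈ ((T p).map (algebraMap ℝ ℂ)).roots, z.im = 0))
      ↔
      (∃ Φ : ℂ → ℂ,
        (∀ z : ℂ, HasSum (fun k : ℕ => (τ k : ℂ) * z ^ k / (Nat.factorial k : ℂ)) (Φ z)) ∧
        (IsLPIForm Φ ∨ IsLPIForm fun z => Φ (-z))))
    ∧
    ((∀ p : Polynomial ℝ,
        (∀ z ∈ (p.map (algebraMap ℝ ℂ)).roots, z.im = 0 ∧ 0 ≤ z.re) →
        (T p = 0 ∨ ∀ z ∈ ((T p).map (algebraMap ℝ ℂ)).roots, z.im = 0))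
      ↔
      (∃ Φ : ℂ → ℂ,
        (∀ z : ℂ, HasSum (fun k : ℕ => (τ k : ℂ) * z ^ k / (Nat.factorial k : ℂ)) (Φ z)) ∧
        IsLPForm Φ)) := by
  have hτ0 : ∃ k, τ k ≠ 0 := by
    by_contra! h0
    apply hT
    ext p k
    simp [coeff_diag hτ, h0]
  refine ⟨⟨fun h => ?_, ?_⟩, ⟨fun h => ?_, ?_⟩⟩
  · have hT' : ∀ p : ℝ[X], (∀ z : ℂ, aeval z p = 0 → z.im = 0) → RealRooted (T p) := fun p hp =>
      realRooted_iff.2 (h p fun z hz => hp z (aeval_eq_zero_of_mem_roots hz))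
    have hJ : ∀ n, RealRooted (jensen τ n) := by
      intro n
      have := hT' (jensen (fun _ => 1) n) fun z hz => ?_
      · simpa [map_jensen hτ] using this
      · rw [jensen_one] at hz
        have h1 : 1 + z = 0 := by
          simp only [map_pow, map_add, map_one, aeval_X] at hz
          exact eq_zero_of_pow_eq_zero hz
        rw [eq_neg_of_add_eq_zero_right h1]; simp
    -- the signs are read off from the images of the polynomials `X ^ i * (1 - X ^ 2) ^ n`
    have hsq : ∀ i k l, 0 ≤ τ (2 * k + i) * τ (2 * l + i) := by
      intro i k l
      have h1 := hT' (X ^ i * (jensen (fun _ => 1) (k + l)).comp (-X ^ 2)) fun z hz => ?_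
      · rw [map_jensen_comp_sq hτ] at h1
        have h2 := coeff_mul_coeff_nonneg_of_comp_sq h1 k l
        rw [coeff_jensen, coeff_jensen] at h2
        have hk : (0 : ℝ) < (k + l).choose k := by exact_mod_cast Nat.choose_pos (by omega)
        have hl : (0 : ℝ) < (k + l).choose l := by exact_mod_cast Nat.choose_pos (by omega)
        refine nonneg_of_mul_nonneg_right (a := ((k + l).choose k : ℝ) * (k + l).choose l) ?_
          (by positivity)
        linarith
      · rw [jensen_one] at hz
        simp only [map_mul, map_pow, aeval_X, aeval_comp, map_add, map_one, map_neg] at hz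
        rcases mul_eq_zero.1 hz with hz | hz
        · rw [eq_zero_of_pow_eq_zero hz]; simp
        · have h2 : (z - 1) * (z + 1) = 0 := by
            linear_combination -eq_zero_of_pow_eq_zero hz
          rcases mul_eq_zero.1 h2 with h3 | h3
          · rw [sub_eq_zero.1 h3]; simp
          · rw [eq_neg_of_add_eq_zero_left h3]; simp
    rcases sign_pattern (hsq 0) (hsq 1) with hs | ⟨δ, hδ, hs⟩
    · obtain ⟨Φ, hΦ, -, hI⟩ := lp_of_realRooted_jensen hτ0 hJ
      exact ⟨Φ, hΦ, Or.inl (hI hs)⟩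
    · -- pass to `(-1) ^ k τ k`, whose generating function is `Φ (-z)`
      obtain ⟨Φ, hΦ, -, hI⟩ := lp_of_realRooted_jensen (τ := fun k => (-1) ^ k * τ k)
        (hτ0.imp fun k hk => mul_ne_zero (pow_ne_zero _ (by norm_num)) hk)
        fun n => jensen_comp_neg_X τ n ▸ (hJ n).comp_neg_X
      have hsq1 : ∀ k : ℕ, ((-1 : ℝ) ^ k) * (-1) ^ k = 1 := fun k => by rw [← mul_pow]; simp
      refine ⟨fun z => Φ (-z), fun z => (hΦ (-z)).congr_fun fun k => ?_, Or.inr ?_⟩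
      · have h1 : ((-1 : ℂ) ^ k) * (-1) ^ k = 1 := by rw [← mul_pow]; simp
        rw [neg_pow z k]
        push_cast
        linear_combination (-(τ k : ℂ) * z ^ k / (k.factorial : ℂ)) * h1
      · simp only [neg_neg]
        refine hI ⟨δ, hδ, fun k => ?_⟩
        have := hs k
        linear_combination this + δ * τ k * (hsq1 k).symm
  · rintro ⟨Φ, hΦ, h | h⟩ p hp
    · exact realRooted_iff.1 (realRooted_diag hτ (diagRealRooted_of_isLPIForm hΦ h hp))
    · exact realRooted_iff.1 (realRooted_diag hτ (diagRealRooted_of_isLPIForm_neg hΦ h hp))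
  · have hJ : ∀ n, RealRooted (jensen τ n) := by
      intro n
      have h1 : RealRooted (T ((jensen (fun _ => 1) n).comp (-X))) := by
        refine realRooted_iff.2 (h _ fun z hz => ?_)
        have h2 := aeval_eq_zero_of_mem_roots hz
        rw [jensen_one] at h2
        simp only [map_pow, aeval_X, aeval_comp, map_add, map_one, map_neg] at h2
        have h3 : z = 1 := by linear_combination -eq_zero_of_pow_eq_zero h2
        rw [h3]; simp
      rw [jensen_comp_neg_X, map_jensen hτ] at h1
      have h4 := h1.comp_neg_X
      rw [jensen_comp_neg_X] at h4
      have h5 : (fun k => (-1 : ℝ) ^ k * (τ k * ((-1) ^ k * 1))) = τ := by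
        funext k
        have : ((-1 : ℝ) ^ k) * (-1) ^ k = 1 := by rw [← mul_pow]; simp
        linear_combination τ k * this
      rwa [h5] at h4
    obtain ⟨Φ, hΦ, hLP, -⟩ := lp_of_realRooted_jensen hτ0 hJ
    exact ⟨Φ, hΦ, hLP⟩
  · rintro ⟨Φ, hΦ, h⟩ p hp
    exact realRooted_iff.1 (realRooted_diag hτ (diagRealRooted_of_isLPForm hΦ h hp))
end

section
/- (Weak Pólya–Schur theorem for rectangular differentiation.) Fix β > −1 and let 𝓛_β : ℝ[X] → ℝ[X] be the linear operator 𝓛_β p = X·p'' + (1+β)·p'. Let T : ℝ[X] → ℝ[X] be a nonzero linear map with T∘𝓛_β = 𝓛_β∘T. Then T[X^n] is, for every integer n ≥ 1, either the zero polynomial or a polynomial all of whose complex roots are nonnegative reals, if and only if there is an entire function f of LPI form such that T p = Σ_{k≥0} (f^{(k)}(0)/k!)·𝓛_β^k p for every p ∈ ℝ[X] (a finite sum, since 𝓛_β lowers degree by one). -/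
/-! A linear map commuting with `𝓛_β` is a formal power series `∑ c_k 𝓛_β^k`, because the kernel of
`𝓛_β` consists of the constants (`exists_coeffs`). The theorem thus becomes a statement about the
polynomials `T X^n = ∑_k c_k 𝓛_β^k X^n` (`appellPoly`) and the symbol `∑ c_k z^k`.

*Sufficiency.* If all zeros of `p` are nonnegative reals, so are those of `𝓛_β p` and of
`p - a 𝓛_β p` for `a ≥ 0`. Indeed, for `z = w²` off `[0, ∞)` with `Im w > 0` and `p` with zeros
`a_i`, the numbers `h_i = w / (z - a_i)` and `1 / w` lie in the open lower half plane, and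
`𝓛_β p (z) / p (z) = (∑ h_i)² - ∑ h_i² + (1 + β) w⁻¹ ∑ h_i` is a quadratic form of Lorentzian
signature in them. By the reversed Cauchy–Schwarz inequality (`lorentz`) such a form takes no value
in `[0, ∞)` there (`ratio_ne_nonneg`). A function of LPI form is, up to `C z^m`, a limit of products
of factors `1 - a z` with `a ≥ 0`, and the class of polynomials in question is closed under limits
with fixed leading coefficient (`NonnegRooted.norm_aeval_ge`), so `T X^n` has nonnegative zeros or
vanishes (`nonnegRooted_limit`, `appellPoly_shift`).

*Necessity.* If `c_m` is the first nonzero coefficient, then reversing `T X^n` and rescaling by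
`z ↦ z / n²` gives a finite product `∏ (1 - α_j z)`, up to a constant, whose coefficients converge
to `c_{m+k} / c_m`. In terms of power sums, `∑ α_j` converges, and a compactness argument gives a
subsequence along which all power sums converge to those of `exp (-b z) ∏ (1 - α_j z)`
(`exists_limitSums`). Newton's identities (`newtonE`) express coefficients continuously through
power sums, so the symbol has LPI form (`exists_of_nonnegRooted`). The same identities compute the
Taylor coefficients of a function of LPI form (`taylor0_limit`), which links the analytic and the
formal description in both directions.
-/

open Complex Filter Topology Polynomial

/-- The rectangular differentiation operator `𝓛_β p = X·p'' + (1+β)·p'`. -/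
noncomputable def rectDiff (β : ℝ) (p : Polynomial ℝ) : Polynomial ℝ :=
  Polynomial.X * Polynomial.derivative (Polynomial.derivative p) +
    Polynomial.C (1 + β) * Polynomial.derivative p

/-! ### The operator on monomials -/

/-- `rectDiff β` as a linear map. -/
noncomputable def rectLin (β : ℝ) : ℝ[X] →ₗ[ℝ] ℝ[X] where
  toFun := rectDiff β
  map_add' p q := by simp only [rectDiff, derivative_add]; ring
  map_smul' a p := by
    simp only [rectDiff, smul_eq_C_mul, RingHom.id_apply, derivative_C_mul]; ring

lemma rectLin_pow_apply (β : ℝ) (k : ℕ) (p : ℝ[X]) :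
    (rectLin β ^ k) p = (rectDiff β)^[k] p := by
  rw [Module.End.pow_apply]; rfl

lemma coeff_rectDiff (β : ℝ) (p : ℝ[X]) (j : ℕ) :
    (rectDiff β p).coeff j = (j + 1) * (j + 1 + β) * p.coeff (j + 1) := by
  cases j with
  | zero =>
    rw [rectDiff, coeff_add, coeff_C_mul, coeff_X_mul_zero, coeff_derivative]
    push_cast; ring
  | succ j =>
    rw [rectDiff, coeff_add, coeff_C_mul, coeff_X_mul, coeff_derivative, coeff_derivative]
    push_cast; ring

/-- The factor in `𝓛_β^k X^n = rectCoef β n k · X^(n-k)`; it vanishes for `k > n`. -/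
noncomputable def rectCoef (β : ℝ) (n k : ℕ) : ℝ :=
  ∏ i ∈ Finset.range k, ((n : ℝ) - i) * (n - i + β)

lemma rectCoef_pos {β : ℝ} (hβ : -1 < β) {n k : ℕ} (h : k ≤ n) : 0 < rectCoef β n k := by
  refine Finset.prod_pos fun i hi => ?_
  have h1 : (i : ℝ) + 1 ≤ n := by
    exact_mod_cast (Nat.succ_le_of_lt (lt_of_lt_of_le (Finset.mem_range.1 hi) h))
  exact mul_pos (by linarith) (by linarith)

lemma rectCoef_eq_zero (β : ℝ) {n k : ℕ} (h : n < k) : rectCoef β n k = 0 :=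
  Finset.prod_eq_zero (Finset.mem_range.2 h) (by simp)

lemma rectDiff_iterate_X_pow (β : ℝ) (n k : ℕ) :
    (rectDiff β)^[k] (X ^ n) = C (rectCoef β n k) * X ^ (n - k) := by
  induction k with
  | zero => simp [rectCoef]
  | succ k ih =>
    rw [Function.iterate_succ_apply', ih]
    ext j
    rw [coeff_rectDiff, coeff_C_mul_X_pow, coeff_C_mul_X_pow]
    rcases lt_or_ge k n with h | h
    · by_cases hj : j + 1 = n - k
      · have hj' : j = n - (k + 1) := by omega
        rw [if_pos hj, if_pos hj', rectCoef, rectCoef, Finset.prod_range_succ]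
        have : ((j : ℝ) + 1) = n - k := by
          rw [← Nat.cast_sub h.le, ← hj]; push_cast; ring
        rw [this]; ring
      · have hj' : ¬ j = n - (k + 1) := by omega
        rw [if_neg hj, if_neg hj']; simp
    · rw [rectCoef_eq_zero β (by omega : n < k + 1), if_neg (by omega)]; simp

/-- `∑_{k ≤ n} c_k 𝓛_β^k X^n`, in closed form. -/
noncomputable def appellPoly (β : ℝ) (c : ℕ → ℝ) (n : ℕ) : ℝ[X] :=
  ∑ k ∈ Finset.range (n + 1), C (c k * rectCoef β n k) * X ^ (n - k)

lemma sum_iterate_X_pow (β : ℝ) (c : ℕ → ℝ) {n N : ℕ} (h : n ≤ N) :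
    ∑ k ∈ Finset.range (N + 1), C (c k) * (rectDiff β)^[k] (X ^ n) = appellPoly β c n := by
  rw [appellPoly]
  refine (Finset.sum_subset (Finset.range_mono (by omega)) ?_).symm.trans
    (Finset.sum_congr rfl ?_)
  · intro k _ hk
    rw [rectDiff_iterate_X_pow, rectCoef_eq_zero β (by simpa using hk)]; simp
  · intro k _
    rw [rectDiff_iterate_X_pow, C_mul, mul_assoc]

lemma coeff_appellPoly (β : ℝ) (c : ℕ → ℝ) {n k : ℕ} (h : k ≤ n) :
    (appellPoly β c n).coeff (n - k) = c k * rectCoef β n k := by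
  rw [appellPoly, finsetSum_coeff, Finset.sum_eq_single k]
  · rw [coeff_C_mul_X_pow, if_pos rfl]
  · intro i hi hik
    rw [coeff_C_mul_X_pow, if_neg]
    have := Finset.mem_range.1 hi
    omega
  · intro hk; exact absurd (Finset.mem_range.2 (by omega)) hk

lemma natDegree_appellPoly_le (β : ℝ) {c : ℕ → ℝ} {m n : ℕ} (hc : ∀ k < m, c k = 0) :
    (appellPoly β c n).natDegree ≤ n - m := by
  refine natDegree_sum_le_of_forall_le _ _ fun k _ => ?_
  rcases lt_or_ge k m with hk | hk
  · simp [hc k hk]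
  · exact (natDegree_C_mul_X_pow_le _ _).trans (by omega)

lemma natDegree_appellPoly {β : ℝ} (hβ : -1 < β) {c : ℕ → ℝ} {m n : ℕ} (hc : ∀ k < m, c k = 0)
    (hm : c m ≠ 0) (hmn : m ≤ n) :
    (appellPoly β c n).natDegree = n - m := by
  refine le_antisymm (natDegree_appellPoly_le β hc) (le_natDegree_of_ne_zero ?_)
  rw [coeff_appellPoly β c hmn]
  exact mul_ne_zero hm (rectCoef_pos hβ hmn).ne'

lemma appellPoly_eq_zero (β : ℝ) {c : ℕ → ℝ} {m n : ℕ} (hc : ∀ k < m, c k = 0)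
    (hmn : n < m) : appellPoly β c n = 0 := by
  refine Finset.sum_eq_zero fun k hk => ?_
  rw [hc k (by have := Finset.mem_range.1 hk; omega)]; simp

/-- Two linear maps agreeing on monomials of degree at most `N` agree on polynomials of degree
at most `N`. -/
lemma linearMap_eq_of_monomials {M : Type*} [AddCommGroup M] [Module ℝ M] {S T : ℝ[X] →ₗ[ℝ] M}
    {N : ℕ} (h : ∀ i ≤ N, S (X ^ i) = T (X ^ i)) {p : ℝ[X]} (hp : p.natDegree ≤ N) :
    S p = T p := by
  rw [p.as_sum_range' (N + 1) (by omega), map_sum, map_sum]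
  refine Finset.sum_congr rfl fun i hi => ?_
  rw [← C_mul_X_pow_eq_monomial, ← smul_eq_C_mul, map_smul, map_smul,
    h i (by have := Finset.mem_range.1 hi; omega)]

lemma rectLin_sum_apply (β : ℝ) (c : ℕ → ℝ) (N : ℕ) (p : ℝ[X]) :
    (∑ k ∈ Finset.range (N + 1), c k • rectLin β ^ k) p =
      ∑ k ∈ Finset.range (N + 1), C (c k) * (rectDiff β)^[k] p := by
  simp [LinearMap.sum_apply, rectLin_pow_apply, smul_eq_C_mul]

lemma eq_sum_of_monomials {β : ℝ} {T : ℝ[X] →ₗ[ℝ] ℝ[X]} {c : ℕ → ℝ}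
    (h : ∀ n, T (X ^ n) = appellPoly β c n) (p : ℝ[X]) :
    T p = ∑ k ∈ Finset.range (p.natDegree + 1), C (c k) * (rectDiff β)^[k] p := by
  rw [← rectLin_sum_apply]
  refine linearMap_eq_of_monomials (N := p.natDegree) (fun i hi => ?_) le_rfl
  rw [h i, rectLin_sum_apply, sum_iterate_X_pow β c hi]

/-- A linear map commuting with `𝓛_β` is a formal power series in `𝓛_β`: since the kernel of `𝓛_β`
consists of constants, `T X^n` is determined by `T X^(n-1)` up to its constant term, which in turn
defines the `n`-th coefficient. -/
lemma exists_coeffs {β : ℝ} (hβ : -1 < β) (T : ℝ[X] →ₗ[ℝ] ℝ[X])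
    (hcomm : ∀ p : ℝ[X], T (rectDiff β p) = rectDiff β (T p)) :
    ∃ c : ℕ → ℝ, ∀ n, T (X ^ n) = appellPoly β c n := by
  refine ⟨fun n => (T (X ^ n)).coeff 0 / rectCoef β n n, ?_⟩
  set c : ℕ → ℝ := fun n => (T (X ^ n)).coeff 0 / rectCoef β n n with hc
  have h0 : ∀ n, (T (X ^ n)).coeff 0 = (appellPoly β c n).coeff 0 := fun n => by
    have := coeff_appellPoly β c (le_refl n)
    rw [Nat.sub_self] at this
    rw [this, hc]
    exact (div_mul_cancel₀ _ (rectCoef_pos hβ le_rfl).ne').symm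
  have key : ∀ (n j : ℕ), (T (X ^ n)).coeff j = (appellPoly β c n).coeff j := by
    intro n
    induction n with
    | zero =>
      intro j
      cases j with
      | zero => exact h0 0
      | succ j =>
        have h1 : rectDiff β (T (X ^ 0)) = 0 := by
          rw [← hcomm]
          simp [rectDiff]
        have h2 := coeff_rectDiff β (T (X ^ 0)) j
        rw [h1, coeff_zero] at h2
        have h3 : ((j : ℝ) + 1) * (j + 1 + β) ≠ 0 := by
          have : (0 : ℝ) ≤ j := Nat.cast_nonneg j
          exact (mul_pos (by linarith) (by linarith)).ne'
        rw [(mul_eq_zero.1 h2.symm).resolve_left h3]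
        simp [appellPoly]
    | succ n ih =>
      intro j
      cases j with
      | zero => exact h0 _
      | succ j =>
        have e1 : rectDiff β (X ^ (n + 1)) = C (rectCoef β (n + 1) 1) * X ^ n := by
          simpa using rectDiff_iterate_X_pow β (n + 1) 1
        have h1 : (rectDiff β (T (X ^ (n + 1)))).coeff j =
            (rectDiff β (appellPoly β c (n + 1))).coeff j := by
          rw [← hcomm, e1, ← smul_eq_C_mul, map_smul, coeff_smul, ih j, ← coeff_smul]
          congr 1
          have e2 : (appellPoly β c (n + 1)) =
              (∑ k ∈ Finset.range (n + 1 + 1), c k • rectLin β ^ k) (X ^ (n + 1)) := by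
            rw [rectLin_sum_apply, sum_iterate_X_pow β c le_rfl]
          have e3 : (appellPoly β c n) =
              (∑ k ∈ Finset.range (n + 1 + 1), c k • rectLin β ^ k) (X ^ n) := by
            rw [rectLin_sum_apply, sum_iterate_X_pow β c (Nat.le_succ n)]
          rw [e2, e3, ← map_smul, smul_eq_C_mul, ← e1]
          change (∑ k ∈ Finset.range (n + 1 + 1), c k • rectLin β ^ k)
            (rectLin β (X ^ (n + 1))) = rectLin β _
          rw [← Module.End.mul_apply, ← Module.End.mul_apply]
          congr 1
          rw [Finset.sum_mul, Finset.mul_sum]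
          refine Finset.sum_congr rfl fun k _ => ?_
          rw [smul_mul_assoc, mul_smul_comm, pow_mul_comm']
        rw [coeff_rectDiff, coeff_rectDiff] at h1
        have h3 : ((j : ℝ) + 1) * (j + 1 + β) ≠ 0 := by
          have : (0 : ℝ) ≤ j := Nat.cast_nonneg j
          exact (mul_pos (by linarith) (by linarith)).ne'
        exact mul_left_cancel₀ h3 h1
  exact fun n => Polynomial.ext (key n)

/-! ### Real polynomials with nonnegative zeros -/

/-- A real polynomial without complex zeros off the half-line `[0, ∞)`. In particular it is
nonzero. -/
def NonnegRooted (p : ℝ[X]) : Prop :=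
  ∀ z : ℂ, (∀ r : ℝ, 0 ≤ r → z ≠ r) → aeval z p ≠ 0

lemma NonnegRooted.ne_zero {p : ℝ[X]} (h : NonnegRooted p) : p ≠ 0 := by
  rintro rfl
  refine h Complex.I (fun r _ hr => ?_) (map_zero _)
  simpa using congrArg Complex.im hr

lemma prod_range_getD {M : Type*} [CommMonoid M] (f : ℝ → M) (l : List ℝ) :
    ∏ j ∈ Finset.range l.length, f (l.getD j 0) = (l.map f).prod := by
  induction l with
  | nil => simp
  | cons a l ih =>
    rw [List.length_cons, Finset.prod_range_succ']
    simp only [List.getD_cons_succ, List.getD_cons_zero, List.map_cons, List.prod_cons]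
    rw [ih, mul_comm]

/-- The zeros of a `NonnegRooted` polynomial, listed in decreasing order and padded by `0`. -/
lemma NonnegRooted.exists_factor {p : ℝ[X]} (h : NonnegRooted p) :
    ∃ a : ℕ → ℝ, (∀ j, 0 ≤ a j) ∧ Antitone a ∧ (∀ j, p.natDegree ≤ j → a j = 0) ∧
      p = C p.leadingCoeff * ∏ j ∈ Finset.range p.natDegree, (X - C (a j)) := by
  have hinj : Function.Injective (algebraMap ℝ ℂ) := (algebraMap ℝ ℂ).injective
  set R : Multiset ℂ := (p.map (algebraMap ℝ ℂ)).roots with hR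
  have hroot : ∀ z ∈ R, ∃ r : ℝ, 0 ≤ r ∧ z = r := by
    intro z hz
    by_contra! hcon
    refine h z hcon ?_
    have := isRoot_of_mem_roots hz
    rwa [IsRoot.def, eval_map_algebraMap] at this
  have hsplit := IsAlgClosed.splits (p.map (algebraMap ℝ ℂ))
  have hcard : Multiset.card R = p.natDegree := by
    rw [← natDegree_map_eq_of_injective hinj p]
    exact hsplit.natDegree_eq_card_roots.symm
  set l : List ℝ := (R.map Complex.re).sort (· ≥ ·) with hl
  have hlR : (l : Multiset ℝ) = R.map Complex.re := Multiset.sort_eq _ _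
  have hlen : l.length = p.natDegree := by
    rw [← Multiset.coe_card, hlR, Multiset.card_map, hcard]
  have hsort : l.Pairwise (· ≥ ·) := Multiset.pairwise_sort _ _
  have hnn : ∀ x ∈ l, 0 ≤ x := by
    intro x hx
    rw [← Multiset.mem_coe, hlR, Multiset.mem_map] at hx
    obtain ⟨z, hz, rfl⟩ := hx
    obtain ⟨r, hr, rfl⟩ := hroot z hz
    simpa using hr
  have hpos : ∀ j, 0 ≤ l.getD j 0 := by
    intro j
    rcases lt_or_ge j l.length with hj | hj
    · rw [List.getD_eq_getElem _ _ hj]; exact hnn _ (List.getElem_mem hj)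
    · rw [List.getD_eq_default _ _ hj]
  refine ⟨fun j => l.getD j 0, hpos, ?_, ?_, ?_⟩
  · intro i j hij
    rcases lt_or_ge j l.length with hj | hj
    · rcases hij.eq_or_lt with rfl | hlt
      · exact le_rfl
      · have := List.pairwise_iff_getElem.1 hsort i j (by omega) hj hlt
        simp only
        rw [List.getD_eq_getElem _ _ hj, List.getD_eq_getElem _ _ (by omega : i < l.length)]
        exact this
    · simp only
      rw [List.getD_eq_default _ _ hj]; exact hpos i
  · intro j hj
    exact List.getD_eq_default _ _ (by omega)
  · rw [← hlen]
    simp only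
    rw [prod_range_getD (fun r => X - C r) l]
    apply Polynomial.map_injective _ hinj
    conv_lhs => rw [hsplit.eq_prod_roots]
    rw [Polynomial.map_mul, map_C, leadingCoeff_map]
    congr 1
    rw [← Multiset.prod_coe, ← Multiset.map_coe, hlR, Multiset.map_map,
      Polynomial.map_multiset_prod, Multiset.map_map]
    refine congrArg Multiset.prod (Multiset.map_congr rfl fun z hz => ?_)
    obtain ⟨r, hr, rfl⟩ := hroot z hz
    simp

/-- Reversed Cauchy–Schwarz for the quadratic form `(∑ y_i)² - ∑ y_i² + 2 a y₀ ∑ y_i`, which has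
Lorentzian signature: a vector orthogonal to a vector on which the form is positive has
nonpositive square. -/
lemma lorentz {s : Finset ℕ} {x y : ℕ → ℝ} {a x0 y0 : ℝ} (hY : ∑ i ∈ s, y i ≠ 0)
    (hB : (∑ i ∈ s, x i) * (∑ i ∈ s, y i) - ∑ i ∈ s, x i * y i +
      a * (x0 * ∑ i ∈ s, y i + y0 * ∑ i ∈ s, x i) = 0)
    (hQ : 0 ≤ (∑ i ∈ s, y i) ^ 2 - ∑ i ∈ s, y i ^ 2 + 2 * a * y0 * ∑ i ∈ s, y i) :
    (∑ i ∈ s, x i) ^ 2 - ∑ i ∈ s, x i ^ 2 + 2 * a * x0 * ∑ i ∈ s, x i ≤ 0 := by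
  have hsq : 0 ≤ ∑ i ∈ s, ((∑ i ∈ s, y i) * x i - (∑ i ∈ s, x i) * y i) ^ 2 :=
    Finset.sum_nonneg fun i _ => sq_nonneg _
  generalize hYd : ∑ i ∈ s, y i = Y at *
  generalize hXd : ∑ i ∈ s, x i = A at *
  have hexp : ∑ i ∈ s, (Y * x i - A * y i) ^ 2 =
      Y ^ 2 * ∑ i ∈ s, x i ^ 2 - 2 * A * Y * ∑ i ∈ s, x i * y i + A ^ 2 * ∑ i ∈ s, y i ^ 2 := by
    rw [Finset.mul_sum, Finset.mul_sum, Finset.mul_sum, ← Finset.sum_sub_distrib,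
      ← Finset.sum_add_distrib]
    exact Finset.sum_congr rfl fun i _ => by ring
  rw [hexp] at hsq
  have hY2 : 0 < Y ^ 2 := by positivity
  have hQ' := mul_nonneg (sq_nonneg A) hQ
  have hid : Y ^ 2 * (A ^ 2 - ∑ i ∈ s, x i ^ 2 + 2 * a * x0 * A) =
      -(Y ^ 2 * ∑ i ∈ s, x i ^ 2 - 2 * A * Y * ∑ i ∈ s, x i * y i + A ^ 2 * ∑ i ∈ s, y i ^ 2)
      - A ^ 2 * (Y ^ 2 - ∑ i ∈ s, y i ^ 2 + 2 * a * y0 * Y) := by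
    linear_combination 2 * A * Y * hB
  by_contra! hcon
  have := mul_pos hY2 hcon
  linarith

lemma exists_sqrt_upper {z : ℂ} (hz : ∀ r : ℝ, 0 ≤ r → z ≠ r) : ∃ w : ℂ, w ^ 2 = z ∧ 0 < w.im := by
  obtain ⟨w, hw⟩ := IsAlgClosed.exists_pow_nat_eq z (n := 2) (by norm_num)
  rcases lt_trichotomy w.im 0 with h | h | h
  · exact ⟨-w, by rw [neg_sq, hw], by simpa using h⟩
  · exfalso
    refine hz (w.re ^ 2) (sq_nonneg _) ?_
    rw [← hw]
    apply Complex.ext <;> simp [sq, h]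
  · exact ⟨w, hw, h⟩

/-- With `z = w²` and `Im w > 0`, each `h_i = w / (z - a_i)` and `1 / w` lie in the lower half
plane, and the quantity `𝓛_β p (z) / p (z)` is a Lorentzian quadratic form in them. Such a form
takes no value in `[0, ∞)` on the product of lower half planes. -/
lemma ratio_ne_nonneg {β : ℝ} (hβ : -1 < β) {z : ℂ} (hz : ∀ r : ℝ, 0 ≤ r → z ≠ r)
    {a : ℕ → ℝ} (ha : ∀ j, 0 ≤ a j) {N : ℕ} (hN : 0 < N) {t : ℝ} (ht : 0 ≤ t) :
    z * ((∑ j ∈ Finset.range N, (z - a j)⁻¹) ^ 2 - ∑ j ∈ Finset.range N, ((z - a j)⁻¹) ^ 2) +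
      (1 + β) * ∑ j ∈ Finset.range N, (z - a j)⁻¹ ≠ t := by
  intro heq
  obtain ⟨w, rfl, hw⟩ := exists_sqrt_upper hz
  have hw0 : w ≠ 0 := by rintro rfl; simp at hw
  set h : ℕ → ℂ := fun j => w * (w ^ 2 - a j)⁻¹ with hh
  have him : ∀ j, (h j).im < 0 := by
    intro j
    have hne : w ^ 2 - a j ≠ 0 := sub_ne_zero.2 (hz _ (ha j))
    have h1 : h j = (w * (starRingEnd ℂ) (w ^ 2 - a j)) *
        ((Complex.normSq (w ^ 2 - a j))⁻¹ : ℝ) := by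
      rw [hh]; simp only; rw [Complex.inv_def]; ring
    rw [h1, Complex.im_mul_ofReal]
    refine mul_neg_of_neg_of_pos ?_ (inv_pos.2 (Complex.normSq_pos.2 hne))
    have h2 : (w * (starRingEnd ℂ) (w ^ 2 - a j)).im =
        -(w.re ^ 2 + w.im ^ 2 + a j) * w.im := by
      simp [sq]; ring
    rw [h2]
    have := ha j
    nlinarith [mul_pos hw hw, sq_nonneg w.re, mul_nonneg this hw.le,
      mul_nonneg (sq_nonneg w.re) hw.le, mul_pos (mul_pos hw hw) hw]
  have hu : (w⁻¹).im < 0 := by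
    rw [Complex.inv_im]
    exact div_neg_of_neg_of_pos (by linarith) (Complex.normSq_pos.2 hw0)
  have hsum : (∑ j ∈ Finset.range N, h j) ^ 2 - ∑ j ∈ Finset.range N, (h j) ^ 2 +
      (1 + β) * w⁻¹ * ∑ j ∈ Finset.range N, h j = t := by
    rw [← heq]
    simp only [hh, mul_pow, ← Finset.mul_sum]
    field_simp
  set x : ℕ → ℝ := fun j => (h j).re
  set y : ℕ → ℝ := fun j => -(h j).im with hy
  have hypos : ∀ j, 0 < y j := fun j => neg_pos.2 (him j)
  have hHre : (∑ j ∈ Finset.range N, h j).re = ∑ j ∈ Finset.range N, x j := Complex.re_sum _ _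
  have hHim : (∑ j ∈ Finset.range N, h j).im = -∑ j ∈ Finset.range N, y j := by
    rw [Complex.im_sum, ← Finset.sum_neg_distrib]; simp [hy]
  have hSre : (∑ j ∈ Finset.range N, h j ^ 2).re =
      ∑ j ∈ Finset.range N, x j ^ 2 - ∑ j ∈ Finset.range N, y j ^ 2 := by
    rw [Complex.re_sum, ← Finset.sum_sub_distrib]
    refine Finset.sum_congr rfl fun j _ => ?_
    simp [sq, x, y]
  have hSim : (∑ j ∈ Finset.range N, h j ^ 2).im = -(2 * ∑ j ∈ Finset.range N, x j * y j) := by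
    rw [Complex.im_sum, Finset.mul_sum, ← Finset.sum_neg_distrib]
    refine Finset.sum_congr rfl fun j _ => ?_
    simp [sq, x, y]; ring
  have hYpos : 0 < ∑ j ∈ Finset.range N, y j :=
    Finset.sum_pos (fun j _ => hypos j) ⟨0, Finset.mem_range.2 hN⟩
  have hre := congrArg Complex.re hsum
  have him' := congrArg Complex.im hsum
  have e1 : ((1 : ℂ) + β) * w⁻¹ * ∑ j ∈ Finset.range N, h j =
      ((1 + β : ℝ) : ℂ) * (w⁻¹ * ∑ j ∈ Finset.range N, h j) := by push_cast; ring
  rw [e1] at hre him'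
  simp only [Complex.add_re, Complex.sub_re, Complex.add_im, Complex.sub_im, Complex.mul_re,
    Complex.mul_im, sq (∑ j ∈ Finset.range N, h j),
    hHre, hHim, hSre, hSim, Complex.ofReal_re, Complex.ofReal_im] at hre him'
  have hsqle : ∑ j ∈ Finset.range N, y j ^ 2 ≤ (∑ j ∈ Finset.range N, y j) ^ 2 :=
    Finset.sum_sq_le_sq_sum_of_nonneg (fun j _ => (hypos j).le)
  have hy0 : 0 < (1 + β) * (-(w⁻¹).im) * ∑ j ∈ Finset.range N, y j :=
    mul_pos (mul_pos (by linarith) (neg_pos.2 hu)) hYpos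
  -- the vanishing imaginary part says that `x` and `y` are orthogonal, and a nonnegative real part
  -- would make the form positive on `x`, as it is on `y`
  have := lorentz (s := Finset.range N) (x := x) (y := y) (a := (1 + β) / 2) (x0 := (w⁻¹).re)
    (y0 := -(w⁻¹).im) hYpos.ne' (by linarith) (by linarith)
  linarith

lemma aeval_derivs (a : ℕ → ℝ) (z : ℂ) (N : ℕ) (hz : ∀ j, z ≠ a j) :
    aeval z (derivative (∏ j ∈ Finset.range N, (X - C (a j)))) =
      aeval z (∏ j ∈ Finset.range N, (X - C (a j))) * ∑ j ∈ Finset.range N, (z - a j)⁻¹ ∧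
    aeval z (derivative (derivative (∏ j ∈ Finset.range N, (X - C (a j))))) =
      aeval z (∏ j ∈ Finset.range N, (X - C (a j))) *
        ((∑ j ∈ Finset.range N, (z - a j)⁻¹) ^ 2 - ∑ j ∈ Finset.range N, ((z - a j)⁻¹) ^ 2) := by
  induction N with
  | zero => simp
  | succ N ih =>
    have hne : z - a N ≠ 0 := sub_ne_zero.2 (hz N)
    have hX : aeval z (X - C (a N)) = z - a N := by simp
    have hd : derivative (X - C (a N)) = 1 := by simp
    rw [Finset.prod_range_succ]
    simp only [derivative_mul, hd, mul_one, map_add, map_mul, ih.1, ih.2, hX,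
      Finset.sum_range_succ]
    constructor
    · field_simp
    · field_simp
      ring

/-- Off `[0, ∞)` the quotient `𝓛_β p / p` is never a nonnegative real. The case `t = 0` shows that
`𝓛_β` preserves nonnegative zeros, the case `t = 1 / a` that `1 - a 𝓛_β` does. -/
lemma NonnegRooted.aeval_rectDiff {β : ℝ} (hβ : -1 < β) {p : ℝ[X]} (h : NonnegRooted p)
    (hd : 0 < p.natDegree) {z : ℂ} (hz : ∀ r : ℝ, 0 ≤ r → z ≠ r) :
    ∃ q : ℂ, aeval z (rectDiff β p) = aeval z p * q ∧ ∀ t : ℝ, 0 ≤ t → q ≠ t := by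
  obtain ⟨a, ha, -, -, hp⟩ := h.exists_factor
  obtain ⟨h1, h2⟩ := aeval_derivs a z p.natDegree fun j => hz _ (ha j)
  refine ⟨_, ?_, fun t ht => ratio_ne_nonneg hβ hz ha hd ht⟩
  set N := p.natDegree
  set P := ∏ j ∈ Finset.range N, (X - C (a j))
  rw [hp, rectDiff]
  simp only [map_add, map_mul, aeval_X, aeval_C, derivative_C_mul, h1, h2]
  simp
  ring

lemma NonnegRooted.sub_rectDiff {β : ℝ} (hβ : -1 < β) {p : ℝ[X]} (h : NonnegRooted p)
    {a : ℝ} (ha : 0 ≤ a) : NonnegRooted (p - C a * rectDiff β p) := by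
  rcases Nat.eq_zero_or_pos p.natDegree with hd | hd
  · have : rectDiff β p = 0 := by
      rw [eq_C_of_natDegree_eq_zero hd]; simp [rectDiff]
    simpa [this] using h
  intro z hz h0
  obtain ⟨q, hq, hq'⟩ := h.aeval_rectDiff hβ hd hz
  rw [map_sub, map_mul, hq, aeval_C] at h0
  have h1 : aeval z p * (1 - (a : ℂ) * q) = 0 := by
    rw [← h0]; simp only [Complex.coe_algebraMap]; ring
  have h2 := (mul_eq_zero.1 h1).resolve_left (h z hz)
  have ha0 : (a : ℂ) ≠ 0 := by rintro h; simp [h] at h2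
  refine hq' (a⁻¹) (inv_nonneg.2 ha) ?_
  push_cast
  field_simp
  linear_combination -h2

lemma NonnegRooted.rectDiff_iterate {β : ℝ} (hβ : -1 < β) (m : ℕ) {p : ℝ[X]}
    (h : NonnegRooted p) (hm : m ≤ p.natDegree) : NonnegRooted ((rectDiff β)^[m] p) := by
  induction m generalizing p with
  | zero => exact h
  | succ m ih =>
    have hN : p.natDegree = (p.natDegree - 1) + 1 := by omega
    refine ih ?_ ?_
    · intro z hz
      obtain ⟨q, hq, hq'⟩ := h.aeval_rectDiff hβ (by omega) hz
      rw [hq]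
      exact mul_ne_zero (h z hz) (by simpa using hq' 0 le_rfl)
    · refine le_trans (by omega : m ≤ p.natDegree - 1) (le_natDegree_of_ne_zero ?_)
      rw [coeff_rectDiff, ← hN]
      have : (0 : ℝ) ≤ ((p.natDegree - 1 : ℕ) : ℝ) := Nat.cast_nonneg _
      exact mul_ne_zero (mul_pos (by linarith) (by linarith)).ne'
        (leadingCoeff_ne_zero.2 h.ne_zero)

/-- Off `[0, ∞)` there is a uniform lower bound for `NonnegRooted` polynomials in terms of the
leading coefficient, which makes the class closed under limits. -/
lemma NonnegRooted.norm_aeval_ge {p : ℝ[X]} (h : NonnegRooted p) {z : ℂ} {d : ℝ} (hd : 0 ≤ d)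
    (hz : ∀ r : ℝ, 0 ≤ r → d ≤ ‖z - r‖) : |p.leadingCoeff| * d ^ p.natDegree ≤ ‖aeval z p‖ := by
  obtain ⟨a, ha, -, -, hp⟩ := h.exists_factor
  have h1 : aeval z p = (p.leadingCoeff : ℂ) * ∏ j ∈ Finset.range p.natDegree, (z - a j) := by
    conv_lhs => rw [hp]
    simp [map_prod]
  rw [h1, norm_mul, Complex.norm_real, Real.norm_eq_abs, norm_prod]
  refine mul_le_mul_of_nonneg_left ?_ (abs_nonneg _)
  calc d ^ p.natDegree = ∏ _j ∈ Finset.range p.natDegree, d := by simp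
    _ ≤ _ := Finset.prod_le_prod (fun _ _ => hd) fun j _ => hz _ (ha j)

lemma exists_dist_pos {z : ℂ} (hz : ∀ r : ℝ, 0 ≤ r → z ≠ r) :
    ∃ d : ℝ, 0 < d ∧ ∀ r : ℝ, 0 ≤ r → d ≤ ‖z - r‖ := by
  by_cases him : z.im = 0
  · have hre : z.re < 0 := by
      by_contra! hcon
      exact hz z.re hcon (Complex.ext (by simp) (by simpa using him))
    refine ⟨-z.re, by linarith, fun r hr => ?_⟩
    have := (abs_le.1 (Complex.abs_re_le_norm (z - r))).1
    simp only [Complex.sub_re, Complex.ofReal_re] at this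
    linarith
  · refine ⟨|z.im|, abs_pos.2 him, fun r hr => ?_⟩
    simpa using Complex.abs_im_le_norm (z - r)

lemma aeval_appellPoly (β : ℝ) (c : ℕ → ℝ) (n : ℕ) (z : ℂ) :
    aeval z (appellPoly β c n) =
      ∑ k ∈ Finset.range (n + 1), ((c k * rectCoef β n k : ℝ) : ℂ) * z ^ (n - k) := by
  simp [appellPoly, map_sum]

lemma nonnegRooted_appellPoly_of_tendsto {β : ℝ} (hβ : -1 < β) {c : ℕ → ℕ → ℝ} {c' : ℕ → ℝ}
    {n : ℕ} (hc : ∀ k, Tendsto (fun N => c N k) atTop (𝓝 (c' k))) (h1 : ∀ N, c N 0 = 1)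
    (h : ∀ N, NonnegRooted (appellPoly β (c N) n)) : NonnegRooted (appellPoly β c' n) := by
  intro z hz
  obtain ⟨d, hd, hdz⟩ := exists_dist_pos hz
  have hlim : Tendsto (fun N => aeval z (appellPoly β (c N) n)) atTop
      (𝓝 (aeval z (appellPoly β c' n))) := by
    simp only [aeval_appellPoly]
    refine tendsto_finsetSum _ fun k _ => Tendsto.mul_const _ ?_
    exact (Complex.continuous_ofReal.tendsto _).comp ((hc k).mul_const _)
  have hge : ∀ N, d ^ n ≤ ‖aeval z (appellPoly β (c N) n)‖ := by
    intro N
    have hdeg := natDegree_appellPoly hβ (c := c N) (m := 0) (n := n) (by simp)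
      (by rw [h1]; exact one_ne_zero) (Nat.zero_le n)
    have := (h N).norm_aeval_ge hd.le hdz
    have hlead : (appellPoly β (c N) n).leadingCoeff = 1 := by
      rw [leadingCoeff, hdeg, coeff_appellPoly β (c N) (Nat.zero_le n), h1, rectCoef]; simp
    rwa [hlead, hdeg, abs_one, one_mul, Nat.sub_zero] at this
  have := ge_of_tendsto' hlim.norm hge
  exact norm_pos_iff.1 (lt_of_lt_of_le (by positivity) this)

/-! ### Power series and their power sums -/

/-- The coefficients `e_k` of the power series with constant term `1` and logarithmic derivative
`-∑ p_i X^i`. For `∏ (1 - a_j X)` the number `p_i` is the power sum `∑ a_j^(i+1)` (note the shift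
of the index), and the recursion is Newton's identity. -/
noncomputable def newtonE (p : ℕ → ℝ) : ℕ → ℝ
  | 0 => 1
  | k + 1 => -(∑ i : Fin (k + 1), p i * newtonE p (k - i)) / (k + 1)

lemma newtonE_zero (p : ℕ → ℝ) : newtonE p 0 = 1 := by rw [newtonE]

lemma newtonE_succ (p : ℕ → ℝ) (k : ℕ) :
    newtonE p (k + 1) = -(∑ i ∈ Finset.range (k + 1), p i * newtonE p (k - i)) / (k + 1) := by
  rw [newtonE, Finset.sum_range]

lemma tendsto_newtonE {ι : Type*} {l : Filter ι} {p : ι → ℕ → ℝ} {q : ℕ → ℝ}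
    (h : ∀ i, Tendsto (fun N => p N i) l (𝓝 (q i))) (k : ℕ) :
    Tendsto (fun N => newtonE (p N) k) l (𝓝 (newtonE q k)) := by
  induction k using Nat.strong_induction_on with
  | _ k ih =>
    cases k with
    | zero => simp only [newtonE_zero]; exact tendsto_const_nhds
    | succ k =>
      simp only [newtonE_succ]
      refine Tendsto.div_const (Tendsto.neg (tendsto_finsetSum _ fun i _ => ?_)) _
      exact (h i).mul (ih (k - i) (by omega))

lemma newtonE_smul (t : ℝ) (p : ℕ → ℝ) (k : ℕ) :
    newtonE (fun i => t ^ (i + 1) * p i) k = t ^ k * newtonE p k := by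
  induction k using Nat.strong_induction_on with
  | _ k ih =>
    cases k with
    | zero => simp [newtonE_zero]
    | succ k =>
      rw [newtonE_succ, newtonE_succ, mul_div_assoc', mul_neg, Finset.mul_sum]
      congr 2
      refine Finset.sum_congr rfl fun i hi => ?_
      rw [ih (k - i) (by omega)]
      have : k + 1 = (i + 1) + (k - i) := by have := Finset.mem_range.1 hi; omega
      rw [this, pow_add]; ring

/-- `F` has constant term `1` and logarithmic derivative `-∑ p_i X^i`. -/
def HasPowerSums (F : PowerSeries ℝ) (p : ℕ → ℝ) : Prop :=
  PowerSeries.coeff 0 F = 1 ∧ PowerSeries.derivative ℝ F = -(PowerSeries.mk p * F)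

lemma HasPowerSums.coeff_eq {F : PowerSeries ℝ} {p : ℕ → ℝ} (h : HasPowerSums F p) (k : ℕ) :
    PowerSeries.coeff k F = newtonE p k := by
  induction k using Nat.strong_induction_on with
  | _ k ih =>
    cases k with
    | zero => rw [newtonE_zero, h.1]
    | succ k =>
      have h1 := congrArg (PowerSeries.coeff k) h.2
      rw [PowerSeries.coeff_derivative, map_neg, PowerSeries.coeff_mul,
        Finset.Nat.sum_antidiagonal_eq_sum_range_succ_mk] at h1
      have hk : (k : ℝ) + 1 ≠ 0 := by positivity
      rw [newtonE_succ, eq_div_iff hk, h1]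
      congr 1
      refine Finset.sum_congr rfl fun i hi => ?_
      rw [PowerSeries.coeff_mk, ih (k - i) (by omega)]

lemma HasPowerSums.one : HasPowerSums 1 0 := by
  refine ⟨by simp, ?_⟩
  have : PowerSeries.mk (0 : ℕ → ℝ) = 0 := by ext; simp
  rw [PowerSeries.derivative_one, this]; simp

lemma HasPowerSums.mul {F G : PowerSeries ℝ} {p q : ℕ → ℝ} (hF : HasPowerSums F p)
    (hG : HasPowerSums G q) : HasPowerSums (F * G) (p + q) := by
  refine ⟨?_, ?_⟩
  · have h1 := hF.1
    have h2 := hG.1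
    rw [PowerSeries.coeff_zero_eq_constantCoeff_apply] at *
    rw [map_mul, h1, h2, one_mul]
  · have : PowerSeries.mk (p + q) = PowerSeries.mk p + PowerSeries.mk q := by ext; simp
    rw [Derivation.leibniz, hF.2, hG.2, this, smul_eq_mul, smul_eq_mul]; ring

lemma HasPowerSums.prod {ι : Type*} (s : Finset ι) {F : ι → PowerSeries ℝ} {p : ι → ℕ → ℝ}
    (h : ∀ j, HasPowerSums (F j) (p j)) :
    HasPowerSums (∏ j ∈ s, F j) (fun i => ∑ j ∈ s, p j i) := by
  classical
  induction s using Finset.induction_on with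
  | empty =>
    simp only [Finset.prod_empty, Finset.sum_empty]
    exact HasPowerSums.one
  | insert a s ha ih =>
    rw [Finset.prod_insert ha]
    convert (h a).mul ih using 1
    ext i
    simp [Finset.sum_insert ha]

lemma hasPowerSums_linear (a : ℝ) :
    HasPowerSums (1 - PowerSeries.C a * PowerSeries.X) (fun i => a ^ (i + 1)) := by
  refine ⟨by simp, ?_⟩
  have : PowerSeries.mk (fun i => a ^ (i + 1)) * (1 - PowerSeries.C a * PowerSeries.X) =
      PowerSeries.C a := by
    ext k
    rw [mul_sub, mul_one, mul_left_comm, map_sub, PowerSeries.coeff_C_mul]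
    cases k with
    | zero => simp
    | succ k => rw [PowerSeries.coeff_succ_mul_X]; simp; ring
  rw [this, map_sub, PowerSeries.derivative_one, Derivation.leibniz]
  simp

lemma hasPowerSums_exp (b : ℝ) :
    HasPowerSums (PowerSeries.mk fun k => (-b) ^ k / k.factorial)
      (fun i => if i = 0 then b else 0) := by
  refine ⟨by simp, ?_⟩
  have : PowerSeries.mk (fun i => if i = 0 then b else 0) = PowerSeries.C b := by
    ext k; simp [PowerSeries.coeff_C]
  rw [this]
  ext k
  rw [PowerSeries.coeff_derivative, map_neg, PowerSeries.coeff_C_mul, PowerSeries.coeff_mk,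
    PowerSeries.coeff_mk, Nat.factorial_succ]
  have : (k.factorial : ℝ) ≠ 0 := by positivity
  have : (k : ℝ) + 1 ≠ 0 := by positivity
  push_cast
  field_simp
  ring

/-- The power sums of `exp (-b z) * ∏ (1 - α_j z)`. -/
noncomputable def limitSums (b : ℝ) (α : ℕ → ℝ) (i : ℕ) : ℝ :=
  (if i = 0 then b else 0) + ∑' j, α j ^ (i + 1)

lemma summable_pow_succ {α : ℕ → ℝ} (h0 : ∀ j, 0 ≤ α j) (hs : Summable α) (i : ℕ) :
    Summable fun j => α j ^ (i + 1) := by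
  refine Summable.of_nonneg_of_le (fun j => pow_nonneg (h0 j) _) (fun j => ?_)
    (hs.mul_left ((∑' j, α j) ^ i))
  rw [pow_succ]
  exact mul_le_mul_of_nonneg_right
    (pow_le_pow_left₀ (h0 j) (hs.le_tsum j fun k _ => h0 k) i) (h0 j)

/-! ### Operators built from factors `1 - a 𝓛_β` -/

lemma aeval_rectLin_X_pow (β : ℝ) (g : ℝ[X]) (n : ℕ) :
    (aeval (rectLin β) g) (X ^ n) = appellPoly β g.coeff n := by
  rw [aeval_eq_sum_range' (n := (max n g.natDegree) + 1) (by omega), rectLin_sum_apply,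
    sum_iterate_X_pow β g.coeff (le_max_left _ _)]

lemma nonnegRooted_aeval_prod {β : ℝ} (hβ : -1 < β) {ι : Type*} (s : Finset ι) {a : ι → ℝ}
    (ha : ∀ j, 0 ≤ a j) {p : ℝ[X]} (hp : NonnegRooted p) :
    NonnegRooted ((aeval (rectLin β) (∏ j ∈ s, (1 - C (a j) * X))) p) := by
  classical
  induction s using Finset.induction_on with
  | empty => simpa using hp
  | insert j s hj ih =>
    rw [Finset.prod_insert hj, map_mul, Module.End.mul_apply]
    have := ih.sub_rectDiff hβ (ha j)
    convert this using 1
    simp [smul_eq_C_mul, rectLin]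

lemma nonnegRooted_X_pow (n : ℕ) : NonnegRooted (X ^ n) := by
  intro z hz
  rw [map_pow, aeval_X]
  exact pow_ne_zero n (by simpa using hz 0 le_rfl)

lemma coe_linear (a : ℝ) :
    ((1 - C a * X : ℝ[X]) : PowerSeries ℝ) = 1 - PowerSeries.C a * PowerSeries.X := by
  simp

lemma coe_prod_linear {ι : Type*} (s : Finset ι) (a : ι → ℝ) :
    ((∏ j ∈ s, (1 - C (a j) * X) : ℝ[X]) : PowerSeries ℝ) =
      ∏ j ∈ s, (1 - PowerSeries.C (a j) * PowerSeries.X) := by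
  rw [← Polynomial.coeToPowerSeries.ringHom_apply, map_prod]
  exact Finset.prod_congr rfl fun j _ => by
    rw [Polynomial.coeToPowerSeries.ringHom_apply, coe_linear]

lemma coeff_prod_linear {ι : Type*} (s : Finset ι) (a : ι → ℝ) (k : ℕ) :
    (∏ j ∈ s, (1 - C (a j) * X) : ℝ[X]).coeff k =
      newtonE (fun i => ∑ j ∈ s, a j ^ (i + 1)) k := by
  rw [← Polynomial.coeff_coe, coe_prod_linear]
  exact (HasPowerSums.prod s fun j => hasPowerSums_linear (a j)).coeff_eq k

/-- The approximants are `(1 - b 𝓛_β / (N+1))^(N+1) ∏_{j < N} (1 - α_j 𝓛_β)`. -/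
lemma nonnegRooted_limit {β : ℝ} (hβ : -1 < β) {b : ℝ} (hb : 0 ≤ b) {α : ℕ → ℝ}
    (h0 : ∀ j, 0 ≤ α j) (hs : Summable α) (n : ℕ) :
    NonnegRooted (appellPoly β (newtonE (limitSums b α)) n) := by
  -- the index set is the disjoint union of the two groups of factors
  set s : ℕ → Finset (ℕ ⊕ ℕ) := fun N => (Finset.range (N + 1)).disjSum (Finset.range N)
  set a : ℕ → ℕ ⊕ ℕ → ℝ := fun N => Sum.elim (fun _ => b / (N + 1)) α with ha
  have ha0 : ∀ N j, 0 ≤ a N j := by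
    rintro N (j | j)
    · simp only [ha, Sum.elim_inl]; positivity
    · exact h0 j
  set g : ℕ → ℝ[X] := fun N => ∏ j ∈ s N, (1 - C (a N j) * X) with hg
  refine nonnegRooted_appellPoly_of_tendsto hβ (c := fun N => (g N).coeff) (fun k => ?_)
    (fun N => ?_) (fun N => ?_)
  · simp only [hg, coeff_prod_linear]
    refine tendsto_newtonE (fun i => ?_) k
    simp only [s, Finset.sum_disjSum, ha, Sum.elim_inl, Sum.elim_inr, Finset.sum_const,
      Finset.card_range, nsmul_eq_mul, limitSums]
    refine Tendsto.add ?_ (summable_pow_succ h0 hs i).hasSum.tendsto_sum_nat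
    have e : ∀ N : ℕ, ((N + 1 : ℕ) : ℝ) * (b / (N + 1)) ^ (i + 1) =
        b ^ (i + 1) * (1 / ((N : ℝ) + 1)) ^ i := by
      intro N
      have : (N : ℝ) + 1 ≠ 0 := by positivity
      push_cast
      rw [div_pow, div_pow, one_pow, pow_succ ((N : ℝ) + 1) i]
      field_simp
    simp only [e]
    have h1 := ((tendsto_one_div_add_atTop_nhds_zero_nat (𝕜 := ℝ)).pow i).const_mul (b ^ (i + 1))
    convert h1 using 2
    rcases Nat.eq_zero_or_pos i with rfl | hi
    · simp
    · rw [if_neg hi.ne', zero_pow hi.ne', mul_zero]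
  · simp only [hg, coeff_prod_linear, newtonE_zero]
  · rw [← aeval_rectLin_X_pow]
    exact nonnegRooted_aeval_prod hβ _ (ha0 N) (nonnegRooted_X_pow n)

/-- The coefficients of `K z^m (1 + e₁ z + ⋯)`. -/
def shiftCoeff (K : ℝ) (m : ℕ) (e : ℕ → ℝ) (k : ℕ) : ℝ := if m ≤ k then K * e (k - m) else 0

lemma appellPoly_shift (β K : ℝ) (m : ℕ) (e : ℕ → ℝ) (n : ℕ) :
    appellPoly β (shiftCoeff K m e) n = C K * (rectDiff β)^[m] (appellPoly β e n) := by
  rw [← sum_iterate_X_pow β (shiftCoeff K m e) (Nat.le_add_left n m),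
    ← sum_iterate_X_pow β e le_rfl, ← rectLin_pow_apply, map_sum, Finset.mul_sum, add_assoc,
    Finset.sum_range_add]
  rw [Finset.sum_eq_zero, zero_add]
  · refine Finset.sum_congr rfl fun k _ => ?_
    rw [← smul_eq_C_mul (e k), map_smul, rectLin_pow_apply, ← Function.iterate_add_apply,
      smul_eq_C_mul, shiftCoeff, if_pos (Nat.le_add_right m k), Nat.add_sub_cancel_left, C_mul,
      mul_assoc]
  · intro k hk
    rw [shiftCoeff, if_neg (by simpa using hk)]; simp

/-! ### Taylor coefficients of functions of LPI form -/

/-- The Taylor series at `0`. -/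
noncomputable def taylor0 (f : ℂ → ℂ) : PowerSeries ℂ :=
  PowerSeries.mk fun k => iteratedDeriv k f 0 / k.factorial

lemma taylor0_mul {f g : ℂ → ℂ} (hf : Differentiable ℂ f) (hg : Differentiable ℂ g) :
    taylor0 (fun z => f z * g z) = taylor0 f * taylor0 g := by
  ext k
  rw [taylor0, PowerSeries.coeff_mk, PowerSeries.coeff_mul,
    Finset.Nat.sum_antidiagonal_eq_sum_range_succ_mk,
    iteratedDeriv_fun_mul hf.contDiff.contDiffAt hg.contDiff.contDiffAt, Finset.sum_div]
  refine Finset.sum_congr rfl fun i hi => ?_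
  have hik : i ≤ k := by have := Finset.mem_range.1 hi; omega
  simp only [taylor0, PowerSeries.coeff_mk]
  have h : ((k.choose i : ℕ) : ℂ) * i.factorial * (k - i).factorial = k.factorial := by
    exact_mod_cast Nat.choose_mul_factorial_mul_factorial hik
  have h1 : (i.factorial : ℂ) ≠ 0 := by exact_mod_cast i.factorial_ne_zero
  have h2 : ((k - i).factorial : ℂ) ≠ 0 := by exact_mod_cast (k - i).factorial_ne_zero
  have h3 : (k.factorial : ℂ) ≠ 0 := by exact_mod_cast k.factorial_ne_zero
  rw [div_mul_div_comm, div_eq_div_iff h3 (mul_ne_zero h1 h2), ← h]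
  ring

lemma taylor0_const (K : ℂ) : taylor0 (fun _ => K) = PowerSeries.C K := by
  ext k
  rw [taylor0, PowerSeries.coeff_mk, PowerSeries.coeff_C, iteratedDeriv_const]
  split_ifs with h
  · simp [h]
  · simp

lemma taylor0_pow (m : ℕ) : taylor0 (fun z => z ^ m) = PowerSeries.X ^ m := by
  ext k
  rw [taylor0, PowerSeries.coeff_mk, PowerSeries.coeff_X_pow, iteratedDeriv_fun_pow_zero]
  split_ifs with h
  · rw [h]; exact div_self (by exact_mod_cast m.factorial_ne_zero)
  · simp

lemma taylor0_exp (b : ℝ) : taylor0 (fun z => Complex.exp (-(b : ℂ) * z)) =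
    PowerSeries.map (algebraMap ℝ ℂ) (PowerSeries.mk fun k => (-b) ^ k / k.factorial) := by
  ext k
  rw [taylor0, PowerSeries.coeff_mk, iteratedDeriv_cexp_const_mul]
  simp

lemma taylor0_linear (a : ℝ) : taylor0 (fun z => 1 - (a : ℂ) * z) =
    PowerSeries.map (algebraMap ℝ ℂ) (1 - PowerSeries.C a * PowerSeries.X) := by
  have h1 : taylor0 (fun z => 1 - (a : ℂ) * z) = taylor0 (fun _ => (1 : ℂ)) -
      taylor0 (fun z => (fun _ => (a : ℂ)) z * (fun z => z ^ 1) z) := by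
    ext k
    rw [map_sub]
    simp only [taylor0, PowerSeries.coeff_mk]
    rw [← sub_div]
    congr 1
    have := iteratedDeriv_fun_sub (𝕜 := ℂ) (n := k) (x := 0) (f := fun _ : ℂ => (1 : ℂ))
      (g := fun z => (a : ℂ) * z) contDiffAt_const (by fun_prop)
    simpa using this
  rw [h1, taylor0_mul (by fun_prop) (by fun_prop), taylor0_const, taylor0_const, taylor0_pow]
  simp

lemma taylor0_prod (s : Finset ℕ) (α : ℕ → ℝ) :
    taylor0 (fun z => ∏ j ∈ s, (1 - (α j : ℂ) * z)) =
      PowerSeries.map (algebraMap ℝ ℂ)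
        (∏ j ∈ s, (1 - PowerSeries.C (α j) * PowerSeries.X)) := by
  classical
  induction s using Finset.induction_on with
  | empty => simpa using taylor0_const 1
  | insert j s hj ih =>
    simp only [Finset.prod_insert hj]
    rw [taylor0_mul (by fun_prop) (by fun_prop), ih, taylor0_linear, map_mul]

lemma tendsto_iteratedDeriv {F : ℕ → ℂ → ℂ} {f : ℂ → ℂ} (hF : ∀ N, Differentiable ℂ (F N))
    (h : TendstoLocallyUniformly F f atTop) (k : ℕ) :
    Tendsto (fun N => iteratedDeriv k (F N) 0) atTop (𝓝 (iteratedDeriv k f 0)) := by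
  have key : TendstoLocallyUniformlyOn (fun N => iteratedDeriv k (F N)) (iteratedDeriv k f)
      atTop Set.univ := by
    induction k with
    | zero => simpa only [iteratedDeriv_zero] using tendstoLocallyUniformlyOn_univ.2 h
    | succ k ih =>
      have := ih.deriv (Eventually.of_forall fun N =>
        (((hF N).contDiff (n := (⊤ : ℕ∞))).differentiable_iteratedDeriv k
          (by exact_mod_cast WithTop.coe_lt_top k)).differentiableOn) isOpen_univ
      simpa only [iteratedDeriv_succ, Function.comp_def] using this
  exact key.tendsto_at (Set.mem_univ 0)

lemma taylor0_limit {K : ℝ} {m : ℕ} {b : ℝ} {α : ℕ → ℝ} (h0 : ∀ j, 0 ≤ α j) (hs : Summable α)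
    {f : ℂ → ℂ} (h : TendstoLocallyUniformly
      (fun (N : ℕ) (z : ℂ) => (K : ℂ) * z ^ m * Complex.exp (-(b : ℂ) * z) *
          ∏ j ∈ Finset.range N, (1 - (α j : ℂ) * z)) f atTop) (k : ℕ) :
    iteratedDeriv k f 0 / (k.factorial : ℂ) =
      (shiftCoeff K m (newtonE (limitSums b α)) k : ℂ) := by
  have hlim := (tendsto_iteratedDeriv (fun N => by fun_prop) h k).div_const (k.factorial : ℂ)
  set p : ℕ → ℕ → ℝ := fun N =>
    (fun i => if i = 0 then b else 0) + fun i => ∑ j ∈ Finset.range N, α j ^ (i + 1) with hp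
  have hcoef : ∀ N : ℕ, iteratedDeriv k (fun z : ℂ => (K : ℂ) * z ^ m *
      Complex.exp (-(b : ℂ) * z) * ∏ j ∈ Finset.range N, (1 - (α j : ℂ) * z)) 0 /
        (k.factorial : ℂ) = (shiftCoeff K m (newtonE (p N)) k : ℂ) := by
    intro N
    have e : ∀ g : ℂ → ℂ, iteratedDeriv k g 0 / (k.factorial : ℂ) =
        PowerSeries.coeff k (taylor0 g) := fun g => by rw [taylor0, PowerSeries.coeff_mk]
    have hps := (hasPowerSums_exp b).mul
      (HasPowerSums.prod (Finset.range N) fun j => hasPowerSums_linear (α j))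
    rw [e, taylor0_mul (by fun_prop) (by fun_prop), taylor0_mul (by fun_prop) (by fun_prop),
      taylor0_mul (by fun_prop) (by fun_prop), taylor0_const, taylor0_pow, taylor0_exp,
      taylor0_prod, mul_assoc, ← map_mul, mul_assoc, PowerSeries.coeff_C_mul,
      PowerSeries.coeff_X_pow_mul', shiftCoeff]
    split_ifs with hmk
    · rw [PowerSeries.coeff_map, hps.coeff_eq]; simp [hp]
    · simp
  simp only [hcoef] at hlim
  refine tendsto_nhds_unique hlim ((Complex.continuous_ofReal.tendsto _).comp ?_)
  have hnew : ∀ i, Tendsto (fun N => newtonE (p N) i) atTop (𝓝 (newtonE (limitSums b α) i)) :=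
    tendsto_newtonE fun i =>
      tendsto_const_nhds.add (summable_pow_succ h0 hs i).hasSum.tendsto_sum_nat
  unfold shiftCoeff
  split_ifs with hmk
  · exact (hnew _).const_mul K
  · exact tendsto_const_nhds

lemma exists_product (K : ℝ) (m : ℕ) (b : ℝ) {α : ℕ → ℝ} (h0 : ∀ j, 0 ≤ α j)
    (hs : Summable α) : ∃ f : ℂ → ℂ, TendstoLocallyUniformly
      (fun (N : ℕ) (z : ℂ) => (K : ℂ) * z ^ m * Complex.exp (-(b : ℂ) * z) *
          ∏ j ∈ Finset.range N, (1 - (α j : ℂ) * z)) f atTop := by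
  have hball : ∀ R : ℝ, TendstoLocallyUniformlyOn
      (fun (N : ℕ) (z : ℂ) => ∏ j ∈ Finset.range N, (1 + -((α j : ℂ) * z)))
      (fun z => ∏' j, (1 + -((α j : ℂ) * z))) atTop (Metric.ball 0 R) := by
    intro R
    refine (Summable.hasProdLocallyUniformlyOn_nat_one_add (f := fun j z => -((α j : ℂ) * z))
      Metric.isOpen_ball (hs.mul_right R) (Eventually.of_forall fun j z hz => ?_)
      (fun j => by fun_prop)).tendstoLocallyUniformlyOn_finsetRange
    rw [norm_neg, norm_mul, Complex.norm_real, Real.norm_of_nonneg (h0 j)]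
    exact mul_le_mul_of_nonneg_left (by simpa using (mem_ball_zero_iff.1 hz).le) (h0 j)
  have hprod : TendstoLocallyUniformly
      (fun (N : ℕ) (z : ℂ) => ∏ j ∈ Finset.range N, (1 + -((α j : ℂ) * z)))
      (fun z => ∏' j, (1 + -((α j : ℂ) * z))) atTop := by
    intro u hu z
    obtain ⟨t, ht, ht'⟩ := hball (‖z‖ + 1) u hu z (by simp)
    rw [Metric.isOpen_ball.nhdsWithin_eq (by simp)] at ht
    exact ⟨t, ht, ht'⟩
  have hcont := hprod.continuous (Eventually.of_forall fun N => by fun_prop).frequently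
  have hconst : TendstoLocallyUniformly
      (fun (_ : ℕ) (z : ℂ) => (K : ℂ) * z ^ m * Complex.exp (-(b : ℂ) * z))
      (fun z : ℂ => (K : ℂ) * z ^ m * Complex.exp (-(b : ℂ) * z)) atTop := by
    intro u hu z
    exact ⟨Set.univ, Filter.univ_mem, Eventually.of_forall fun _ y _ => refl_mem_uniformity hu⟩
  have := hconst.mul₀ hprod (by fun_prop) hcont
  refine ⟨fun z => (K : ℂ) * z ^ m * Complex.exp (-(b : ℂ) * z) *
    ∏' j, (1 + -((α j : ℂ) * z)), ?_⟩
  simp only [sub_eq_add_neg]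
  exact this

/-! ### From zeros of `T X^n` to the product representation -/

lemma reflect_prod (a : ℕ → ℝ) (d : ℕ) :
    reflect d (∏ j ∈ Finset.range d, (X - C (a j))) =
      ∏ j ∈ Finset.range d, (1 - C (a j) * X) := by
  induction d with
  | zero => simp
  | succ d ih =>
    rw [Finset.prod_range_succ, Finset.prod_range_succ, reflect_mul _ _ (F := d) (G := 1), ih]
    · congr 1
      rw [reflect_sub, reflect_C, reflect_one_X, pow_one]
    · rw [natDegree_finsetProd_X_sub_C_eq_card, Finset.card_range]
    · exact (natDegree_X_sub_C _).le

lemma coeff_of_factor {p : ℝ[X]} {a : ℕ → ℝ}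
    (hp : p = C p.leadingCoeff * ∏ j ∈ Finset.range p.natDegree, (X - C (a j)))
    {k : ℕ} (hk : k ≤ p.natDegree) :
    p.coeff (p.natDegree - k) = p.leadingCoeff *
      newtonE (fun i => ∑ j ∈ Finset.range p.natDegree, a j ^ (i + 1)) k := by
  conv_lhs => rw [hp]
  rw [coeff_C_mul, ← coeff_prod_linear, ← reflect_prod, coeff_reflect, revAt_le hk, ← hp]

lemma rectCoef_add (β : ℝ) (n m k : ℕ) : rectCoef β n (m + k) =
    rectCoef β n m * ∏ i ∈ Finset.range k, ((n : ℝ) - (m + i)) * (n - (m + i) + β) := by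
  rw [rectCoef, Finset.prod_range_add, rectCoef]
  push_cast
  rfl

lemma tendsto_rectCoef_ratio (β : ℝ) (m k : ℕ) :
    Tendsto (fun N : ℕ => (1 / ((N + m + 1 : ℕ) : ℝ) ^ 2) ^ k *
      ∏ i ∈ Finset.range k, (((N + m + 1 : ℕ) : ℝ) - (m + i)) * (((N + m + 1 : ℕ) : ℝ) - (m + i) + β))
      atTop (𝓝 1) := by
  have hinv : Tendsto (fun N : ℕ => ((N + m + 1 : ℕ) : ℝ)⁻¹) atTop (𝓝 0) := by
    have := (tendsto_inv_atTop_nhds_zero_nat (𝕜 := ℝ)).comp (tendsto_add_atTop_nat (m + 1))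
    exact this
  have h1 : ∀ x : ℝ, Tendsto (fun N : ℕ => 1 - x * ((N + m + 1 : ℕ) : ℝ)⁻¹) atTop (𝓝 1) := by
    intro x
    simpa using (tendsto_const_nhds (x := (1 : ℝ))).sub (hinv.const_mul x)
  have h2 : Tendsto (fun N : ℕ => ∏ i ∈ Finset.range k,
      ((1 - ((m : ℝ) + i) * ((N + m + 1 : ℕ) : ℝ)⁻¹) *
        (1 - ((m : ℝ) + i - β) * ((N + m + 1 : ℕ) : ℝ)⁻¹))) atTop (𝓝 1) := by
    have := tendsto_finsetProd (Finset.range k) fun i _ =>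
      (h1 ((m : ℝ) + i)).mul (h1 ((m : ℝ) + i - β))
    simpa using this
  refine h2.congr fun N => ?_
  have hn : ((N + m + 1 : ℕ) : ℝ) ≠ 0 := by positivity
  generalize ((N + m + 1 : ℕ) : ℝ) = x at *
  have : (1 / x ^ 2) ^ k = ∏ _i ∈ Finset.range k, (1 / x ^ 2) := by simp
  rw [this, ← Finset.prod_mul_distrib]
  refine Finset.prod_congr rfl fun i _ => ?_
  field_simp
  ring

/-- A compactness statement for sequences of finite products `∏ (1 - α_j z)`: if `∑ α_j` converges,
then along a subsequence all power sums converge to those of some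
`exp (-b z) * ∏ (1 - α_j z)`. Since the `j`-th largest `α` is `O (1 / j)`, the higher power sums
converge by dominated convergence, while the lost mass of `∑ α_j` is collected in `b`. -/
lemma exists_limitSums {a : ℕ → ℕ → ℝ} (d : ℕ → ℕ) (h0 : ∀ N j, 0 ≤ a N j)
    (hanti : ∀ N, Antitone (a N)) (hzero : ∀ N j, d N ≤ j → a N j = 0) {σ : ℝ}
    (hσ : Tendsto (fun N => ∑ j ∈ Finset.range (d N), a N j) atTop (𝓝 σ)) :
    ∃ (b : ℝ) (α : ℕ → ℝ) (φ : ℕ → ℕ), 0 ≤ b ∧ (∀ j, 0 ≤ α j) ∧ Summable α ∧ StrictMono φ ∧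
      ∀ i, Tendsto (fun N => ∑ j ∈ Finset.range (d (φ N)), a (φ N) j ^ (i + 1)) atTop
        (𝓝 (limitSums b α i)) := by
  obtain ⟨S, hS⟩ := hσ.bddAbove_range
  have hS : ∀ N, ∑ j ∈ Finset.range (d N), a N j ≤ S := fun N => hS ⟨N, rfl⟩
  have hpart : ∀ N M, ∑ j ∈ Finset.range M, a N j ≤ ∑ j ∈ Finset.range (d N), a N j := by
    intro N M
    rw [← Finset.sum_subset (Finset.inter_subset_left (s₁ := Finset.range M)
      (s₂ := Finset.range (d N)))]
    · exact Finset.sum_le_sum_of_subset_of_nonneg Finset.inter_subset_right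
        fun j _ _ => h0 N j
    · intro j hj hj'
      refine hzero N j ?_
      by_contra! hlt
      exact hj' (Finset.mem_inter.2 ⟨hj, Finset.mem_range.2 hlt⟩)
  have hbound : ∀ N j, a N j ≤ S / (j + 1) := by
    intro N j
    have h1 : ((j : ℝ) + 1) * a N j ≤ ∑ i ∈ Finset.range (j + 1), a N i := by
      have := Finset.card_nsmul_le_sum (Finset.range (j + 1)) (a N) (a N j)
        fun i hi => hanti N (by have := Finset.mem_range.1 hi; omega)
      simpa using this
    rw [le_div_iff₀ (by positivity), mul_comm]
    exact h1.trans ((hpart N _).trans (hS N))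
  obtain ⟨α, hα, φ, hφ, hlim⟩ :=
    (isCompact_univ_pi fun j : ℕ => isCompact_Icc (a := (0 : ℝ)) (b := S / (j + 1))).tendsto_subseq
      (x := a) fun N j _ => ⟨h0 N j, hbound N j⟩
  have hlim' : ∀ j, Tendsto (fun N => a (φ N) j) atTop (𝓝 (α j)) := fun j =>
    (tendsto_pi_nhds.1 hlim) j
  have hα0 : ∀ j, 0 ≤ α j := fun j => (hα j (Set.mem_univ j)).1
  have hσφ := hσ.comp hφ.tendsto_atTop
  have hαsum : ∀ M, ∑ j ∈ Finset.range M, α j ≤ σ := fun M =>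
    le_of_tendsto_of_tendsto' (tendsto_finsetSum _ fun j _ => hlim' j) hσφ fun N => hpart _ M
  have hs : Summable α := summable_of_sum_range_le hα0 hαsum
  refine ⟨σ - ∑' j, α j, α, φ, sub_nonneg.2 (Real.tsum_le_of_sum_range_le hα0 hαsum), hα0, hs,
    hφ, fun i => ?_⟩
  rcases Nat.eq_zero_or_pos i with rfl | hi
  · simpa [limitSums, Function.comp_def] using hσφ
  · rw [limitSums, if_neg hi.ne', zero_add]
    have hts : ∀ N, ∑ j ∈ Finset.range (d (φ N)), a (φ N) j ^ (i + 1) =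
        ∑' j, a (φ N) j ^ (i + 1) := fun N =>
      (tsum_eq_sum fun j hj => by rw [hzero _ j (by simpa using hj)]; simp).symm
    simp only [hts]
    have hsum : Summable fun j : ℕ => (S / ((j : ℝ) + 1)) ^ (i + 1) := by
      have h1 := (summable_nat_add_iff 1).2
        (Real.summable_one_div_nat_pow.2 (by omega : 1 < i + 1))
      refine (h1.mul_left (S ^ (i + 1))).congr fun j => ?_
      push_cast
      rw [div_pow]; ring
    refine tendsto_tsum_of_dominated_convergence hsum (fun j => (hlim' j).pow _)
      (Eventually.of_forall fun N j => ?_)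
    rw [Real.norm_of_nonneg (pow_nonneg (h0 _ _) _)]
    exact pow_le_pow_left₀ (h0 _ _) (hbound _ _) _

/-- The reversed polynomials `z^(n-m) T[X^n](1/z)`, rescaled by `z ↦ z / n²`, are finite products
`∏ (1 - α_j z)` whose coefficients converge to those of the symbol of `T`. -/
lemma exists_of_nonnegRooted {β : ℝ} (hβ : -1 < β) {c : ℕ → ℝ} {m : ℕ} (hm : c m ≠ 0)
    (hc : ∀ k < m, c k = 0) (h : ∀ N, NonnegRooted (appellPoly β c (N + m + 1))) :
    ∃ (b : ℝ) (α : ℕ → ℝ), 0 ≤ b ∧ (∀ j, 0 ≤ α j) ∧ Summable α ∧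
      c = shiftCoeff (c m) m (newtonE (limitSums b α)) := by
  choose r hr0 hranti hrzero hfac using fun N => (h N).exists_factor
  have hdeg : ∀ N, (appellPoly β c (N + m + 1)).natDegree = N + 1 := fun N => by
    rw [natDegree_appellPoly hβ hc hm (by omega)]; omega
  have hlead : ∀ N, (appellPoly β c (N + m + 1)).leadingCoeff =
      c m * rectCoef β (N + m + 1) m := fun N => by
    rw [leadingCoeff, hdeg, ← coeff_appellPoly β c (by omega : m ≤ N + m + 1)]
    congr 1; omega
  set t : ℕ → ℝ := fun N => 1 / ((N + m + 1 : ℕ) : ℝ) ^ 2 with ht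
  have ht0 : ∀ N, 0 ≤ t N := fun N => by simp only [ht]; positivity
  set P : ℕ → ℕ → ℝ := fun N i => ∑ j ∈ Finset.range (N + 1), (t N * r N j) ^ (i + 1) with hP
  have hE : ∀ N k, k ≤ N + 1 → newtonE (P N) k = c (m + k) / c m *
      (t N ^ k * ∏ i ∈ Finset.range k, (((N + m + 1 : ℕ) : ℝ) - (m + i)) *
        (((N + m + 1 : ℕ) : ℝ) - (m + i) + β)) := by
    intro N k hk
    have h1 := coeff_of_factor (hfac N) (k := k) (by rw [hdeg]; exact hk)
    rw [hlead, hdeg, show N + 1 - k = N + m + 1 - (m + k) by omega,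
      coeff_appellPoly β c (by omega), rectCoef_add] at h1
    have h2 : P N = fun i => t N ^ (i + 1) * ∑ j ∈ Finset.range (N + 1), r N j ^ (i + 1) := by
      funext i
      simp only [hP, mul_pow, Finset.mul_sum]
    have h3 : rectCoef β (N + m + 1) m ≠ 0 := (rectCoef_pos hβ (by omega)).ne'
    rw [h2, newtonE_smul]
    have h4 : newtonE (fun i => ∑ j ∈ Finset.range (N + 1), r N j ^ (i + 1)) k =
        c (m + k) / c m * ∏ i ∈ Finset.range k, (((N + m + 1 : ℕ) : ℝ) - (m + i)) *
          (((N + m + 1 : ℕ) : ℝ) - (m + i) + β) := by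
      rw [div_mul_eq_mul_div, eq_div_iff hm]
      refine mul_left_cancel₀ h3 ?_
      linear_combination -h1
    rw [h4]; ring
  have hElim : ∀ k, Tendsto (fun N => newtonE (P N) k) atTop (𝓝 (c (m + k) / c m)) := by
    intro k
    have h1 := (tendsto_rectCoef_ratio β m k).const_mul (c (m + k) / c m)
    rw [mul_one] at h1
    refine h1.congr' ?_
    filter_upwards [eventually_ge_atTop k] with N hN
    exact (hE N k (by omega)).symm
  have hσ : Tendsto (fun N => ∑ j ∈ Finset.range (N + 1), t N * r N j) atTop
      (𝓝 (-(c (m + 1) / c m))) := by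
    refine (hElim 1).neg.congr fun N => ?_
    rw [newtonE_succ]
    simp [newtonE_zero, hP]
  obtain ⟨b, α, φ, hb, hα, hs, hφ, hlim⟩ := exists_limitSums (a := fun N j => t N * r N j)
    (fun N => N + 1) (fun N j => mul_nonneg (ht0 N) (hr0 N j))
    (fun N i j hij => mul_le_mul_of_nonneg_left (hranti N hij) (ht0 N))
    (fun N j hj => by rw [hrzero N j (by rw [hdeg]; exact hj), mul_zero]) hσ
  refine ⟨b, α, hb, hα, hs, funext fun k => ?_⟩
  rw [shiftCoeff]
  split_ifs with hk
  · have h1 : Tendsto (fun N => newtonE (P (φ N)) (k - m)) atTop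
        (𝓝 (newtonE (limitSums b α) (k - m))) := tendsto_newtonE hlim _
    have h2 := tendsto_nhds_unique h1 ((hElim (k - m)).comp hφ.tendsto_atTop)
    rw [h2, Nat.add_sub_cancel' hk]
    field_simp
  · exact hc k (by omega)

lemma nonnegRooted_of_roots {p : ℝ[X]} (hp : p ≠ 0)
    (h : ∀ z ∈ (p.map (algebraMap ℝ ℂ)).roots, z.im = 0 ∧ 0 ≤ z.re) : NonnegRooted p := by
  intro z hz h0
  have hmem : z ∈ (p.map (algebraMap ℝ ℂ)).roots := by
    rw [mem_roots ((Polynomial.map_ne_zero_iff (algebraMap ℝ ℂ).injective).2 hp), IsRoot.def,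
      eval_map_algebraMap, h0]
  obtain ⟨h1, h2⟩ := h z hmem
  exact hz z.re h2 (Complex.ext (by simp) (by simpa using h1))

lemma NonnegRooted.roots {p : ℝ[X]} (h : NonnegRooted p) :
    ∀ z ∈ (p.map (algebraMap ℝ ℂ)).roots, z.im = 0 ∧ 0 ≤ z.re := by
  intro z hz
  have h0 : aeval z p = 0 := by
    have := isRoot_of_mem_roots hz
    rwa [IsRoot.def, eval_map_algebraMap] at this
  by_contra hcon
  refine h z ?_ h0
  rintro r hr rfl
  exact hcon ⟨by simp, by simpa using hr⟩

/-- **Weak Pólya–Schur theorem for rectangular differentiation.** Fix `β > −1` and let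
`T : ℝ[X] → ℝ[X]` be a nonzero linear map commuting with `𝓛_β`. Then `T[X^n]` is, for every
`n ≥ 1`, zero or has only nonnegative real roots, iff `T = f(𝓛_β)` for some entire `f` of
LPI form, i.e. `T p = ∑_{k≥0} (f^{(k)}(0)/k!)·𝓛_β^k p`. -/
theorem weak_polya_schur_rectangular (β : ℝ) (hβ : -1 < β)
    (T : Polynomial ℝ →ₗ[ℝ] Polynomial ℝ) (hT : T ≠ 0)
    (hcomm : ∀ p : Polynomial ℝ, T (rectDiff β p) = rectDiff β (T p)) :
    (∀ n : ℕ, 1 ≤ n →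
        (T (Polynomial.X ^ n) = 0 ∨
          ∀ z ∈ ((T (Polynomial.X ^ n)).map (algebraMap ℝ ℂ)).roots, z.im = 0 ∧ 0 ≤ z.re))
    ↔
    (∃ f : ℂ → ℂ, IsLPIForm f ∧
      ∀ p : Polynomial ℝ, (T p).map (algebraMap ℝ ℂ) =
        ∑ k ∈ Finset.range (p.natDegree + 1),
          Polynomial.C (iteratedDeriv k f 0 / (Nat.factorial k : ℂ)) *
            (((rectDiff β)^[k] p).map (algebraMap ℝ ℂ))) := by
  constructor
  · intro h
    obtain ⟨c, hcT⟩ := exists_coeffs hβ T hcomm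
    have hex : ∃ k, c k ≠ 0 := by
      by_contra! hcon
      refine hT (LinearMap.ext fun p => ?_)
      refine linearMap_eq_of_monomials (N := p.natDegree) (fun i _ => ?_) le_rfl
      rw [hcT, LinearMap.zero_apply]
      exact appellPoly_eq_zero β (m := i + 1) (fun k _ => hcon k) (Nat.lt_succ_self i)
    classical
    have hm := Nat.find_spec hex
    have hlt : ∀ k < Nat.find hex, c k = 0 := fun k hk => by simpa using Nat.find_min hex hk
    set m := Nat.find hex
    have hroot : ∀ N, NonnegRooted (appellPoly β c (N + m + 1)) := by
      intro N
      have hne : appellPoly β c (N + m + 1) ≠ 0 := by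
        intro h0
        have := coeff_appellPoly β c (by omega : m ≤ N + m + 1)
        rw [h0, coeff_zero] at this
        exact mul_ne_zero hm (rectCoef_pos hβ (by omega)).ne' this.symm
      rcases h (N + m + 1) (by omega) with h1 | h1
      · exact absurd ((hcT _).symm.trans h1) hne
      · rw [hcT] at h1
        exact nonnegRooted_of_roots hne h1
    obtain ⟨b, α, hb, hα, hs, hcα⟩ := exists_of_nonnegRooted hβ hm hlt hroot
    obtain ⟨f, hf⟩ := exists_product (c m) m b hα hs
    refine ⟨f, ⟨c m, m, b, α, hm, hb, hα, hs, hf⟩, fun p => ?_⟩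
    have hcoef : ∀ k, iteratedDeriv k f 0 / (Nat.factorial k : ℂ) = (c k : ℂ) := fun k => by
      rw [taylor0_limit hα hs hf, ← hcα]
    rw [eq_sum_of_monomials hcT p, Polynomial.map_sum]
    refine Finset.sum_congr rfl fun k _ => ?_
    rw [hcoef, Polynomial.map_mul, map_C]
    rfl
  · rintro ⟨f, ⟨K, m, b, α, hK, hb, hα, hs, hf⟩, hTf⟩ n -
    set e := newtonE (limitSums b α) with he
    have hTn : T (X ^ n) = appellPoly β (shiftCoeff K m e) n := by
      apply Polynomial.map_injective _ (algebraMap ℝ ℂ).injective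
      rw [hTf, ← sum_iterate_X_pow β (shiftCoeff K m e) (le_refl n), Polynomial.map_sum,
        natDegree_X_pow]
      refine Finset.sum_congr rfl fun k _ => ?_
      rw [taylor0_limit hα hs hf, Polynomial.map_mul, map_C]
      rfl
    rcases lt_or_ge n m with hnm | hnm
    · left
      rw [hTn]
      exact appellPoly_eq_zero β (m := m) (fun k hk => if_neg (by omega)) hnm
    · right
      refine NonnegRooted.roots ?_
      have hQ := nonnegRooted_limit hβ hb hα hs n
      have hdeg : (appellPoly β e n).natDegree = n :=
        natDegree_appellPoly hβ (m := 0) (by simp) (by simp [he, newtonE_zero]) (Nat.zero_le n)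
      have hL := hQ.rectDiff_iterate hβ m (by rw [← he, hdeg]; exact hnm)
      rw [hTn, appellPoly_shift]
      intro z hz
      rw [map_mul, aeval_C]
      exact mul_ne_zero (by simpa using hK) (hL z hz)
end
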